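/- arXiv:2309.07905 — 4 statements merged into one kernel-verified Lean document; each statement's English description precedes it below -/
import Mathlib

section
/- Let G be a simple graph, let X, Y ⊆ V(G), and let k be a natural number. If there exists a collection 𝒫 of at least 16k pairwise disjoint X-Y-paths in G such that every vertex of V(𝒫) is incident to at most one edge of E(G) \ E(𝒫), then G contains at least k pairwise non-adjacent X-Y-paths. -/
open SimpleGraph

universe u

variable {V : Type u}

/-- A packaged walk in `G`: a pair of endpoints together with a walk between them. -/
abbrev PathPkg (G : SimpleGraph V) : Type u := Σ x : V, Σ y : V, G.Walk x y

/-- The set of vertices of a packaged walk. -/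
def pkgSupport {G : SimpleGraph V} (p : PathPkg G) : Set V := {x | x ∈ p.2.2.support}

/-- The set of edges of a packaged walk. -/
def pkgEdges {G : SimpleGraph V} (p : PathPkg G) : Set (Sym2 V) := {e | e ∈ p.2.2.edges}

/-- `p` is an `X`-`Y`-path: a path whose first endpoint lies in `X` and whose
second endpoint lies in `Y`. -/
def IsXYPath (G : SimpleGraph V) (X Y : Set V) (p : PathPkg G) : Prop :=
  p.2.2.IsPath ∧ p.1 ∈ X ∧ p.2.1 ∈ Y

/-- Two packaged walks are (vertex-)disjoint. -/
def PkgDisjoint {G : SimpleGraph V} (p q : PathPkg G) : Prop :=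
  ∀ x, x ∈ pkgSupport p → x ∉ pkgSupport q

/-- Two packaged walks are non-adjacent: they are vertex-disjoint and no edge of `G`
joins a vertex of one to a vertex of the other. -/
def PkgNonAdj (G : SimpleGraph V) (p q : PathPkg G) : Prop :=
  ∀ a, a ∈ pkgSupport p → ∀ b, b ∈ pkgSupport q → a ≠ b ∧ ¬ G.Adj a b

/-- `Z` separates `X` and `Y` in `G`: every `X`-`Y`-path meets `Z`. -/
def XYSeparates (G : SimpleGraph V) (X Y Z : Set V) : Prop :=
  ∀ p : PathPkg G, IsXYPath G X Y p → ∃ z, z ∈ Z ∧ z ∈ pkgSupport p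

/-- `M` is an induced matching of `G`: a set of edges of `G` such that any two distinct
edges of `M` are at distance at least `2` in `G` (no endpoint of one equals or is
adjacent to an endpoint of the other). -/
def IsInducedMatching (G : SimpleGraph V) (M : Set (Sym2 V)) : Prop :=
  M ⊆ G.edgeSet ∧
    ∀ e₁, e₁ ∈ M → ∀ e₂, e₂ ∈ M → e₁ ≠ e₂ →
      ∀ a, a ∈ e₁ → ∀ b, b ∈ e₂ → a ≠ b ∧ ¬ G.Adj a b

/-- `G` admits a partition of its edge set into `n` induced matchings
(a strong edge colouring with `n` colours). -/
def HasStrongEdgeColoring (G : SimpleGraph V) (n : ℕ) : Prop :=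
  ∃ M : Fin n → Set (Sym2 V),
    (∀ i, IsInducedMatching G (M i)) ∧
    (Pairwise fun i j => Disjoint (M i) (M j)) ∧
    (⋃ i, M i) = G.edgeSet

/-- The strong chromatic index of `G`: the least number of induced matchings into
which the edge set of `G` can be partitioned. -/
noncomputable def strongChromaticIndex (G : SimpleGraph V) : ℕ :=
  sInf {n | HasStrongEdgeColoring G n}

/-- `G` contains the complete graph `K_r` as a topological minor: there are `r` distinct
branch vertices joined pairwise by internally disjoint paths whose internal vertices
avoid all branch vertices. -/
def HasTopKMinor (G : SimpleGraph V) (r : ℕ) : Prop :=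
  ∃ (f : Fin r → V) (P : (i j : Fin r) → i < j → G.Walk (f i) (f j)),
    Function.Injective f ∧
    (∀ i j hij, (P i j hij).IsPath) ∧
    (∀ i j hij x, x ∈ (P i j hij).support → x ≠ f i → x ≠ f j → ∀ l, x ≠ f l) ∧
    (∀ i j hij i' j' hij', (i, j) ≠ (i', j') →
      ∀ x, x ∈ (P i j hij).support → x ∈ (P i' j' hij').support →
        (x = f i ∨ x = f j) ∧ (x = f i' ∨ x = f j'))

/-- `G` contains the complete graph `K_n` as a minor, witnessed by `n` nonempty,
pairwise disjoint, connected branch sets joined pairwise by edges. -/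
def HasKMinor (G : SimpleGraph V) (n : ℕ) : Prop :=
  ∃ B : Fin n → Set V,
    (∀ i, (B i).Nonempty) ∧
    (∀ i, (G.induce (B i)).Connected) ∧
    (Pairwise fun i j => Disjoint (B i) (B j)) ∧
    (∀ i j, i ≠ j → ∃ a ∈ B i, ∃ b ∈ B j, G.Adj a b)

/-!
Replace each path by a shortest one on its own vertices, so that the paths are induced and meet `X`
and `Y` only in their ends. The edges between different paths then form a matching. Two of them
conflict if they are joined by an edge of `G`; among any set of such edges, one with an end as early
as possible on some path conflicts with at most three others, so greedily the matching splits into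
four induced matchings `M₁, …, M₄` of `G`.

Delete all four, which makes the paths pairwise non-adjacent, and put them back one at a time,
halving the number of paths each time: `16 k = 2 ^ 4 * k`. To put back an induced matching `M`,
contract it. A vertex of the contracted graph lies on at most two of the `2 r` paths, so no fewer
than `r` vertices separate `X` from `Y`, and Menger's theorem yields `r` disjoint paths of the
contracted graph. Lift these and shorten them. If `ab` is an edge between two of the lifted paths,
then `ab ∉ M`, and `a` has a neighbour on its old path which its new path misses. As `a` has degree
two on both (counting membership in `X` and in `Y`), its new path uses the edge of `M` at `a`.
The same holds for `b`, so `ab` joins two edges of the induced matching `M`, a contradiction.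
-/

section ReachableWithin

variable {G H : SimpleGraph V} {U W : Set V} {a b c x y : V}

/-- Reachability of `b` from `a` inside the vertex set `U`, stated with walks of `G` itself rather
than of `G.induce U` so that no subtypes appear. -/
def ReachableWithin (G : SimpleGraph V) (U : Set V) (a b : V) : Prop :=
  ∃ p : G.Walk a b, ∀ v ∈ p.support, v ∈ U

namespace ReachableWithin

theorem refl (ha : a ∈ U) : ReachableWithin G U a a :=
  ⟨.nil, by simpa using ha⟩

theorem symm (h : ReachableWithin G U a b) : ReachableWithin G U b a := by
  obtain ⟨p, hp⟩ := h
  exact ⟨p.reverse, by simpa using hp⟩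

theorem trans (hab : ReachableWithin G U a b) (hbc : ReachableWithin G U b c) :
    ReachableWithin G U a c := by
  obtain ⟨p, hp⟩ := hab
  obtain ⟨q, hq⟩ := hbc
  exact ⟨p.append q, fun v hv ↦
    ((Walk.mem_support_append_iff p q).1 hv).elim (hp v) (hq v)⟩

theorem mono (hle : G ≤ H) (hUW : U ⊆ W) (h : ReachableWithin G U a b) :
    ReachableWithin H W a b := by
  obtain ⟨p, hp⟩ := h
  exact ⟨p.mapLe hle, by simpa using fun v hv ↦ hUW (hp v hv)⟩

theorem of_forall_adj (hGH : ∀ u ∈ U, ∀ v ∈ U, G.Adj u v → H.Adj u v)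
    (h : ReachableWithin G U a b) : ReachableWithin H U a b := by
  obtain ⟨p, hp⟩ := h
  refine ⟨p.transfer H fun e he ↦ ?_, by simpa using hp⟩
  induction e with | _ u v
  exact hGH u (hp u (p.fst_mem_support_of_mem_edges he))
    v (hp v (p.snd_mem_support_of_mem_edges he)) (p.adj_of_mem_edges he)

theorem left_mem (h : ReachableWithin G U a b) : a ∈ U := by
  obtain ⟨p, hp⟩ := h
  exact hp a p.start_mem_support

theorem right_mem (h : ReachableWithin G U a b) : b ∈ U :=
  h.symm.left_mem

theorem of_adj (hab : G.Adj a b) (ha : a ∈ U) (hb : b ∈ U) : ReachableWithin G U a b :=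
  ⟨hab.toWalk, by simp [Adj.toWalk, ha, hb]⟩

theorem pkgSupport (p : PathPkg G) : ReachableWithin G (pkgSupport p) p.1 p.2.1 :=
  ⟨p.2.2, fun _ hv ↦ hv⟩

theorem exists_mem_or_compl (h : ReachableWithin G U a b) (Z : Set V) :
    (∃ z ∈ Z, ReachableWithin G U a z) ∨ ReachableWithin G Zᶜ a b := by
  classical
  obtain ⟨p, hp⟩ := h
  by_cases hZ : ∃ z ∈ Z, z ∈ p.support
  · obtain ⟨z, hz, hzp⟩ := hZ
    exact .inl ⟨z, hz, p.takeUntil z hzp,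
      fun v hv ↦ hp v (p.support_takeUntil_subset_support hzp hv)⟩
  · exact .inr ⟨p, fun v hv hvZ ↦ hZ ⟨v, hvZ, hv⟩⟩

theorem of_sup_edge (h : ReachableWithin (G ⊔ edge x y) U a b) :
    ReachableWithin G U a b ∨
      ReachableWithin G U a x ∧ ReachableWithin G U y b ∨
      ReachableWithin G U a y ∧ ReachableWithin G U x b := by
  obtain ⟨p, hp⟩ := h
  induction p with
  | nil => exact .inl (refl (hp _ (by simp)))
  | @cons a a' b hadj p ih =>
    have ha : a ∈ U := hp _ (by simp)
    have ha' : a' ∈ U := hp _ (by simp)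
    specialize ih fun v hv ↦ hp v (by simp [hv])
    rcases hadj with hadj | hadj
    · have haa' : ReachableWithin G U a a' := of_adj hadj ha ha'
      exact ih.imp haa'.trans (Or.imp (And.imp_left haa'.trans) (And.imp_left haa'.trans))
    · have hrefl : ReachableWithin G U a a := refl ha
      rw [edge_adj] at hadj
      rcases hadj with ⟨⟨rfl, rfl⟩ | ⟨rfl, rfl⟩, -⟩ <;> tauto

theorem exists_isXYPath {X Y : Set V} (hx : x ∈ X) (hy : y ∈ Y) (h : ReachableWithin G U x y) :
    ∃ p : PathPkg G, IsXYPath G X Y p ∧ _root_.pkgSupport p ⊆ U := by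
  classical
  obtain ⟨p, hp⟩ := h
  exact ⟨⟨x, y, p.bypass⟩, ⟨p.bypass_isPath, hx, hy⟩,
    fun v hv ↦ hp v (p.support_bypass_subset_support hv)⟩

end ReachableWithin

theorem xySeparates_iff_forall_not_reachableWithin {X Y Z : Set V} :
    XYSeparates G X Y Z ↔ ∀ x ∈ X, ∀ y ∈ Y, ¬ ReachableWithin G Zᶜ x y := by
  constructor
  · intro hZ x hx y hy hxy
    obtain ⟨p, hp, hpZ⟩ := hxy.exists_isXYPath hx hy
    obtain ⟨z, hz, hzp⟩ := hZ p hp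
    exact hpZ hzp hz
  · rintro hZ ⟨x, y, p⟩ ⟨-, hx, hy⟩
    by_contra hpZ
    exact hZ x hx y hy ⟨p, fun v hv hvZ ↦ hpZ ⟨v, hvZ, hv⟩⟩

theorem XYSeparates.symm {X Y Z : Set V} (hZ : XYSeparates G X Y Z) : XYSeparates G Y X Z := by
  rw [xySeparates_iff_forall_not_reachableWithin] at hZ ⊢
  exact fun y hy x hx h ↦ hZ x hx y hy h.symm

theorem eq_of_mem_pkgSupport_of_pairwise_pkgDisjoint {ι : Type*} {P : ι → PathPkg G}
    (hdisj : Pairwise fun i j ↦ PkgDisjoint (P i) (P j)) {i j : ι} {v : V}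
    (hi : v ∈ pkgSupport (P i)) (hj : v ∈ pkgSupport (P j)) : i = j := by
  by_contra hij
  exact hdisj hij v hi hj

theorem snd_mem_pkgSupport (p : PathPkg G) : p.2.1 ∈ pkgSupport p :=
  p.2.2.end_mem_support

theorem finite_pkgSupport (p : PathPkg G) : (pkgSupport p).Finite :=
  p.2.2.support.finite_toSet

end ReachableWithin

section Menger

variable {G : SimpleGraph V} {A B : Set V} {T T' : Set V} {x y : V} {k : ℕ}

/-- `G` contains `k` pairwise disjoint `A`-`B`-paths. -/
def HasLinkage (G : SimpleGraph V) (A B : Set V) (k : ℕ) : Prop :=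
  ∃ P : Fin k → PathPkg G, (∀ i, IsXYPath G A B (P i)) ∧
    Pairwise fun i j ↦ PkgDisjoint (P i) (P j)

theorem HasLinkage.of_disjoint_reachableWithin {U : Fin k → Set V}
    (hdisj : Pairwise fun i j ↦ Disjoint (U i) (U j))
    (h : ∀ i, ∃ a ∈ A, ∃ b ∈ B, ReachableWithin G (U i) a b) : HasLinkage G A B k := by
  have hpath (i : Fin k) : ∃ p : PathPkg G, IsXYPath G A B p ∧ pkgSupport p ⊆ U i := by
    obtain ⟨a, ha, b, hb, hab⟩ := h i
    exact hab.exists_isXYPath ha hb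
  choose P hP hPU using hpath
  exact ⟨P, hP, fun i j hij v hvi hvj ↦
    Set.disjoint_left.1 (hdisj hij) (hPU i hvi) (hPU j hvj)⟩

theorem HasLinkage.mono {H : SimpleGraph V} (hle : G ≤ H) (h : HasLinkage G A B k) :
    HasLinkage H A B k := by
  obtain ⟨P, hP, hdisj⟩ := h
  refine .of_disjoint_reachableWithin (U := fun i ↦ pkgSupport (P i))
    (fun i j hij ↦ Set.disjoint_left.2 (hdisj hij)) fun i ↦
    ⟨_, (hP i).2.1, _, (hP i).2.2, (ReachableWithin.pkgSupport (P i)).mono hle subset_rfl⟩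

theorem XYSeparates.sup_edge {b : V} (hT : XYSeparates G A B T) (hb : b ∈ B)
    (hyb : ReachableWithin G Tᶜ y b) (hT' : XYSeparates G A (insert x T) T') :
    XYSeparates (G ⊔ edge x y) A B T' := by
  rw [xySeparates_iff_forall_not_reachableWithin] at hT hT' ⊢
  intro a ha b' hb' hab'
  -- What `A` reaches without `T'` it reaches before meeting `insert x T`.
  have avoids_T {z : V} (hz : ReachableWithin G T'ᶜ a z) : ReachableWithin G Tᶜ a z := by
    rcases hz.exists_mem_or_compl (insert x T) with ⟨s, hs, has⟩ | hz
    · exact absurd has (hT' a ha s hs)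
    · exact hz.mono le_rfl (Set.compl_subset_compl.2 (Set.subset_insert x T))
  rcases hab'.of_sup_edge with h | ⟨hax, -⟩ | ⟨hay, -⟩
  · exact hT a ha b' hb' (avoids_T h)
  · exact hT' a ha x (Set.mem_insert x T) hax
  · exact hT a ha b hb ((avoids_T hay).trans hyb)

section EndsInFinset

variable {S : Finset V} {P : Fin k → PathPkg G}

theorem exists_snd_eq_of_mem (hP : ∀ i, IsXYPath G A S (P i))
    (hdisj : Pairwise fun i j ↦ PkgDisjoint (P i) (P j)) (hk : S.card = k) {s : V} (hs : s ∈ S) :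
    ∃ i, (P i).2.1 = s := by
  let last (i : Fin k) : S := ⟨(P i).2.1, (hP i).2.2⟩
  have last_inj : Function.Injective last := fun i j hij ↦ by
    have hend : (P i).2.1 = (P j).2.1 := congrArg Subtype.val hij
    exact eq_of_mem_pkgSupport_of_pairwise_pkgDisjoint hdisj (snd_mem_pkgSupport (P i))
      (hend ▸ snd_mem_pkgSupport (P j))
  have last_bij := (Fintype.bijective_iff_injective_and_card last).2 ⟨last_inj, by simp [hk]⟩
  obtain ⟨i, hi⟩ := last_bij.2 ⟨s, hs⟩
  exact ⟨i, Subtype.ext_iff.1 hi⟩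

theorem eq_snd_of_mem_pkgSupport (hP : ∀ i, IsXYPath G A S (P i))
    (hdisj : Pairwise fun i j ↦ PkgDisjoint (P i) (P j)) (hk : S.card = k) {s : V} (hs : s ∈ S)
    {i : Fin k} (hsi : s ∈ pkgSupport (P i)) : s = (P i).2.1 := by
  obtain ⟨j, rfl⟩ := exists_snd_eq_of_mem hP hdisj hk hs
  rw [eq_of_mem_pkgSupport_of_pairwise_pkgDisjoint hdisj hsi (snd_mem_pkgSupport (P j))]

end EndsInFinset

theorem reachableWithin_compl_of_forall_eq_snd {p : PathPkg G} (hp : p.2.2.IsPath)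
    (hT : ∀ t ∈ T, t ∈ pkgSupport p → t = p.2.1) {v : V} (hv : v ∈ pkgSupport p) (hvT : v ∉ T) :
    ReachableWithin G Tᶜ p.1 v := by
  classical
  refine ⟨p.2.2.takeUntil v hv, fun t ht htT ↦ ?_⟩
  obtain rfl := hT t htT (p.2.2.support_takeUntil_subset_support hv ht)
  exact Walk.endpoint_notMem_support_takeUntil hp hv (fun h ↦ hvT (h ▸ htT)) ht

theorem XYSeparates.mem_of_mem_pkgSupport (hT : XYSeparates G A B T) {p q : PathPkg G}
    (hp : p.2.2.IsPath) (hpA : p.1 ∈ A) (hpT : ∀ t ∈ T, t ∈ pkgSupport p → t = p.2.1)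
    (hq : q.2.2.IsPath) (hqB : q.1 ∈ B) (hqT : ∀ t ∈ T, t ∈ pkgSupport q → t = q.2.1)
    {v : V} (hvp : v ∈ pkgSupport p) (hvq : v ∈ pkgSupport q) : v ∈ T := by
  by_contra hvT
  exact xySeparates_iff_forall_not_reachableWithin.1 hT _ hpA _ hqB
    ((reachableWithin_compl_of_forall_eq_snd hp hpT hvp hvT).trans
      (reachableWithin_compl_of_forall_eq_snd hq hqT hvq hvT).symm)

theorem HasLinkage.of_glue {H : SimpleGraph V} (hle : G ≤ H) {P R : Fin k → PathPkg G}
    (hPA : ∀ i, (P i).1 ∈ A) (hPdisj : Pairwise fun i j ↦ PkgDisjoint (P i) (P j))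
    (hRB : ∀ i, (R i).1 ∈ B) (hRdisj : Pairwise fun i j ↦ PkgDisjoint (R i) (R j))
    (hPR : Pairwise fun i j ↦ PkgDisjoint (P i) (R j))
    (hglue : ∀ i, (P i).2.1 = (R i).2.1 ∨ H.Adj (P i).2.1 (R i).2.1) : HasLinkage H A B k := by
  refine .of_disjoint_reachableWithin (U := fun i ↦ pkgSupport (P i) ∪ pkgSupport (R i))
    (fun i j hij ↦ Set.disjoint_left.2 ?_) fun i ↦ ⟨_, hPA i, _, hRB i, ?_⟩
  · rintro v (hvi | hvi) (hvj | hvj)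
    · exact hPdisj hij v hvi hvj
    · exact hPR hij v hvi hvj
    · exact hPR hij.symm v hvj hvi
    · exact hRdisj hij v hvi hvj
  · have hPi := (ReachableWithin.pkgSupport (P i)).mono hle
      (Set.subset_union_left (t := pkgSupport (R i)))
    have hRi := (ReachableWithin.pkgSupport (R i)).mono hle
      (Set.subset_union_right (s := pkgSupport (P i)))
    rcases hglue i with heq | hadj
    · rw [← heq] at hRi
      exact hPi.trans hRi.symm
    · exact hPi.trans (.trans (.of_adj hadj hPi.right_mem hRi.right_mem) hRi.symm)

-- The path ending in `x` is glued to the one ending in `y`, and those ending in `t ∈ T` at `t`.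
theorem HasLinkage.sup_edge [DecidableEq V] {T : Finset V} (hT : XYSeparates G A B T)
    (hxy : x ≠ y) (hx : x ∉ T) (hy : y ∉ T)
    (hA : HasLinkage G A (insert x T : Finset V) (T.card + 1))
    (hB : HasLinkage G B (insert y T : Finset V) (T.card + 1)) :
    HasLinkage (G ⊔ edge x y) A B (T.card + 1) := by
  obtain ⟨P, hP, hPdisj⟩ := hA
  obtain ⟨R, hR, hRdisj⟩ := hB
  have hxT : (insert x T).card = T.card + 1 := Finset.card_insert_of_notMem hx
  have hyT : (insert y T).card = T.card + 1 := Finset.card_insert_of_notMem hy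
  have hPT (i) : ∀ t ∈ T, t ∈ pkgSupport (P i) → t = (P i).2.1 := fun t ht ↦
    eq_snd_of_mem_pkgSupport hP hPdisj hxT (Finset.mem_insert_of_mem ht)
  have hRT (i) : ∀ t ∈ T, t ∈ pkgSupport (R i) → t = (R i).2.1 := fun t ht ↦
    eq_snd_of_mem_pkgSupport hR hRdisj hyT (Finset.mem_insert_of_mem ht)
  have swap_T {t : V} (ht : t ∈ T) : Equiv.swap x y t = t :=
    Equiv.swap_apply_of_ne_of_ne (by rintro rfl; exact hx ht) (by rintro rfl; exact hy ht)
  have hglue (i) : ∃ j, (R j).2.1 = Equiv.swap x y (P i).2.1 := by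
    refine exists_snd_eq_of_mem hR hRdisj hyT ?_
    rcases Finset.mem_insert.1 (hP i).2.2 with hi | hi
    · simp [hi]
    · rw [swap_T hi]
      exact Finset.mem_insert_of_mem hi
  choose J hJ using hglue
  have eq_of_mem_snd {i j v} (hv : v ∈ pkgSupport (P i)) (hend : v = (P j).2.1) : i = j :=
    eq_of_mem_pkgSupport_of_pairwise_pkgDisjoint hPdisj hv (hend ▸ snd_mem_pkgSupport (P j))
  have J_inj : Function.Injective J := fun i j hij ↦
    eq_of_mem_snd (snd_mem_pkgSupport (P i))
      ((Equiv.swap x y).injective (by rw [← hJ, ← hJ, hij]))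
  refine .of_glue le_sup_left (fun i ↦ (hP i).2.1) hPdisj (R := R ∘ J) (fun i ↦ (hR (J i)).2.1)
    (fun i j hij ↦ hRdisj (J_inj.ne hij)) (fun i j hij v hvP hvR ↦ hij ?_) fun i ↦ ?_
  · have hvT : v ∈ T := hT.mem_of_mem_pkgSupport (hP i).1 (hP i).2.1 (hPT i)
      (hR _).1 (hR _).2.1 (hRT _) hvP hvR
    exact eq_of_mem_snd hvP ((Equiv.swap x y).injective
      (by rw [swap_T hvT, ← hJ]; exact hRT _ v hvT hvR))
  · rcases Finset.mem_insert.1 (hP i).2.2 with hi | hi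
    · refine .inr (.inr ((edge_adj ..).2 ⟨.inl ⟨hi, ?_⟩, ?_⟩))
      all_goals simp [hJ, hi, hxy]
    · exact .inl (by simp [hJ, swap_T hi])

theorem hasLinkage_bot (h : ∀ T : Finset V, XYSeparates (⊥ : SimpleGraph V) A B T → k ≤ T.card) :
    HasLinkage (⊥ : SimpleGraph V) A B k := by
  obtain ⟨S, hS, rfl⟩ : ∃ S : Finset V, (S : Set V) ⊆ A ∩ B ∧ S.card = k := by
    by_cases hAB : (A ∩ B).Finite
    · have hsep : XYSeparates ⊥ A B hAB.toFinset := by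
        rintro ⟨a, b, p⟩ ⟨-, ha, hb⟩
        cases p with
        | nil => exact ⟨a, by simpa using ⟨ha, hb⟩, by simp [pkgSupport]⟩
        | cons hadj _ => exact absurd hadj (by simp)
      obtain ⟨S, hS, hSk⟩ := Finset.exists_subset_card_eq (h _ hsep)
      exact ⟨S, fun v hv ↦ hAB.mem_toFinset.1 (hS hv), hSk⟩
    · exact Set.Infinite.exists_subset_card_eq hAB k
  let e := S.equivFin.symm
  refine .of_disjoint_reachableWithin (U := fun i ↦ {(e i : V)}) (fun i j hij ↦ ?_) fun i ↦
    ⟨e i, (hS (e i).2).1, e i, (hS (e i).2).2, .refl rfl⟩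
  simpa [Subtype.ext_iff] using e.injective.ne hij

theorem HasLinkage.sup_edge_of_forall_le_card {T : Finset V} {a b : V}
    (ih : ∀ A B : Set V, (∀ T : Finset V, XYSeparates G A B T → k ≤ T.card) → HasLinkage G A B k)
    (h : ∀ T : Finset V, XYSeparates (G ⊔ edge x y) A B T → k ≤ T.card)
    (hT : XYSeparates G A B T) (hTk : T.card < k)
    (ha : a ∈ A) (hax : ReachableWithin G (T : Set V)ᶜ a x)
    (hb : b ∈ B) (hyb : ReachableWithin G (T : Set V)ᶜ y b) :
    HasLinkage (G ⊔ edge x y) A B k := by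
  classical
  have hx : x ∉ T := hax.right_mem
  have hy : y ∉ T := hyb.left_mem
  have hxy : x ≠ y := by
    rintro rfl
    exact xySeparates_iff_forall_not_reachableWithin.1 hT a ha b hb (hax.trans hyb)
  have hA (T' : Finset V) (hT' : XYSeparates G A (insert x T : Finset V) T') : k ≤ T'.card := by
    rw [Finset.coe_insert] at hT'
    exact h T' (hT.sup_edge hb hyb hT')
  have hB (T' : Finset V) (hT' : XYSeparates G B (insert y T : Finset V) T') : k ≤ T'.card := by
    rw [Finset.coe_insert] at hT'
    refine h T' ?_
    rw [edge_comm]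
    exact (hT.symm.sup_edge ha hax.symm hT').symm
  obtain rfl : T.card + 1 = k := by
    have hsep : XYSeparates G A (insert x T : Finset V) (insert x T : Finset V) :=
      fun p hp ↦ ⟨p.2.1, hp.2.2, snd_mem_pkgSupport p⟩
    have hle := hA _ hsep
    rw [Finset.card_insert_of_notMem hx] at hle
    lia
  exact .sup_edge hT hxy hx hy (ih _ _ hA) (ih _ _ hB)

-- Göring's proof of Menger's theorem, by induction on the number of edges.
theorem hasLinkage_of_forall_xySeparates (hG : G.edgeSet.Finite)
    (h : ∀ T : Finset V, XYSeparates G A B T → k ≤ T.card) : HasLinkage G A B k := by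
  suffices menger : ∀ F : Set (Sym2 V), F.Finite → ∀ A B : Set V,
      (∀ T : Finset V, XYSeparates (fromEdgeSet F) A B T → k ≤ T.card) →
        HasLinkage (fromEdgeSet F) A B k by
    rw [← fromEdgeSet_edgeSet G] at h ⊢
    exact menger _ hG A B h
  intro F hF
  induction F, hF using Set.Finite.induction_on with
  | empty => simpa using fun A B ↦ hasLinkage_bot
  | @insert e F _ _ ih =>
    intro A B h
    induction e with | _ x y
    have hinsert : fromEdgeSet (insert s(x, y) F) = fromEdgeSet F ⊔ edge x y := by
      rw [Set.insert_eq, Set.union_comm, edge, fromEdgeSet_union]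
    rw [hinsert] at h ⊢
    by_cases hF : ∀ T : Finset V, XYSeparates (fromEdgeSet F) A B T → k ≤ T.card
    · exact (ih A B hF).mono le_sup_left
    push Not at hF
    obtain ⟨T, hT, hTk⟩ := hF
    obtain ⟨a, ha, b, hb, hab⟩ : ∃ a ∈ A, ∃ b ∈ B,
        ReachableWithin (fromEdgeSet F ⊔ edge x y) (T : Set V)ᶜ a b := by
      by_contra! hsep
      exact hTk.not_ge (h T (xySeparates_iff_forall_not_reachableWithin.2 hsep))
    rcases hab.of_sup_edge with hab | ⟨hax, hyb⟩ | ⟨hay, hxb⟩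
    · exact absurd hab (xySeparates_iff_forall_not_reachableWithin.1 hT a ha b hb)
    · exact .sup_edge_of_forall_le_card ih h hT hTk ha hax hb hyb
    · rw [edge_comm] at h ⊢
      exact .sup_edge_of_forall_le_card ih h hT hTk ha hay hb hxb

end Menger

section Contraction

variable {β : Type*} {G : SimpleGraph V} {f : V → β} {U W X Y : Set V} {a b : V}

theorem ReachableWithin.map_induce (hUW : U ⊆ W) (h : ReachableWithin G U a b) :
    ReachableWithin ((G.induce W).map (W.domRestrict f)) (f '' U) (f a) (f b) := by
  obtain ⟨p, hp⟩ := h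
  induction p with
  | nil => exact .refl (Set.mem_image_of_mem f (hp _ (by simp)))
  | @cons a a' b hadj p ih =>
    have ha : a ∈ U := hp _ (by simp)
    have ha' : a' ∈ U := hp _ (by simp)
    specialize ih fun v hv ↦ hp v (by simp [hv])
    by_cases heq : f a = f a'
    · rwa [heq]
    · have hadj' : (G.induce W).Adj ⟨a, hUW ha⟩ ⟨a', hUW ha'⟩ := hadj
      exact (ReachableWithin.of_adj (map_adj_apply' (f := W.domRestrict f) hadj' heq)
        (Set.mem_image_of_mem f ha) (Set.mem_image_of_mem f ha')).trans ih

theorem ReachableWithin.of_map_induce (hfib : ∀ a b, f a = f b → a ≠ b → G.Adj a b) {T : Set β}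
    (ha : a ∈ W) (hb : b ∈ W)
    (h : ReachableWithin ((G.induce W).map (W.domRestrict f)) T (f a) (f b)) :
    ReachableWithin G (f ⁻¹' T ∩ W) a b := by
  have fibre {a b : V} (hab : f a = f b) (ha : a ∈ W) (hb : b ∈ W) (hbT : f b ∈ T) :
      ReachableWithin G (f ⁻¹' T ∩ W) a b := by
    by_cases heq : a = b
    · exact heq ▸ .refl ⟨Set.mem_preimage.2 (hab ▸ hbT), ha⟩
    · exact .of_adj (hfib a b hab heq) ⟨Set.mem_preimage.2 (hab ▸ hbT), ha⟩ ⟨hbT, hb⟩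
  obtain ⟨p, hp⟩ := h
  generalize hs : f a = s at p hp
  generalize ht : f b = t at p hp
  induction p generalizing a with
  | nil => exact fibre (hs.trans ht.symm) ha hb (ht ▸ hp _ (by simp))
  | @cons s s' t hadj p ih =>
    have hsT : s ∈ T := hp _ (by simp)
    have hsT' : s' ∈ T := hp _ (by simp)
    have hpT : ∀ t ∈ p.support, t ∈ T := fun t ht ↦ hp t (by simp [ht])
    obtain ⟨-, ⟨c, hc⟩, ⟨c', hc'⟩, hadj, rfl, rfl⟩ := hadj
    have hcc' : ReachableWithin G (f ⁻¹' T ∩ W) c c' := .of_adj hadj ⟨hsT, hc⟩ ⟨hsT', hc'⟩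
    exact (fibre hs ha hc hsT).trans (hcc'.trans (ih hc' rfl ht hpT))

theorem le_card_of_xySeparates_map_induce {c r : ℕ} (hc : 0 < c) {S : Fin (c * r) → Set V}
    (hS : ∀ i, ∃ x ∈ X, ∃ y ∈ Y, ReachableWithin G (S i) x y)
    (hcong : ∀ t, {i | t ∈ f '' S i}.ncard ≤ c) (hSW : ∀ i, S i ⊆ W) {T : Finset β}
    (hT : XYSeparates ((G.induce W).map (W.domRestrict f)) (f '' (X ∩ W)) (f '' (Y ∩ W)) T) :
    r ≤ T.card := by
  classical
  have hmeet (i) : ∃ t ∈ T, t ∈ f '' S i := by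
    by_contra! hdisj
    obtain ⟨x, hx, y, hy, hxy⟩ := hS i
    refine xySeparates_iff_forall_not_reachableWithin.1 hT
      _ ⟨x, ⟨hx, hSW i hxy.left_mem⟩, rfl⟩ _ ⟨y, ⟨hy, hSW i hxy.right_mem⟩, rfl⟩ ?_
    exact (hxy.map_induce (hSW i)).mono le_rfl fun t ht htT ↦ hdisj t htT ht
  choose t htT ht using hmeet
  have hfibre (s) (_ : s ∈ T) : (Finset.univ.filter (t · = s)).card ≤ c := by
    rw [← Set.ncard_coe_finset]
    refine (Set.ncard_le_ncard ?_).trans (hcong s)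
    rintro i hi
    obtain rfl : t i = s := by simpa using hi
    exact ht i
  have hcard := Finset.card_le_mul_card_image_of_maps_to (fun i _ ↦ htT i) c hfibre
  rw [Finset.card_univ, Fintype.card_fin] at hcard
  exact Nat.le_of_mul_le_mul_left hcard hc

-- Menger's theorem in the contracted graph: a separator must meet the images of all `c * r`
-- sets, and each of its vertices meets at most `c` of them.
theorem exists_disjoint_reachableWithin_preimage {c r : ℕ} (hc : 0 < c)
    {S : Fin (c * r) → Set V} (hfin : ∀ i, (S i).Finite)
    (hS : ∀ i, ∃ x ∈ X, ∃ y ∈ Y, ReachableWithin G (S i) x y)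
    (hcong : ∀ t, {i | t ∈ f '' S i}.ncard ≤ c) (hfib : ∀ a b, f a = f b → a ≠ b → G.Adj a b) :
    ∃ T : Fin r → Set β, (Pairwise fun i j ↦ Disjoint (T i) (T j)) ∧
      ∀ i, ∃ x ∈ X, ∃ y ∈ Y, ReachableWithin G (f ⁻¹' T i ∩ ⋃ j, S j) x y := by
  set W := ⋃ j, S j
  have : Finite W := Set.finite_iUnion hfin
  have hfinite : ((G.induce W).map (W.domRestrict f)).edgeSet.Finite := by
    refine (Set.toFinite (Set.range (Sym2.map (W.domRestrict f)))).subset ?_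
    rintro ⟨s, t⟩ ⟨-, a, b, -, rfl, rfl⟩
    exact ⟨s(a, b), rfl⟩
  obtain ⟨P, hP, hdisj⟩ := hasLinkage_of_forall_xySeparates (k := r) hfinite fun T hT ↦
    le_card_of_xySeparates_map_induce hc hS hcong (Set.subset_iUnion S) hT
  refine ⟨fun i ↦ pkgSupport (P i), fun i j hij ↦ Set.disjoint_left.2 (hdisj hij), fun i ↦ ?_⟩
  obtain ⟨-, ⟨x, hx, hxi⟩, ⟨y, hy, hyi⟩⟩ := hP i
  refine ⟨x, hx.1, y, hy.1, .of_map_induce hfib hx.2 hy.2 ?_⟩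
  rw [hxi, hyi]
  exact .pkgSupport (P i)

end Contraction

section ShortestPaths

variable {G : SimpleGraph V} {U X Y : Set V} {p : PathPkg G} {x y : V} {i j : ℕ}

/-- `p` is an `X`-`Y`-path which is shortest among the `X`-`Y`-walks on its own vertex set; such a
path is induced and meets `X` and `Y` only in its ends. -/
def IsShortestXYPath (G : SimpleGraph V) (X Y : Set V) (p : PathPkg G) : Prop :=
  IsXYPath G X Y p ∧ ∀ q : PathPkg G, q.1 ∈ X → q.2.1 ∈ Y → pkgSupport q ⊆ pkgSupport p →
    p.2.2.length ≤ q.2.2.length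

theorem ReachableWithin.exists_isShortestXYPath (hx : x ∈ X) (hy : y ∈ Y)
    (h : ReachableWithin G U x y) :
    ∃ p : PathPkg G, IsShortestXYPath G X Y p ∧ _root_.pkgSupport p ⊆ U := by
  obtain ⟨p, ⟨hp, hpU⟩, hmin⟩ := exists_minimalFor_of_wellFoundedLT
    (fun p : PathPkg G ↦ IsXYPath G X Y p ∧ _root_.pkgSupport p ⊆ U) (fun p ↦ p.2.2.length)
    (h.exists_isXYPath hx hy)
  refine ⟨p, ⟨hp, fun q hqX hqY hqp ↦ ?_⟩, hpU⟩
  classical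
  have hbypass : p.2.2.length ≤ q.2.2.bypass.length :=
    (le_total _ _).elim id <| hmin (j := ⟨q.1, q.2.1, q.2.2.bypass⟩)
      ⟨⟨q.2.2.bypass_isPath, hqX, hqY⟩,
        fun v hv ↦ hpU (hqp (q.2.2.support_bypass_subset_support hv))⟩
  exact hbypass.trans q.2.2.length_bypass_le_length

theorem mem_pkgSupport_iff_exists_getVert {v : V} :
    v ∈ pkgSupport p ↔ ∃ i ≤ p.2.2.length, p.2.2.getVert i = v := by
  rw [pkgSupport, Set.mem_ofPred_eq, Walk.mem_support_iff_exists_getVert]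
  simp only [and_comm]

namespace IsShortestXYPath

theorem getVert_mem_left_iff (hp : IsShortestXYPath G X Y p) (hi : i ≤ p.2.2.length) :
    p.2.2.getVert i ∈ X ↔ i = 0 := by
  refine ⟨fun hX ↦ ?_, ?_⟩
  · have := hp.2 ⟨_, _, p.2.2.drop i⟩ hX hp.1.2.2 (p.2.2.isSubwalk_drop i).support_subset
    have hlen := p.2.2.drop_length i
    grind
  · rintro rfl
    simpa using hp.1.2.1

theorem getVert_mem_right_iff (hp : IsShortestXYPath G X Y p) (hi : i ≤ p.2.2.length) :
    p.2.2.getVert i ∈ Y ↔ i = p.2.2.length := by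
  refine ⟨fun hY ↦ ?_, ?_⟩
  · have := hp.2 ⟨_, _, p.2.2.take i⟩ hp.1.2.1 hY (p.2.2.isSubwalk_take i).support_subset
    have hlen := p.2.2.take_length i
    grind
  · rintro rfl
    simpa using hp.1.2.2

theorem eq_succ_of_adj_getVert (hp : IsShortestXYPath G X Y p) (hij : i < j)
    (hj : j ≤ p.2.2.length) (hadj : G.Adj (p.2.2.getVert i) (p.2.2.getVert j)) : j = i + 1 := by
  let shortcut := (p.2.2.take i).append (.cons hadj (p.2.2.drop j))
  have hsub : pkgSupport ⟨_, _, shortcut⟩ ⊆ pkgSupport p := by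
    intro v hv
    rcases (Walk.mem_support_append_iff _ _).1 hv with hv | hv
    · exact (p.2.2.isSubwalk_take i).support_subset hv
    · rcases List.mem_cons.1 ((Walk.support_cons ..).symm ▸ hv) with rfl | hv
      · exact p.2.2.getVert_mem_support i
      · exact (p.2.2.isSubwalk_drop j).support_subset hv
  have := hp.2 ⟨_, _, shortcut⟩ hp.1.2.1 hp.1.2.2 hsub
  have hlen : shortcut.length = i + (p.2.2.length - j + 1) := by
    simp [shortcut]; lia
  grind

theorem adj_getVert_iff (hp : IsShortestXYPath G X Y p) (hi : i ≤ p.2.2.length)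
    (hj : j ≤ p.2.2.length) :
    G.Adj (p.2.2.getVert i) (p.2.2.getVert j) ↔ j = i + 1 ∨ i = j + 1 := by
  constructor
  · intro hadj
    rcases lt_trichotomy i j with hij | rfl | hij
    · exact .inl (hp.eq_succ_of_adj_getVert hij hj hadj)
    · exact (hadj.ne rfl).elim
    · exact .inr (hp.eq_succ_of_adj_getVert hij hi hadj.symm)
  · rintro (rfl | rfl)
    · exact p.2.2.adj_getVert_succ (by lia)
    · exact (p.2.2.adj_getVert_succ (by lia)).symm

theorem exists_mem_subsingleton_inter_neighborSet (hp : IsShortestXYPath G X Y p) {A : Set V}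
    (hA : (A ∩ pkgSupport p).Nonempty) :
    ∃ a ∈ A ∩ pkgSupport p, (A ∩ pkgSupport p ∩ G.neighborSet a).Subsingleton := by
  classical
  have hex : ∃ i, i ≤ p.2.2.length ∧ p.2.2.getVert i ∈ A := by
    obtain ⟨a, haA, hap⟩ := hA
    obtain ⟨i, hi, rfl⟩ := mem_pkgSupport_iff_exists_getVert.1 hap
    exact ⟨i, hi, haA⟩
  obtain ⟨hi, hiA⟩ := Nat.find_spec hex
  set i := Nat.find hex
  have hsucc {v : V} (hv : v ∈ A ∩ pkgSupport p ∩ G.neighborSet (p.2.2.getVert i)) :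
      v = p.2.2.getVert (i + 1) := by
    obtain ⟨⟨hvA, hvp⟩, hadj⟩ := hv
    obtain ⟨j, hj, rfl⟩ := mem_pkgSupport_iff_exists_getVert.1 hvp
    rcases (hp.adj_getVert_iff hi hj).1 hadj with rfl | hji
    · rfl
    · exact absurd ⟨hj, hvA⟩ (Nat.find_min hex (by lia))
  exact ⟨_, ⟨hiA, p.2.2.getVert_mem_support i⟩, fun v hv w hw ↦ (hsucc hv).trans (hsucc hw).symm⟩

end IsShortestXYPath

/-- The degree of `a` in the graph induced by `S` after a new vertex complete to `X` and another
one complete to `Y` have been added. -/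
noncomputable def xyDegree (G : SimpleGraph V) (X Y S : Set V) (a : V) : ℕ :=
  (S ∩ G.neighborSet a).ncard + X.indicator 1 a + Y.indicator 1 a

theorem ncard_consecutive_add_ite_add_ite {n : ℕ} (hi : i ≤ n) :
    {j | j ≤ n ∧ (j = i + 1 ∨ i = j + 1)}.ncard + (if i = 0 then 1 else 0) +
      (if i = n then 1 else 0) = 2 := by
  have hunion : {j | j ≤ n ∧ (j = i + 1 ∨ i = j + 1)} =
      ((if i = n then ∅ else {i + 1}) ∪ (if i = 0 then ∅ else {i - 1}) : Finset ℕ) := by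
    ext j
    split_ifs <;> simp <;> lia
  have hdisj : Disjoint (if i = n then ∅ else {i + 1} : Finset ℕ)
      (if i = 0 then ∅ else {i - 1}) := by
    split_ifs <;> simp
    lia
  rw [hunion, Set.ncard_coe_finset, Finset.card_union_of_disjoint hdisj]
  split_ifs <;> simp

theorem IsShortestXYPath.xyDegree_eq_two (hp : IsShortestXYPath G X Y p) {a : V}
    (ha : a ∈ pkgSupport p) : xyDegree G X Y (pkgSupport p) a = 2 := by
  classical
  obtain ⟨i, hi, rfl⟩ := mem_pkgSupport_iff_exists_getVert.1 ha
  have hnbrs : pkgSupport p ∩ G.neighborSet (p.2.2.getVert i) =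
      p.2.2.getVert '' {j | j ≤ p.2.2.length ∧ (j = i + 1 ∨ i = j + 1)} := by
    ext v
    constructor
    · rintro ⟨hv, hadj⟩
      obtain ⟨j, hj, rfl⟩ := mem_pkgSupport_iff_exists_getVert.1 hv
      exact ⟨j, ⟨hj, (hp.adj_getVert_iff hi hj).1 hadj⟩, rfl⟩
    · rintro ⟨j, ⟨hj, hij⟩, rfl⟩
      exact ⟨p.2.2.getVert_mem_support j, (hp.adj_getVert_iff hi hj).2 hij⟩
  rw [xyDegree, hnbrs, (hp.1.1.getVert_injOn.mono fun j hj ↦ hj.1).ncard_image,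
    ← ncard_consecutive_add_ite_add_ite hi]
  simp [Set.indicator_apply, hp.getVert_mem_left_iff hi, hp.getVert_mem_right_iff hi]

end ShortestPaths

section InducedMatchings

variable {G H : SimpleGraph V} {M N : Set (Sym2 V)} {X Y : Set V} {a b c : V} {m r : ℕ}

namespace IsInducedMatching

theorem eq_of_mem_of_mem (hM : IsInducedMatching G M) (hab : s(a, b) ∈ M) (hac : s(a, c) ∈ M) :
    b = c := by
  by_contra hbc
  exact (hM.2 _ hab _ hac (mt Sym2.congr_right.1 hbc) a (by simp) a (by simp)).1 rfl

theorem of_deleteEdges (hM : IsInducedMatching G M) (hMN : Disjoint M N) :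
    IsInducedMatching (G.deleteEdges N) M := by
  refine ⟨fun e he ↦ ?_, fun e₁ h₁ e₂ h₂ hne a ha b hb ↦
    (hM.2 e₁ h₁ e₂ h₂ hne a ha b hb).imp_right fun h hadj ↦ h (G.deleteEdges_le N hadj)⟩
  rw [edgeSet_deleteEdges]
  exact ⟨hM.1 he, Set.disjoint_left.1 hMN he⟩

end IsInducedMatching

/-- `v` together with its partners in `M`; for a matching `M`, the fibres of `matchingClass M` are
the edges of `M` and the singletons of unmatched vertices, so the image of a graph under it is the
contraction of `M`. -/
def matchingClass (M : Set (Sym2 V)) (v : V) : Set V :=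
  {w | w = v ∨ s(v, w) ∈ M}

theorem mk_mem_of_matchingClass_eq (h : matchingClass M a = matchingClass M b) (hab : a ≠ b) :
    s(a, b) ∈ M := by
  have hb : b ∈ matchingClass M a := h ▸ .inl rfl
  exact hb.resolve_left hab.symm

theorem IsInducedMatching.matchingClass_eq (hM : IsInducedMatching G M) (hab : s(a, b) ∈ M) :
    matchingClass M a = matchingClass M b := by
  have hba : s(b, a) ∈ M := Sym2.eq_swap ▸ hab
  ext c
  constructor
  · rintro (rfl | hac)
    · exact .inr hba
    · exact .inl (hM.eq_of_mem_of_mem hac hab)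
  · rintro (rfl | hbc)
    · exact .inr hab
    · exact .inl (hM.eq_of_mem_of_mem hbc hba)

theorem IsInducedMatching.ncard_mem_image_matchingClass_le_two (hM : IsInducedMatching G M)
    {ι : Type*} [Finite ι] {S : ι → Set V} (hS : Pairwise fun i j ↦ Disjoint (S i) (S j))
    (t : Set V) : {i | t ∈ matchingClass M '' S i}.ncard ≤ 2 := by
  by_contra! hlt
  obtain ⟨i, j, l, ⟨a, ha, rfl⟩, ⟨b, hb, hab⟩, ⟨c, hc, hac⟩, hij, hil, hjl⟩ :=
    (Set.two_lt_ncard_iff (Set.toFinite _)).1 hlt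
  have hmem {i j : ι} {a b : V} (ha : a ∈ S i) (hb : b ∈ S j) (hij : i ≠ j)
      (h : matchingClass M b = matchingClass M a) : s(a, b) ∈ M :=
    mk_mem_of_matchingClass_eq h.symm fun heq ↦ Set.disjoint_left.1 (hS hij) ha (heq ▸ hb)
  obtain rfl := hM.eq_of_mem_of_mem (hmem ha hb hij hab) (hmem ha hc hil hac)
  exact Set.disjoint_left.1 (hS hjl) hb hc

theorem exists_adj_not_adj_of_xyDegree_le {R S : Set V} (hS : S.Finite)
    (hdeg : xyDegree H X Y S a ≤ xyDegree G X Y R a) (hRS : R ∩ H.neighborSet a ⊆ S)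
    (hbS : b ∈ S) (hbR : b ∉ R) (hab : H.Adj a b) :
    ∃ a' ∈ R, G.Adj a a' ∧ ¬ H.Adj a a' := by
  by_contra! hsub
  have hlt : (R ∩ G.neighborSet a).ncard < (S ∩ H.neighborSet a).ncard := by
    refine Set.ncard_lt_ncard ⟨fun v hv ↦ ?_, fun h ↦ hbR (h ⟨hbS, hab⟩).1⟩ (hS.inter_of_left _)
    have hadj := hsub v hv.1 hv.2
    exact ⟨hRS ⟨hv.1, hadj⟩, hadj⟩
  unfold xyDegree at hdeg
  lia

/-- `G` contains `m` pairwise non-adjacent `X`-`Y`-paths, each shortest on its own vertex set. -/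
def HasNonAdjLinkage (G : SimpleGraph V) (X Y : Set V) (m : ℕ) : Prop :=
  ∃ Q : Fin m → PathPkg G, (∀ i, IsShortestXYPath G X Y (Q i)) ∧
    Pairwise fun i j ↦ PkgNonAdj G (Q i) (Q j)

theorem exists_mk_mem_of_adj_of_notMem {Q : Fin m → PathPkg (G.deleteEdges M)}
    (hQ : ∀ i, IsShortestXYPath (G.deleteEdges M) X Y (Q i))
    (hnonadj : Pairwise fun i j ↦ PkgNonAdj (G.deleteEdges M) (Q i) (Q j))
    {p : PathPkg G} (hp : IsShortestXYPath G X Y p) (hpQ : pkgSupport p ⊆ ⋃ i, pkgSupport (Q i))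
    (ha : a ∈ pkgSupport p) (hb : b ∉ pkgSupport p) (hbQ : b ∈ ⋃ i, pkgSupport (Q i))
    (hab : (G.deleteEdges M).Adj a b) : ∃ a' ∈ pkgSupport p, s(a, a') ∈ M := by
  obtain ⟨i, hai⟩ := Set.mem_iUnion.1 (hpQ ha)
  have hnbr {v : V} (hv : v ∈ ⋃ j, pkgSupport (Q j)) (hav : (G.deleteEdges M).Adj a v) :
      v ∈ pkgSupport (Q i) := by
    obtain ⟨j, hvj⟩ := Set.mem_iUnion.1 hv
    obtain rfl : i = j := by_contra fun hij ↦ (hnonadj hij a hai v hvj).2 hav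
    exact hvj
  obtain ⟨a', ha', haa', hdel⟩ := exists_adj_not_adj_of_xyDegree_le
    (finite_pkgSupport (Q i)) (((hQ i).xyDegree_eq_two hai).trans_le (hp.xyDegree_eq_two ha).ge)
    (fun v hv ↦ hnbr (hpQ hv.1) hv.2) (hnbr hbQ hab) hb hab
  refine ⟨a', ha', ?_⟩
  rw [deleteEdges_adj] at hdel
  tauto

theorem IsInducedMatching.exists_isShortestXYPath_matchingClass_ne (hM : IsInducedMatching G M)
    {Q : Fin (2 * r) → PathPkg G} (hQX : ∀ i, (Q i).1 ∈ X) (hQY : ∀ i, (Q i).2.1 ∈ Y)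
    (hdisj : Pairwise fun i j ↦ PkgDisjoint (Q i) (Q j)) :
    ∃ R : Fin r → PathPkg G, (∀ i, IsShortestXYPath G X Y (R i)) ∧
      (∀ i, pkgSupport (R i) ⊆ ⋃ j, pkgSupport (Q j)) ∧
      ∀ i j, i ≠ j → ∀ a ∈ pkgSupport (R i), ∀ b ∈ pkgSupport (R j),
        matchingClass M a ≠ matchingClass M b := by
  obtain ⟨T, hT, hreach⟩ := exists_disjoint_reachableWithin_preimage (f := matchingClass M)
    (S := fun i ↦ pkgSupport (Q i)) two_pos (fun i ↦ finite_pkgSupport (Q i))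
    (fun i ↦ ⟨_, hQX i, _, hQY i, .pkgSupport (Q i)⟩)
    (hM.ncard_mem_image_matchingClass_le_two fun i j hij ↦ Set.disjoint_left.2 (hdisj hij))
    fun a b hab hne ↦ hM.1 (mk_mem_of_matchingClass_eq hab hne)
  have hshort (i : Fin r) : ∃ p, IsShortestXYPath G X Y p ∧
      pkgSupport p ⊆ matchingClass M ⁻¹' T i ∩ ⋃ j, pkgSupport (Q j) := by
    obtain ⟨x, hx, y, hy, hxy⟩ := hreach i
    exact hxy.exists_isShortestXYPath hx hy
  choose R hR hRT using hshort
  exact ⟨R, hR, fun i v hv ↦ (hRT i hv).2, fun i j hij a ha b hb heq ↦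
    Set.disjoint_left.1 (hT hij) (hRT i ha).1 (Set.mem_of_eq_of_mem heq (hRT j hb).1)⟩

theorem HasNonAdjLinkage.of_deleteEdges (hM : IsInducedMatching G M)
    (h : HasNonAdjLinkage (G.deleteEdges M) X Y (2 * r)) : HasNonAdjLinkage G X Y r := by
  obtain ⟨Q, hQ, hnonadj⟩ := h
  have hle : G.deleteEdges M ≤ G := G.deleteEdges_le M
  obtain ⟨R, hR, hRQ, class_ne⟩ := hM.exists_isShortestXYPath_matchingClass_ne
    (Q := fun i ↦ ⟨_, _, (Q i).2.2.mapLe hle⟩)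
    (fun i ↦ (hQ i).1.2.1) (fun i ↦ (hQ i).1.2.2) fun i j hij v hvi hvj ↦
      (hnonadj hij v (by simpa [pkgSupport] using hvi) v (by simpa [pkgSupport] using hvj)).1 rfl
  simp only [pkgSupport, Walk.support_mapLe_eq_support] at hRQ
  refine ⟨R, hR, fun i j hij a ha b hb ↦
    ⟨fun hab ↦ class_ne i j hij a ha b hb (hab ▸ rfl), fun hab ↦ ?_⟩⟩
  have hab' : (G.deleteEdges M).Adj a b :=
    (deleteEdges_adj ..).2 ⟨hab, fun h ↦ class_ne i j hij a ha b hb (hM.matchingClass_eq h)⟩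
  obtain ⟨a', -, haM⟩ := exists_mk_mem_of_adj_of_notMem hQ hnonadj (hR i) (hRQ i) ha
    (fun hbi ↦ class_ne i j hij b hbi b hb rfl) (hRQ j hb) hab'
  obtain ⟨b', hb', hbM⟩ := exists_mk_mem_of_adj_of_notMem hQ hnonadj (hR j) (hRQ j) hb
    (fun haj ↦ class_ne i j hij a ha a haj rfl) (hRQ i ha) hab'.symm
  have hne : s(a, a') ≠ s(b, b') := fun heq ↦ by
    rcases Sym2.mem_iff.1 (heq ▸ Sym2.mem_mk_left a a') with rfl | rfl
    · exact class_ne i j hij a ha a hb rfl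
    · exact class_ne i j hij a ha a hb' rfl
  exact (hM.2 _ haM _ hbM hne a (by simp) b (by simp)).2 hab

theorem HasNonAdjLinkage.of_deleteEdges_biUnion {ι : Type*} {M : ι → Set (Sym2 V)}
    (hM : ∀ i, IsInducedMatching G (M i)) (hdisj : Pairwise fun i j ↦ Disjoint (M i) (M j))
    (s : Finset ι) (h : HasNonAdjLinkage (G.deleteEdges (⋃ i ∈ s, M i)) X Y (2 ^ s.card * r)) :
    HasNonAdjLinkage G X Y r := by
  classical
  induction s using Finset.induction_on generalizing r with
  | empty => simpa using h
  | insert i s hi ih =>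
    have hMi : IsInducedMatching (G.deleteEdges (⋃ j ∈ s, M j)) (M i) :=
      (hM i).of_deleteEdges <| Set.disjoint_iUnion₂_right.2 fun j hj ↦
        hdisj (ne_of_mem_of_not_mem hj hi).symm
    rw [Finset.set_biUnion_insert, Set.union_comm, ← deleteEdges_deleteEdges,
      Finset.card_insert_of_notMem hi, pow_succ', mul_assoc] at h
    exact ih (.of_deleteEdges hMi h)

end InducedMatchings

section StrongEdgeColoring

theorem colorable_of_forall_exists_ncard_le {α : Type*} [Finite α] {C : SimpleGraph α} {d : ℕ}
    (h : ∀ s : Set α, s.Nonempty → ∃ a ∈ s, (s ∩ C.neighborSet a).ncard ≤ d) :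
    C.Colorable (d + 1) := by
  classical
  suffices hcol : ∀ s : Set α, ∃ c : α → Fin (d + 1), ∀ a ∈ s, ∀ b ∈ s, C.Adj a b → c a ≠ c b by
    obtain ⟨c, hc⟩ := hcol Set.univ
    exact ⟨.mk c fun {a b} ↦ hc a trivial b trivial⟩
  intro s
  induction hn : s.ncard generalizing s with
  | zero =>
    rw [Set.ncard_eq_zero] at hn
    exact ⟨0, by simp [hn]⟩
  | succ n ih =>
    obtain ⟨a, ha, hdeg⟩ := h s (Set.nonempty_of_ncard_ne_zero (by lia))
    obtain ⟨c, hc⟩ := ih (s \ {a}) (by rw [Set.ncard_sdiff_singleton_of_mem ha, hn]; rfl)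
    obtain ⟨free, hfree⟩ : ∃ free, free ∉ c '' (s ∩ C.neighborSet a) := by
      by_contra! hall
      have hle := Set.ncard_image_le (f := c) (Set.toFinite (s ∩ C.neighborSet a))
      rw [Set.eq_univ_of_forall hall, Set.ncard_univ, Nat.card_fin] at hle
      lia
    have hne {b : α} (hb : b ∈ s) (hab : C.Adj a b) : c b ≠ free :=
      fun h ↦ hfree ⟨b, ⟨hb, hab⟩, h⟩
    refine ⟨Function.update c a free, fun u hu v hv huv ↦ ?_⟩
    by_cases hua : u = a
    · subst hua
      simpa [huv.ne'] using (hne hv huv).symm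
    by_cases hva : v = a
    · subst hva
      simpa [hua] using hne hu huv.symm
    simpa [hua, hva] using hc u ⟨hu, hua⟩ v ⟨hv, hva⟩ huv

/-- The graph on a set `E` of edges in which two edges are adjacent if they share a vertex or are
joined by an edge of `G`; its proper colourings are the partitions of `E` into induced matchings. -/
def conflictGraph (G : SimpleGraph V) (E : Set (Sym2 V)) : SimpleGraph E where
  Adj e f := e ≠ f ∧ ∃ a ∈ e.1, ∃ b ∈ f.1, a = b ∨ G.Adj a b
  symm.symm := fun _ _ ⟨hne, a, ha, b, hb, hab⟩ ↦
    ⟨hne.symm, b, hb, a, ha, hab.imp Eq.symm Adj.symm⟩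
  loopless.irrefl := fun _ h ↦ h.1 rfl

theorem exists_isInducedMatching_iUnion_eq {G : SimpleGraph V} {E : Set (Sym2 V)} {n : ℕ}
    (hE : E ⊆ G.edgeSet) (h : (conflictGraph G E).Colorable n) :
    ∃ M : Fin n → Set (Sym2 V), (∀ i, IsInducedMatching G (M i)) ∧
      (Pairwise fun i j ↦ Disjoint (M i) (M j)) ∧ ⋃ i, M i = E := by
  obtain ⟨c⟩ := h
  refine ⟨fun i ↦ (↑) '' (c ⁻¹' {i}), fun i ↦ ⟨?_, ?_⟩, fun i j hij ↦ ?_, ?_⟩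
  · rintro _ ⟨e, -, rfl⟩
    exact hE e.2
  · rintro _ ⟨e, he, rfl⟩ _ ⟨f, hf, rfl⟩ hne a ha b hb
    have hconf : ¬ (conflictGraph G E).Adj e f := fun hadj ↦ c.valid hadj (he.trans hf.symm)
    rw [← not_or]
    exact fun hab ↦ hconf ⟨fun h ↦ hne (h ▸ rfl), a, ha, b, hb, hab⟩
  · exact Set.disjoint_image_of_injective Subtype.val_injective
      ((Set.disjoint_singleton.2 hij).preimage c)
  · rw [← Set.image_iUnion, ← Set.preimage_iUnion, Set.iUnion_of_singleton, Set.preimage_univ,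
      Set.image_univ, Subtype.range_coe]

end StrongEdgeColoring

section CrossEdges

variable {ι : Type*} {G : SimpleGraph V} {U : ι → Set V} {X Y : Set V} {a b u : V} {i j : ι}

/-- The graph formed by the edges of `G` that join different members of the family `U`. -/
def crossGraph (G : SimpleGraph V) (U : ι → Set V) : SimpleGraph V where
  Adj a b := G.Adj a b ∧ ∃ i j, i ≠ j ∧ a ∈ U i ∧ b ∈ U j
  symm.symm := fun _ _ ⟨hab, i, j, hij, ha, hb⟩ ↦ ⟨hab.symm, j, i, hij.symm, hb, ha⟩
  loopless.irrefl := fun _ h ↦ h.1.ne rfl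

theorem crossGraph_mono {S T : ι → Set V} (h : ∀ i, S i ⊆ T i) :
    crossGraph G S ≤ crossGraph G T :=
  fun _ _ ⟨hab, i, j, hij, ha, hb⟩ ↦ ⟨hab, i, j, hij, h i ha, h j hb⟩

theorem finite_edgeSet_crossGraph [Finite ι] (hU : ∀ i, (U i).Finite) :
    (crossGraph G U).edgeSet.Finite := by
  refine ((Set.finite_iUnion hU).prod (Set.finite_iUnion hU) |>.image fun v ↦ s(v.1, v.2)).subset ?_
  rintro ⟨a, b⟩ ⟨-, i, j, -, ha, hb⟩
  exact ⟨(a, b), ⟨Set.mem_iUnion_of_mem i ha, Set.mem_iUnion_of_mem j hb⟩, rfl⟩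

theorem eq_of_mem_edgeSet_of_subsingleton_neighborSet {C : SimpleGraph V}
    (hC : ∀ a, (C.neighborSet a).Subsingleton) {e f : Sym2 V} (he : e ∈ C.edgeSet)
    (hf : f ∈ C.edgeSet) (hue : u ∈ e) (huf : u ∈ f) : e = f := by
  obtain ⟨v, rfl⟩ := hue
  obtain ⟨w, rfl⟩ := huf
  exact congrArg _ (hC u he hf)

theorem ncard_le_ncard_of_subsingleton_neighborSet {C : SimpleGraph V}
    (hC : ∀ a, (C.neighborSet a).Subsingleton) {s : Set C.edgeSet} {K : Set V} (hK : K.Finite)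
    (h : ∀ e ∈ s, ∃ u ∈ e.1, u ∈ K) : s.ncard ≤ K.ncard := by
  rcases s.eq_empty_or_nonempty with rfl | ⟨e, he⟩
  · simp
  have : Nonempty V := ⟨(h e he).choose⟩
  choose! u hu huK using h
  exact Set.ncard_le_ncard_of_injOn u huK (fun e he f hf hef ↦
    Subtype.ext (eq_of_mem_edgeSet_of_subsingleton_neighborSet hC e.2 f.2 (hu e he)
      (hef ▸ hu f hf))) hK

theorem mem_of_adj_of_subsingleton_crossGraph
    (hC : ((crossGraph G U).neighborSet a).Subsingleton) (ha : a ∈ U i)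
    (hab : (crossGraph G U).Adj a b) (hau : G.Adj a u) (hu : u ∈ ⋃ j, U j) (hub : u ≠ b) :
    u ∈ U i := by
  obtain ⟨j, huj⟩ := Set.mem_iUnion.1 hu
  by_contra hui
  have hij : i ≠ j := fun h ↦ hui (h ▸ huj)
  exact hub (hC ⟨hau, i, j, hij, ha, huj⟩ hab)

theorem mem_iUnion_of_mem_edgeSet_crossGraph {e : Sym2 V} (he : e ∈ (crossGraph G U).edgeSet)
    (hu : u ∈ e) : u ∈ ⋃ i, U i := by
  obtain ⟨v, rfl⟩ := hu
  obtain ⟨-, i, j, -, hui, -⟩ := he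
  exact Set.mem_iUnion_of_mem i hui

theorem exists_mem_inter_neighborSet_of_conflictGraph_adj
    (hC : ∀ a, ((crossGraph G U).neighborSet a).Subsingleton) (ha : a ∈ U i) (hb : b ∈ U j)
    (hab : s(a, b) ∈ (crossGraph G U).edgeSet) {f : (crossGraph G U).edgeSet}
    (hf : (conflictGraph G _).Adj ⟨s(a, b), hab⟩ f) :
    ∃ u ∈ f.1, u ∈ U i ∩ G.neighborSet a ∪ U j ∩ G.neighborSet b := by
  obtain ⟨hne, v, hv, u, hu, hvu⟩ := hf
  have hu_notMem : u ∉ s(a, b) := fun hue ↦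
    hne (Subtype.ext (eq_of_mem_edgeSet_of_subsingleton_neighborSet hC hab f.2 hue hu))
  have hvu : G.Adj v u := hvu.resolve_left fun h ↦ hu_notMem (h ▸ hv)
  have huU := mem_iUnion_of_mem_edgeSet_crossGraph f.2 hu
  rw [Sym2.mem_iff, not_or] at hu_notMem
  refine ⟨u, hu, ?_⟩
  rcases Sym2.mem_iff.1 hv with rfl | rfl
  · exact .inl ⟨mem_of_adj_of_subsingleton_crossGraph (hC v) ha hab hvu huU hu_notMem.2, hvu⟩
  · exact .inr ⟨mem_of_adj_of_subsingleton_crossGraph (hC v) hb (Adj.symm hab) hvu huU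
      hu_notMem.1, hvu⟩

variable {Q : ι → PathPkg G}

theorem exists_mem_ncard_conflictGraph_neighborSet_le_three
    (hQ : ∀ i, IsShortestXYPath G X Y (Q i))
    (hC : ∀ a, ((crossGraph G fun i ↦ pkgSupport (Q i)).neighborSet a).Subsingleton)
    {s : Set (crossGraph G fun i ↦ pkgSupport (Q i)).edgeSet} (hs : s.Nonempty) :
    ∃ e ∈ s, (s ∩ (conflictGraph G _).neighborSet e).ncard ≤ 3 := by
  let A : Set V := {v | ∃ e ∈ s, v ∈ e.1}
  obtain ⟨i, hAi⟩ : ∃ i, (A ∩ pkgSupport (Q i)).Nonempty := by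
    obtain ⟨⟨e, he⟩, hes⟩ := hs
    induction e with | _ a b
    obtain ⟨-, i, j, -, ha, -⟩ := id he
    exact ⟨i, a, ⟨_, hes, Sym2.mem_mk_left a b⟩, ha⟩
  obtain ⟨a, ⟨⟨⟨e, he⟩, hes, b, rfl⟩, hai⟩, hlow⟩ :=
    (hQ i).exists_mem_subsingleton_inter_neighborSet hAi
  obtain ⟨-, -, j, -, -, hbj⟩ := id he
  refine ⟨_, hes, ?_⟩
  have hconf (f) (hf : f ∈ s ∩ (conflictGraph G _).neighborSet ⟨s(a, b), he⟩) :
      ∃ u ∈ f.1, u ∈ A ∩ pkgSupport (Q i) ∩ G.neighborSet a ∪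
        pkgSupport (Q j) ∩ G.neighborSet b := by
    obtain ⟨u, huf, hu⟩ := exists_mem_inter_neighborSet_of_conflictGraph_adj hC hai hbj he hf.2
    exact ⟨u, huf, hu.imp_left fun hua ↦ ⟨⟨⟨f, hf.1, huf⟩, hua.1⟩, hua.2⟩⟩
  have hdeg : (pkgSupport (Q j) ∩ G.neighborSet b).ncard ≤ 2 := by
    have := (hQ j).xyDegree_eq_two hbj
    unfold xyDegree at this
    lia
  calc (s ∩ (conflictGraph G _).neighborSet ⟨s(a, b), he⟩).ncard
    _ ≤ (A ∩ pkgSupport (Q i) ∩ G.neighborSet a ∪ pkgSupport (Q j) ∩ G.neighborSet b).ncard :=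
      ncard_le_ncard_of_subsingleton_neighborSet hC
        (((finite_pkgSupport (Q i)).subset fun v hv ↦ hv.1.2).union
          ((finite_pkgSupport (Q j)).subset fun v hv ↦ hv.1)) hconf
    _ ≤ 1 + 2 := (Set.ncard_union_le _ _).trans
      (add_le_add ((Set.ncard_le_one hlow.finite).2 hlow) hdeg)

theorem exists_isInducedMatching_iUnion_eq_crossGraph_edgeSet [Finite ι]
    (hQ : ∀ i, IsShortestXYPath G X Y (Q i))
    (hC : ∀ a, ((crossGraph G fun i ↦ pkgSupport (Q i)).neighborSet a).Subsingleton) :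
    ∃ M : Fin 4 → Set (Sym2 V), (∀ i, IsInducedMatching G (M i)) ∧
      (Pairwise fun i j ↦ Disjoint (M i) (M j)) ∧
      ⋃ i, M i = (crossGraph G fun i ↦ pkgSupport (Q i)).edgeSet := by
  have : Finite (crossGraph G fun i ↦ pkgSupport (Q i)).edgeSet :=
    finite_edgeSet_crossGraph fun i ↦ finite_pkgSupport (Q i)
  refine exists_isInducedMatching_iUnion_eq ?_ (colorable_of_forall_exists_ncard_le fun s hs ↦
    exists_mem_ncard_conflictGraph_neighborSet_le_three hQ hC hs)
  exact edgeSet_mono fun a b hab ↦ hab.1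

end CrossEdges

section Linkage

variable {ι : Type*} {G : SimpleGraph V} {X Y : Set V} {m : ℕ}

theorem subsingleton_neighborSet_crossGraph {P : ι → PathPkg G}
    (hdisj : Pairwise fun i j ↦ PkgDisjoint (P i) (P j))
    (hinc : ∀ v ∈ ⋃ i, pkgSupport (P i),
      {e : Sym2 V | e ∈ G.edgeSet ∧ v ∈ e ∧ e ∉ ⋃ i, pkgEdges (P i)}.Subsingleton) (a : V) :
    ((crossGraph G fun i ↦ pkgSupport (P i)).neighborSet a).Subsingleton := by
  have hmem {b : V} (hab : (crossGraph G fun i ↦ pkgSupport (P i)).Adj a b) :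
      s(a, b) ∈ {e : Sym2 V | e ∈ G.edgeSet ∧ a ∈ e ∧ e ∉ ⋃ i, pkgEdges (P i)} := by
    obtain ⟨hab, i, j, hij, ha, hb⟩ := hab
    refine ⟨hab, Sym2.mem_mk_left a b, fun he ↦ hij ?_⟩
    obtain ⟨l, hl⟩ := Set.mem_iUnion.1 he
    have hil := eq_of_mem_pkgSupport_of_pairwise_pkgDisjoint hdisj ha
      ((P l).2.2.fst_mem_support_of_mem_edges hl)
    have hjl := eq_of_mem_pkgSupport_of_pairwise_pkgDisjoint hdisj hb
      ((P l).2.2.snd_mem_support_of_mem_edges hl)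
    exact hil.trans hjl.symm
  intro b hab c hac
  obtain ⟨-, i, -, -, ha, -⟩ := id hab
  exact Sym2.congr_right.1 (hinc a (Set.mem_iUnion_of_mem i ha) (hmem hab) (hmem hac))

theorem hasNonAdjLinkage_deleteEdges_crossGraph {P : Fin m → PathPkg G}
    (hPX : ∀ i, (P i).1 ∈ X) (hPY : ∀ i, (P i).2.1 ∈ Y)
    (hdisj : Pairwise fun i j ↦ PkgDisjoint (P i) (P j)) :
    HasNonAdjLinkage (G.deleteEdges (crossGraph G fun i ↦ pkgSupport (P i)).edgeSet) X Y m := by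
  rw [deleteEdges_edgeSet]
  have hreach (i : Fin m) : ReachableWithin (G \ crossGraph G fun j ↦ pkgSupport (P j))
      (pkgSupport (P i)) (P i).1 (P i).2.1 := by
    refine (ReachableWithin.pkgSupport (P i)).of_forall_adj fun u hu v hv huv ↦ ⟨huv, ?_⟩
    rintro ⟨-, j, l, hjl, huj, hvl⟩
    exact hjl ((eq_of_mem_pkgSupport_of_pairwise_pkgDisjoint hdisj huj hu).trans
      (eq_of_mem_pkgSupport_of_pairwise_pkgDisjoint hdisj hv hvl))
  choose Q hQ hQP using fun i ↦ (hreach i).exists_isShortestXYPath (hPX i) (hPY i)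
  refine ⟨Q, hQ, fun i j hij a ha b hb ↦ ⟨?_, fun hab ↦ ?_⟩⟩
  · rintro rfl
    exact hdisj hij a (hQP i ha) (hQP j hb)
  · exact hab.2 ⟨hab.1, i, j, hij, hQP i ha, hQP j hb⟩

end Linkage

theorem statement_5_general (G : SimpleGraph V) (X Y : Set V) (k : ℕ)
    (P : Fin (16 * k) → PathPkg G)
    (hPX : ∀ i, (P i).1 ∈ X) (hPY : ∀ i, (P i).2.1 ∈ Y)
    (hdisj : Pairwise fun i j ↦ PkgDisjoint (P i) (P j))
    (hcross : ∀ a, ((crossGraph G fun i ↦ pkgSupport (P i)).neighborSet a).Subsingleton) :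
    ∃ Q : Fin k → PathPkg G,
      (∀ i, IsXYPath G X Y (Q i)) ∧
      Pairwise fun i j ↦ PkgNonAdj G (Q i) (Q j) := by
  choose Q hQ hQP using fun i ↦
    (ReachableWithin.pkgSupport (P i)).exists_isShortestXYPath (hPX i) (hPY i)
  obtain ⟨M, hM, hMdisj, hMcross⟩ := exists_isInducedMatching_iUnion_eq_crossGraph_edgeSet hQ
    fun a ↦ (hcross a).anti fun b hab ↦ crossGraph_mono hQP hab
  have hlinkage := hasNonAdjLinkage_deleteEdges_crossGraph
    (fun i ↦ (hQ i).1.2.1) (fun i ↦ (hQ i).1.2.2)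
    fun i j hij v hvi hvj ↦ hdisj hij v (hQP i hvi) (hQP j hvj)
  obtain ⟨R, hR, hnonadj⟩ : HasNonAdjLinkage G X Y k :=
    .of_deleteEdges_biUnion hM hMdisj Finset.univ (by simpa [hMcross] using hlinkage)
  exact ⟨R, fun i ↦ (hR i).1, hnonadj⟩

theorem statement_5 (G : SimpleGraph V) (X Y : Set V) (k : ℕ)
    (P : Fin (16 * k) → PathPkg G)
    (hP : ∀ i, IsXYPath G X Y (P i))
    (hdisj : Pairwise fun i j => PkgDisjoint (P i) (P j))
    (hinc : ∀ v, v ∈ (⋃ i, pkgSupport (P i)) →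
      Set.Subsingleton {e : Sym2 V | e ∈ G.edgeSet ∧ v ∈ e ∧ e ∉ ⋃ i, pkgEdges (P i)}) :
    ∃ Q : Fin k → PathPkg G,
      (∀ i, IsXYPath G X Y (Q i)) ∧
      Pairwise fun i j => PkgNonAdj G (Q i) (Q j) :=
  statement_5_general G X Y k P (fun i ↦ (hP i).2.1) (fun i ↦ (hP i).2.2) hdisj
    (subsingleton_neighborSet_crossGraph hdisj hinc)
end

section
/- Let G be a simple graph and let 𝒫 be a collection of pairwise disjoint paths in G such that every vertex of V(𝒫) is incident to at most one edge of E(G) \ E(𝒫). Then the set F of edges of the induced subgraph G[V(𝒫)] that do not lie on any path of 𝒫 can be partitioned into at most four induced matchings of G. -/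
open SimpleGraph

universe u

variable {V : Type u}

/-!
Let `L` be the forest formed by the edges of the paths. The edges in `F` are pairwise disjoint, so
two of them are at distance less than two only if an edge of `L` joins them; call them in contact.
Any `n ≥ 1` edges of `F` span at most `2 * n` vertices, on which the forest `L` has total degree
less than `4 * n`; hence one of them is in contact with at most three others. The contact graph is
therefore `3`-degenerate, so it is `4`-colorable (by compactness if `F` is infinite), and the color
classes are the induced matchings.
-/

/-! ### Degenerate graphs -/

open scoped Classical in
/-- `H` is `k`-degenerate: every nonempty finite set `S` of vertices contains a vertex with at most
`k` neighbors in `S`. The vertex set of `H` may be infinite. -/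
def IsDegenerate (H : SimpleGraph V) (k : ℕ) : Prop :=
  ∀ S : Finset V, S.Nonempty → ∃ v ∈ S, (S.filter (H.Adj v)).card ≤ k

theorem IsDegenerate.exists_coloring_finset {H : SimpleGraph V} {k : ℕ} (hH : IsDegenerate H k)
    (S : Finset V) :
    ∃ c : V → Fin (k + 1), ∀ v ∈ S, ∀ w ∈ S, H.Adj v w → c v ≠ c w := by
  classical
  induction S using Finset.strongInduction with
  | H S ih =>
    obtain rfl | hS := S.eq_empty_or_nonempty
    · exact ⟨fun _ => 0, by simp⟩
    obtain ⟨v, hvS, hv⟩ := hH S hS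
    obtain ⟨c, hc⟩ := ih (S.erase v) (Finset.erase_ssubset hvS)
    obtain ⟨color, -, hcolor⟩ : ∃ color ∈ (Finset.univ : Finset (Fin (k + 1))),
        color ∉ (S.filter (H.Adj v)).image c := by
      apply Finset.exists_mem_notMem_of_card_lt_card
      calc ((S.filter (H.Adj v)).image c).card
          ≤ (S.filter (H.Adj v)).card := Finset.card_image_le
        _ < k + 1 := Nat.lt_succ_of_le hv
        _ = (Finset.univ : Finset (Fin (k + 1))).card := (Finset.card_fin _).symm
    have hfresh : ∀ w ∈ S, H.Adj v w → color ≠ c w := fun w hw hvw heq =>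
      hcolor (Finset.mem_image.2 ⟨w, Finset.mem_filter.2 ⟨hw, hvw⟩, heq.symm⟩)
    refine ⟨Function.update c v color, fun x hx y hy hxy => ?_⟩
    obtain rfl | hxv := eq_or_ne x v
    · simpa [hxy.ne'] using hfresh y hy hxy
    obtain rfl | hyv := eq_or_ne y v
    · simpa [hxv] using (hfresh x hx hxy.symm).symm
    · simpa [hxv, hyv] using
        hc x (Finset.mem_erase.2 ⟨hxv, hx⟩) y (Finset.mem_erase.2 ⟨hyv, hy⟩) hxy

theorem IsDegenerate.colorable {H : SimpleGraph V} {k : ℕ} (hH : IsDegenerate H k) :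
    H.Colorable (k + 1) := by
  refine nonempty_hom_of_forall_finite_subgraph_hom fun H' hfin => Classical.choice ?_
  obtain ⟨c, hc⟩ := hH.exists_coloring_finset hfin.toFinset
  exact ⟨⟨fun v => c v, fun {v w} hvw =>
    hc v (hfin.mem_toFinset.2 v.2) w (hfin.mem_toFinset.2 w.2) (H'.adj_sub hvw)⟩⟩

/-! ### Forests -/

theorem isAcyclic_of_unique_upper_neighbor {α : Type*} [LinearOrder α] {L : SimpleGraph V}
    (r : V → α) (hne : ∀ a b, L.Adj a b → r a ≠ r b)
    (hunique : ∀ a b c, L.Adj a b → L.Adj a c → r a < r b → r a < r c → b = c) :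
    L.IsAcyclic := by
  classical
  intro v p hp
  obtain ⟨a, ha, hmin⟩ := p.support.toFinset.exists_min_image r ⟨v, by simp⟩
  simp only [List.mem_toFinset] at ha hmin
  set q := p.rotate a ha
  have hq : q.IsCycle := (Walk.isCycle_rotate ha).2 hp
  have hlt : ∀ b ∈ q.support, L.Adj a b → r a < r b := fun b hb hab =>
    (hmin b ((Walk.mem_support_rotate_iff p a ha).1 hb)).lt_of_ne (hne a b hab)
  have hsnd : L.Adj a q.snd := q.adj_snd hq.not_nil
  have hpen : L.Adj a q.penultimate := (q.adj_penultimate hq.not_nil).symm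
  exact hq.snd_ne_penultimate <| hunique a _ _ hsnd hpen
    (hlt _ (q.getVert_mem_support _) hsnd) (hlt _ (q.getVert_mem_support _) hpen)

theorem card_edgeFinset_lt_card_of_isAcyclic [Fintype V] [Nonempty V] {L : SimpleGraph V}
    [Fintype L.edgeSet] (hL : L.IsAcyclic) : L.edgeFinset.card < Fintype.card V := by
  classical
  obtain ⟨T, hLT, -, hT⟩ := connected_top.exists_isTree_le_of_le_of_isAcyclic le_top hL
  calc L.edgeFinset.card ≤ T.edgeFinset.card := Finset.card_le_card (edgeFinset_mono hLT)
    _ < Fintype.card V := by rw [← hT.card_edgeFinset]; exact Nat.lt_succ_self _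

open scoped Classical in
theorem sum_card_filter_adj_lt_of_isAcyclic {L : SimpleGraph V} (hL : L.IsAcyclic) {U : Finset V}
    (hU : U.Nonempty) : ∑ v ∈ U, (U.filter (L.Adj v)).card < 2 * U.card := by
  have : Nonempty U := hU.coe_sort
  have hdegree : ∀ v : U, (L.induce (U : Set V)).degree v = (U.filter (L.Adj v)).card := by
    intro v
    rw [← card_neighborFinset_eq_degree, ← Finset.card_map (Function.Embedding.subtype _)]
    congr 1
    ext w
    simp [and_comm]
  calc ∑ v ∈ U, (U.filter (L.Adj v)).card
      = ∑ v : U, (L.induce (U : Set V)).degree v := by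
        simp only [hdegree]
        exact (Finset.sum_coe_sort U fun v => (U.filter (L.Adj v)).card).symm
    _ = 2 * (L.induce (U : Set V)).edgeFinset.card := sum_degrees_eq_twice_card_edges _
    _ < 2 * U.card := by
        have hcard := card_edgeFinset_lt_card_of_isAcyclic (hL.induce (U : Set V))
        exact Nat.mul_lt_mul_of_pos_left (hcard.trans_eq (Fintype.card_coe U)) two_pos

/-! ### The contact graph of a set of edges -/

/-- The graph on the set `F` in which two distinct edges are adjacent when an edge of `L` joins an
endpoint of one to an endpoint of the other. For a matching `F`, the sets of pairwise non-adjacent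
vertices of `contactGraph G F` are the induced matchings of `G` contained in `F`. -/
def contactGraph (L : SimpleGraph V) (F : Set (Sym2 V)) : SimpleGraph F where
  Adj e f := e ≠ f ∧ ∃ a ∈ e.1, ∃ b ∈ f.1, L.Adj a b
  symm := ⟨fun _ _ ⟨hne, a, ha, b, hb, hab⟩ => ⟨hne.symm, b, hb, a, ha, hab.symm⟩⟩
  loopless := ⟨fun _ h => h.1 rfl⟩

section Contact

variable {F : Set (Sym2 V)}

open scoped Classical in
/-- The finite set of endpoints of a finite set of edges taken from `F`. -/
noncomputable def endpoints (S : Finset F) : Finset V :=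
  S.biUnion fun e => e.1.toFinset

theorem mem_endpoints {S : Finset F} {v : V} : v ∈ endpoints S ↔ ∃ e ∈ S, v ∈ e.1 := by
  simp [endpoints]

theorem card_endpoints_le (S : Finset F) : (endpoints S).card ≤ S.card * 2 := by
  classical
  refine Finset.card_biUnion_le_card_mul _ _ _ fun e _ => ?_
  rw [Sym2.card_toFinset]
  split_ifs <;> simp

open scoped Classical in
theorem card_filter_contactGraph_adj_le (hF : F.PairwiseDisjoint ((↑) : Sym2 V → Set V))
    (L : SimpleGraph V) (S : Finset F) (e : F) :
    (S.filter ((contactGraph L F).Adj e)).card ≤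
      ∑ v ∈ e.1.toFinset, ((endpoints S).filter (L.Adj v)).card := by
  refine le_trans ?_ Finset.card_biUnion_le
  refine Finset.card_le_card_of_forall_subsingleton (fun f w => w ∈ f.1) ?_ ?_
  · intro f hf
    obtain ⟨hfS, -, a, ha, b, hb, hab⟩ := Finset.mem_filter.1 hf
    refine ⟨b, Finset.mem_biUnion.2 ⟨a, Sym2.mem_toFinset.2 ha, ?_⟩, hb⟩
    exact Finset.mem_filter.2 ⟨mem_endpoints.2 ⟨f, hfS, hb⟩, hab⟩
  · rintro w - f ⟨-, hwf⟩ g ⟨-, hwg⟩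
    exact Subtype.ext (hF.elim_set f.2 g.2 w hwf hwg)

open scoped Classical in
theorem sum_endpoints (hF : F.PairwiseDisjoint ((↑) : Sym2 V → Set V))
    {A : Type*} [AddCommMonoid A] (S : Finset F) (d : V → A) :
    ∑ v ∈ endpoints S, d v = ∑ e ∈ S, ∑ v ∈ e.1.toFinset, d v := by
  refine Finset.sum_biUnion fun e _ f _ hef => Finset.disjoint_left.2 fun v hve hvf => hef ?_
  exact Subtype.ext (hF.elim_set e.2 f.2 v (Sym2.mem_toFinset.1 hve) (Sym2.mem_toFinset.1 hvf))

theorem isDegenerate_contactGraph (hF : F.PairwiseDisjoint ((↑) : Sym2 V → Set V))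
    {L : SimpleGraph V} (hL : L.IsAcyclic) :
    IsDegenerate (contactGraph L F) 3 := by
  classical
  intro S hS
  have hU : (endpoints S).Nonempty := by
    obtain ⟨e, he⟩ := hS
    exact ⟨_, mem_endpoints.2 ⟨e, he, e.1.out_fst_mem⟩⟩
  obtain ⟨e, heS, he⟩ : ∃ e ∈ S,
      ∑ v ∈ e.1.toFinset, ((endpoints S).filter (L.Adj v)).card < 4 := by
    apply Finset.exists_lt_of_sum_lt
    calc ∑ e ∈ S, ∑ v ∈ e.1.toFinset, ((endpoints S).filter (L.Adj v)).card
        = ∑ v ∈ endpoints S, ((endpoints S).filter (L.Adj v)).card := (sum_endpoints hF S _).symm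
      _ < 2 * (endpoints S).card := sum_card_filter_adj_lt_of_isAcyclic hL hU
      _ ≤ 2 * (S.card * 2) := Nat.mul_le_mul_left 2 (card_endpoints_le S)
      _ = ∑ _e ∈ S, 4 := by rw [Finset.sum_const, smul_eq_mul]; ring
  exact ⟨e, heS, Nat.le_of_lt_succ ((card_filter_contactGraph_adj_le hF L S e).trans_lt he)⟩

theorem exists_isInducedMatching_partition (hF : F.PairwiseDisjoint ((↑) : Sym2 V → Set V))
    {G : SimpleGraph V} (hFG : F ⊆ G.edgeSet) {n : ℕ} (hcol : (contactGraph G F).Colorable n) :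
    ∃ M : Fin n → Set (Sym2 V),
      (∀ c, IsInducedMatching G (M c)) ∧
      (Pairwise fun c c' => Disjoint (M c) (M c')) ∧ (⋃ c, M c) = F := by
  obtain ⟨C⟩ := hcol
  refine ⟨fun c => Subtype.val '' C.colorClass c, fun c => ⟨?_, ?_⟩, fun c c' hcc' => ?_, ?_⟩
  · rintro _ ⟨e, -, rfl⟩
    exact hFG e.2
  · rintro _ ⟨e, rfl, rfl⟩ _ ⟨f, hfe, rfl⟩ hne a ha b hb
    refine ⟨?_, fun hab => ?_⟩
    · rintro rfl
      exact hne (hF.elim_set e.2 f.2 a ha hb)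
    · exact C.valid (v := e) (w := f) ⟨fun h => hne (congrArg _ h), a, ha, b, hb, hab⟩ hfe.symm
  · refine (Set.disjoint_image_iff Subtype.val_injective).2 (Set.disjoint_left.2 ?_)
    exact fun e hc hc' => hcc' (hc.symm.trans hc')
  · ext e
    simp [Coloring.colorClass]

end Contact

/-! ### Disjoint paths form a forest -/

/-- The graph on all of `V` whose edges are those of the walks `P i`, that is, `E(𝒫)`. -/
def walksGraph {ι : Type*} {G : SimpleGraph V} (P : ι → PathPkg G) : SimpleGraph V :=
  fromEdgeSet (⋃ i, pkgEdges (P i))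

section Walks

variable {ι : Type*} {G : SimpleGraph V} {P : ι → PathPkg G}

theorem edgeSet_walksGraph : (walksGraph P).edgeSet = ⋃ i, pkgEdges (P i) := by
  rw [walksGraph, edgeSet_fromEdgeSet, sdiff_eq_left, Set.disjoint_left]
  intro e he
  obtain ⟨i, hi⟩ := Set.mem_iUnion.1 he
  exact G.not_isDiag_of_mem_edgeSet ((P i).2.2.edges_subset_edgeSet hi)

theorem walksGraph_adj_iff {a b : V} :
    (walksGraph P).Adj a b ↔ ∃ i, ∃ k < (P i).2.2.length,
      s((P i).2.2.getVert k, (P i).2.2.getVert (k + 1)) = s(a, b) := by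
  rw [← mem_edgeSet, edgeSet_walksGraph, Set.mem_iUnion]
  exact exists_congr fun i => (P i).2.2.mk_mem_edges_iff_exists

theorem injective_getVert_of_pairwise_pkgDisjoint (hpath : ∀ i, (P i).2.2.IsPath)
    (hdisj : Pairwise fun i j => PkgDisjoint (P i) (P j)) :
    Function.Injective fun x : Σ i, Fin ((P i).2.2.length + 1) => (P x.1).2.2.getVert x.2 := by
  rintro ⟨i, k⟩ ⟨j, l⟩ (hkl : (P i).2.2.getVert k = (P j).2.2.getVert l)
  obtain rfl : i = j := by
    by_contra hij
    refine hdisj hij _ ((P i).2.2.getVert_mem_support k) ?_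
    rw [hkl]
    exact (P j).2.2.getVert_mem_support l
  have : (k : ℕ) = l := (hpath i).getVert_injOn k.is_le l.is_le hkl
  rw [Fin.ext this]

theorem isAcyclic_walksGraph (hpath : ∀ i, (P i).2.2.IsPath)
    (hdisj : Pairwise fun i j => PkgDisjoint (P i) (P j)) :
    (walksGraph P).IsAcyclic := by
  have hinj := injective_getVert_of_pairwise_pkgDisjoint hpath hdisj
  let position : V → ℕ := Function.extend
    (fun x : Σ i, Fin ((P i).2.2.length + 1) => (P x.1).2.2.getVert x.2) (fun x => x.2) 0
  have position_getVert : ∀ i, ∀ k ≤ (P i).2.2.length, position ((P i).2.2.getVert k) = k :=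
    fun i k hk => hinj.extend_apply _ _ ⟨i, k, Nat.lt_succ_of_le hk⟩
  have exists_of_lt : ∀ a b, (walksGraph P).Adj a b → position a < position b →
      ∃ i, ∃ k < (P i).2.2.length, (P i).2.2.getVert k = a ∧ (P i).2.2.getVert (k + 1) = b := by
    intro a b hab hlt
    obtain ⟨i, k, hk, hkab⟩ := walksGraph_adj_iff.1 hab
    obtain h | ⟨rfl, rfl⟩ := Sym2.eq_iff.1 hkab
    · exact ⟨i, k, hk, h⟩
    · rw [position_getVert i k hk.le, position_getVert i (k + 1) hk] at hlt
      omega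
  refine isAcyclic_of_unique_upper_neighbor position (fun a b hab => ?_)
    fun a b c hab hac hltb hltc => ?_
  · obtain ⟨i, k, hk, hkab⟩ := walksGraph_adj_iff.1 hab
    have hsucc := position_getVert i (k + 1) hk
    have hself := position_getVert i k hk.le
    obtain ⟨rfl, rfl⟩ | ⟨rfl, rfl⟩ := Sym2.eq_iff.1 hkab <;> omega
  · obtain ⟨i, k, hk, rfl, rfl⟩ := exists_of_lt a b hab hltb
    obtain ⟨j, l, hl, hlk, rfl⟩ := exists_of_lt _ c hac hltc
    obtain ⟨rfl, hlk'⟩ := Sigma.mk.inj (@hinj ⟨j, l, by omega⟩ ⟨i, k, by omega⟩ hlk)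
    obtain rfl : l = k := congrArg Fin.val (eq_of_heq hlk')
    rfl

end Walks

/-! ### Partition into induced matchings -/

theorem statement_6_general (G L : SimpleGraph V) (hL : L.IsAcyclic) (X : Set V)
    (hinc : ∀ v ∈ X, Set.Subsingleton {e : Sym2 V | e ∈ G.edgeSet ∧ v ∈ e ∧ e ∉ L.edgeSet}) :
    ∃ M : Fin 4 → Set (Sym2 V),
      (∀ c, IsInducedMatching G (M c)) ∧
      (Pairwise fun c c' => Disjoint (M c) (M c')) ∧
      (⋃ c, M c) = {e | e ∈ G.edgeSet ∧ ∀ v, v ∈ e → v ∈ X} \ L.edgeSet := by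
  set F : Set (Sym2 V) := {e | e ∈ G.edgeSet ∧ ∀ v, v ∈ e → v ∈ X} \ L.edgeSet
  have eq_of_mem : ∀ e ∈ F, ∀ v ∈ e, ∀ f ∈ G.edgeSet, v ∈ f → f ∉ L.edgeSet → e = f :=
    fun e he v hve f hf hvf hfL => hinc v (he.1.2 v hve) ⟨he.1.1, hve, he.2⟩ ⟨hf, hvf, hfL⟩
  have hF : F.PairwiseDisjoint ((↑) : Sym2 V → Set V) := fun e he f hf hne =>
    Set.disjoint_left.2 fun v hve hvf => hne (eq_of_mem e he v hve f hf.1.1 hvf hf.2)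
  have hcontact : contactGraph G F ≤ contactGraph L F := by
    rintro e f ⟨hne, a, ha, b, hb, hab⟩
    refine ⟨hne, a, ha, b, hb, by_contra fun habL => hne (Subtype.ext ?_)⟩
    exact (eq_of_mem e e.2 a ha s(a, b) hab (Sym2.mem_mk_left a b) habL).trans
      (eq_of_mem f f.2 b hb s(a, b) hab (Sym2.mem_mk_right a b) habL).symm
  exact exists_isInducedMatching_partition hF (fun e he => he.1.1)
    ((isDegenerate_contactGraph hF hL).colorable.mono_left hcontact)

theorem statement_6 {ι : Type*} (G : SimpleGraph V) (P : ι → PathPkg G)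
    (hpath : ∀ i, (P i).2.2.IsPath)
    (hdisj : Pairwise fun i j => PkgDisjoint (P i) (P j))
    (hinc : ∀ v, v ∈ (⋃ i, pkgSupport (P i)) →
      Set.Subsingleton {e : Sym2 V | e ∈ G.edgeSet ∧ v ∈ e ∧ e ∉ ⋃ i, pkgEdges (P i)}) :
    ∃ M : Fin 4 → Set (Sym2 V),
      (∀ c, IsInducedMatching G (M c)) ∧
      (Pairwise fun c c' => Disjoint (M c) (M c')) ∧
      (⋃ c, M c) =
        {e | e ∈ G.edgeSet ∧ ∀ v, v ∈ e → v ∈ ⋃ i, pkgSupport (P i)} \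
          (⋃ i, pkgEdges (P i)) := by
  simp only [← edgeSet_walksGraph] at hinc ⊢
  exact statement_6_general G (walksGraph P) (isAcyclic_walksGraph hpath hdisj) _ hinc
end

section
/- Let G be a simple graph and let X, Y ⊆ V(G). If there exists a collection 𝒫 of five pairwise disjoint X-Y-paths in G such that every vertex of V(𝒫) is incident to at most one edge of E(G) \ E(𝒫), then G contains two pairwise non-adjacent X-Y-paths. -/
open SimpleGraph

universe u

variable {V : Type u}

/-!
View the five paths as *strands* directed towards `Y`, whose vertices are incident to at most one
further edge each, a *chord*. We look for two non-adjacent routes to `Y` starting at the first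
vertices (the *heads*) of two strands, by induction on the total length of the strands.

* A head without a chord can be deleted: a route through it just continues along its strand.
* If two heads are adjacent, both are deleted. A route arriving at one of them may continue on
  either strand.
* Otherwise the chords at the heads lead from strand to strand, and following them closes up in a
  cyclic permutation of strands. If one of these chords skips a vertex, rerouting the strands along
  the chords yields a shorter strand system with the same heads.
* If no chord skips a vertex, the head of each strand of the cycle is joined to the second vertex
  of the next one. The first two vertices of these strands are deleted, and a route may either
  stay on its strand or move on to the next one.

When a route changes strands at a deleted edge, it leaves behind a neighbour on its old strand,
which the other route has to avoid; so besides the strands of the two routes we record these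
*marks*. The strands on which the routes can start are not determined in advance. Hence the
induction proves, for each class in a finite family of classes of such tasks, that one of its
tasks is solvable. For five strands there is a family for which this induction closes, a finite
statement that is checked by evaluation in the kernel.
-/

section

variable {ι : Type*} {G : SimpleGraph V} {Y : Set V} {s : ι → List V}

/-- The vertices lying on some strand of the family `s` of vertex lists. -/
def strandSet (s : ι → List V) : Set V := {v | ∃ i, v ∈ s i}

/-- `w` comes immediately after `v` on some strand of `s`. -/
def StrandSucc (s : ι → List V) (v w : V) : Prop :=
  ∃ (i : ι) (n : ℕ), (s i)[n]? = some v ∧ (s i)[n + 1]? = some w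

/-- An edge of `G` between two vertices of the strands that is not an edge of a strand. -/
structure IsChord (G : SimpleGraph V) (s : ι → List V) (v w : V) : Prop where
  left_mem : v ∈ strandSet s
  right_mem : w ∈ strandSet s
  adj : G.Adj v w
  not_succ : ¬ StrandSucc s v w
  not_pred : ¬ StrandSucc s w v

/-- A family `s` of disjoint paths of `G`, given by their vertex lists (the *strands*), each of
which ends in `Y` unless it is empty, and such that every vertex has at most one chord. -/
structure IsStrandSystem (G : SimpleGraph V) (Y : Set V) (s : ι → List V) : Prop where
  adj : ∀ {v w : V}, StrandSucc s v w → G.Adj v w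
  inj : ∀ {i j : ι} {m n : ℕ} {v : V}, (s i)[m]? = some v → (s j)[n]? = some v → i = j ∧ m = n
  last_mem : ∀ {i : ι} {n : ℕ} {v : V}, (s i)[n]? = some v → (s i)[n + 1]? = none → v ∈ Y
  chord_unique : ∀ {v w₁ w₂ : V}, IsChord G s v w₁ → IsChord G s v w₂ → w₁ = w₂

theorem mem_strandSet_iff {v : V} : v ∈ strandSet s ↔ ∃ (i : ι) (n : ℕ), (s i)[n]? = some v :=
  exists_congr fun _ => List.mem_iff_getElem?

theorem mem_strandSet {i : ι} {n : ℕ} {v : V} (h : (s i)[n]? = some v) : v ∈ strandSet s :=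
  mem_strandSet_iff.2 ⟨i, n, h⟩

theorem IsChord.symm {v w : V} (h : IsChord G s v w) : IsChord G s w v :=
  ⟨h.right_mem, h.left_mem, h.adj.symm, h.not_pred, h.not_succ⟩

theorem succ_or_succ_or_isChord {v w : V} (hv : v ∈ strandSet s) (hw : w ∈ strandSet s)
    (h : G.Adj v w) : StrandSucc s v w ∨ StrandSucc s w v ∨ IsChord G s v w := by
  by_cases hvw : StrandSucc s v w
  · exact .inl hvw
  by_cases hwv : StrandSucc s w v
  · exact .inr (.inl hwv)
  · exact .inr (.inr ⟨hv, hw, h, hvw, hwv⟩)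

namespace IsStrandSystem

theorem getElem?_succ (hs : IsStrandSystem G Y s) {i : ι} {n : ℕ} {v w : V}
    (hv : (s i)[n]? = some v) (h : StrandSucc s v w) : (s i)[n + 1]? = some w := by
  obtain ⟨j, m, hm, hw⟩ := h
  obtain ⟨rfl, rfl⟩ := hs.inj hv hm
  exact hw

theorem exists_pred (hs : IsStrandSystem G Y s) {i : ι} {n : ℕ} {v w : V}
    (hv : (s i)[n]? = some v) (h : StrandSucc s w v) : ∃ m, n = m + 1 ∧ (s i)[m]? = some w := by
  obtain ⟨j, m, hw, hm⟩ := h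
  obtain ⟨rfl, rfl⟩ := hs.inj hv hm
  exact ⟨m, rfl, hw⟩

theorem not_succ_head (hs : IsStrandSystem G Y s) {i : ι} {x v : V} (hx : (s i)[0]? = some x) :
    ¬ StrandSucc s v x := by
  intro h
  obtain ⟨m, hm, -⟩ := hs.exists_pred hx h
  omega

theorem head_adj (hs : IsStrandSystem G Y s) {i : ι} {x w : V} (hx : (s i)[0]? = some x)
    (hw : w ∈ strandSet s) (h : G.Adj x w) : (s i)[1]? = some w ∨ IsChord G s x w := by
  rcases succ_or_succ_or_isChord (mem_strandSet hx) hw h with hxw | hwx | hc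
  · exact .inl (hs.getElem?_succ hx hxw)
  · exact (hs.not_succ_head hx hwx).elim
  · exact .inr hc

theorem comp_perm (hs : IsStrandSystem G Y s) (f : Equiv.Perm ι) :
    IsStrandSystem G Y (s ∘ f) := by
  have succ_iff {v w : V} : StrandSucc (s ∘ f) v w ↔ StrandSucc s v w :=
    f.surjective.exists (p := fun i => ∃ n, (s i)[n]? = some v ∧ (s i)[n + 1]? = some w) |>.symm
  have mem_iff {v : V} : v ∈ strandSet (s ∘ f) ↔ v ∈ strandSet s :=
    f.surjective.exists (p := fun i => v ∈ s i) |>.symm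
  have chord {v w : V} (h : IsChord G (s ∘ f) v w) : IsChord G s v w :=
    ⟨mem_iff.1 h.left_mem, mem_iff.1 h.right_mem, h.adj, mt succ_iff.2 h.not_succ,
      mt succ_iff.2 h.not_pred⟩
  exact {
    adj := fun h => hs.adj (succ_iff.1 h)
    inj := fun h h' => (hs.inj h h').imp_left fun e => f.injective e
    last_mem := hs.last_mem
    chord_unique := fun h h' => hs.chord_unique (chord h) (chord h') }

end IsStrandSystem

/-- The family obtained from `s` by deleting the first `n c` vertices of each strand `c`. -/
def peel (s : ι → List V) (n : ι → ℕ) (c : ι) : List V := (s c).drop (n c)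

theorem getElem?_peel {n : ι → ℕ} {c : ι} {m : ℕ} : (peel s n c)[m]? = (s c)[n c + m]? :=
  List.getElem?_drop

theorem strandSet_peel_subset {n : ι → ℕ} : strandSet (peel s n) ⊆ strandSet s :=
  fun _ ⟨c, hc⟩ => ⟨c, List.mem_of_mem_drop hc⟩

namespace IsStrandSystem

theorem notMem_strandSet_peel (hs : IsStrandSystem G Y s) {n : ι → ℕ} {c : ι} {m : ℕ} {v : V}
    (hv : (s c)[m]? = some v) (hm : m < n c) : v ∉ strandSet (peel s n) := by
  intro h
  obtain ⟨d, k, hk⟩ := mem_strandSet_iff.1 h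
  rw [getElem?_peel] at hk
  obtain ⟨rfl, rfl⟩ := hs.inj hv hk
  omega

protected theorem peel (hs : IsStrandSystem G Y s) (n : ι → ℕ) :
    IsStrandSystem G Y (peel s n) := by
  have succ {v w : V} (h : StrandSucc (peel s n) v w) : StrandSucc s v w := by
    obtain ⟨i, m, hv, hw⟩ := h
    rw [getElem?_peel] at hv hw
    exact ⟨i, n i + m, hv, hw⟩
  have succ_peel {v w : V} (hv : v ∈ strandSet (peel s n)) (h : StrandSucc s v w) :
      StrandSucc (peel s n) v w := by
    obtain ⟨i, m, hm⟩ := mem_strandSet_iff.1 hv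
    refine ⟨i, m, hm, ?_⟩
    rw [getElem?_peel] at hm ⊢
    exact hs.getElem?_succ hm h
  have chord {v w : V} (h : IsChord G (peel s n) v w) : IsChord G s v w :=
    ⟨strandSet_peel_subset h.left_mem, strandSet_peel_subset h.right_mem, h.adj,
      mt (succ_peel h.left_mem) h.not_succ, mt (succ_peel h.right_mem) h.not_pred⟩
  refine ⟨fun h => hs.adj (succ h), fun hi hj => ?_, fun hv hnone => ?_,
    fun h h' => hs.chord_unique (chord h) (chord h')⟩
  · rw [getElem?_peel] at hi hj
    obtain ⟨rfl, h⟩ := hs.inj hi hj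
    exact ⟨rfl, Nat.add_left_cancel h⟩
  · rw [getElem?_peel] at hv hnone
    exact hs.last_mem hv hnone

end IsStrandSystem

section Relinking

/-- The family obtained by following each strand `c` from its head directly to the vertex at
position `k c` of strand `g c`, and then the rest of that strand. -/
def relink (s : ι → List V) (g : Equiv.Perm ι) (k : ι → ℕ) (c : ι) : List V :=
  (s c).take 1 ++ (s (g c)).drop (k c)

/-- `s` has a chord from the head of strand `c` to the vertex at position `m` of strand `d`. -/
def HeadChord (G : SimpleGraph V) (s : ι → List V) (c d : ι) (m : ℕ) : Prop :=
  ∃ x p, (s c)[0]? = some x ∧ (s d)[m]? = some p ∧ IsChord G s x p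

/-- The data for relinking along chords: each strand `c` is either left alone (encoded by
`g c = c` and `k c = 1`) or its head has a chord to the vertex at position `k c` of `g c`. -/
structure IsLinkage (G : SimpleGraph V) (s : ι → List V) (g : Equiv.Perm ι) (k : ι → ℕ) :
    Prop where
  pos : ∀ c, 0 < k c
  fixed_or_chord : ∀ c, (g c = c ∧ k c = 1) ∨ HeadChord G s c (g c) (k c)

variable {g : Equiv.Perm ι} {k : ι → ℕ}

namespace IsLinkage

theorem getElem?_relink_zero (hl : IsLinkage G s g k) (c : ι) :
    (relink s g k c)[0]? = (s c)[0]? := by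
  rcases hl.fixed_or_chord c with ⟨hg, hk⟩ | ⟨x, p, hx, -⟩
  · cases h : s c <;> simp [relink, hg, hk, h]
  · cases h : s c <;> simp_all [relink]

theorem getElem?_relink_succ (hl : IsLinkage G s g k) (c : ι) (n : ℕ) :
    (relink s g k c)[n + 1]? = (s (g c))[k c + n]? := by
  rcases hl.fixed_or_chord c with ⟨hg, hk⟩ | ⟨x, p, hx, -⟩
  · cases h : s c <;> simp [relink, hg, hk, h, add_comm]
  · cases h : s c <;> simp_all [relink]

theorem strandSet_relink_subset : strandSet (relink s g k) ⊆ strandSet s := by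
  rintro v ⟨c, hc⟩
  rcases List.mem_append.1 hc with h | h
  · exact ⟨c, List.mem_of_mem_take h⟩
  · exact ⟨g c, List.mem_of_mem_drop h⟩

theorem succ_relink_zero (hl : IsLinkage G s g k) {c : ι} {x p : V} (hx : (s c)[0]? = some x)
    (hp : (s (g c))[k c]? = some p) : StrandSucc (relink s g k) x p :=
  ⟨c, 0, by rw [hl.getElem?_relink_zero, hx], by rw [hl.getElem?_relink_succ]; exact hp⟩

theorem exists_apply_eq_of_second_mem_relink (hs : IsStrandSystem G Y s)
    (hl : IsLinkage G s g k) {i : ι} {w : V} (hw : (s i)[1]? = some w)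
    (hmem : w ∈ strandSet (relink s g k)) : ∃ c, g c = i ∧ k c = 1 := by
  obtain ⟨c, n, hn⟩ := mem_strandSet_iff.1 hmem
  cases n with
  | zero =>
    rw [hl.getElem?_relink_zero] at hn
    have := (hs.inj hw hn).2
    omega
  | succ n =>
    rw [hl.getElem?_relink_succ] at hn
    obtain ⟨rfl, h⟩ := hs.inj hw hn
    have := hl.pos c
    exact ⟨c, rfl, by omega⟩

theorem succ_relink_or_head (hs : IsStrandSystem G Y s) (hl : IsLinkage G s g k) {v w : V}
    (hv : v ∈ strandSet (relink s g k)) (h : StrandSucc s v w) :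
    StrandSucc (relink s g k) v w ∨ ∃ i, (s i)[0]? = some v := by
  obtain ⟨c, n, hn⟩ := mem_strandSet_iff.1 hv
  cases n with
  | zero => exact .inr ⟨c, by rwa [hl.getElem?_relink_zero] at hn⟩
  | succ n =>
    refine .inl ⟨c, n + 1, hn, ?_⟩
    rw [hl.getElem?_relink_succ] at hn ⊢
    exact hs.getElem?_succ hn h

theorem exists_chords_of_lost_succ (hs : IsStrandSystem G Y s) (hl : IsLinkage G s g k) {v w : V}
    (hv : v ∈ strandSet (relink s g k)) (hw : w ∈ strandSet (relink s g k))
    (h : StrandSucc s v w) (h' : ¬ StrandSucc (relink s g k) v w) :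
    (∃ i, (s i)[0]? = some v) ∧ (∃ p, IsChord G s v p ∧ StrandSucc (relink s g k) v p) ∧
      ∃ x, IsChord G s w x ∧ StrandSucc (relink s g k) x w := by
  obtain ⟨i, hi⟩ := (succ_relink_or_head hs hl hv h).resolve_left h'
  have hiw := hs.getElem?_succ hi h
  have fixed_absurd (hgi : g i = i) (hki : k i = 1) : False :=
    h' (hl.succ_relink_zero hi (by rw [hgi, hki]; exact hiw))
  refine ⟨⟨i, hi⟩, ?_, ?_⟩
  · rcases hl.fixed_or_chord i with ⟨hgi, hki⟩ | ⟨x, p, hx, hp, hc⟩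
    · exact (fixed_absurd hgi hki).elim
    · obtain rfl : v = x := by simpa [hi] using hx
      exact ⟨p, hc, hl.succ_relink_zero hx hp⟩
  · obtain ⟨c, rfl, hkc⟩ := exists_apply_eq_of_second_mem_relink hs hl hiw hw
    rcases hl.fixed_or_chord c with ⟨hgc, -⟩ | ⟨x, p, hx, hp, hc⟩
    · rw [hgc] at fixed_absurd
      exact (fixed_absurd hgc hkc).elim
    · obtain rfl : w = p := by simpa [hkc, hiw] using hp
      exact ⟨x, hc.symm, hl.succ_relink_zero hx hp⟩

theorem not_isChord_relink_of_isChord (hs : IsStrandSystem G Y s) (hl : IsLinkage G s g k)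
    {v w w' : V} (h : IsChord G (relink s g k) v w) (hsucc : StrandSucc s v w ∨ StrandSucc s w v)
    (hc : IsChord G s v w') : ¬ IsChord G (relink s g k) v w' := by
  intro h'
  rcases hsucc with hvw | hwv
  · obtain ⟨-, ⟨p, hp, hvp⟩, -⟩ :=
      exists_chords_of_lost_succ hs hl h.left_mem h.right_mem hvw h.not_succ
    exact h'.not_succ (hs.chord_unique hc hp ▸ hvp)
  · obtain ⟨-, -, x, hx, hxv⟩ :=
      exists_chords_of_lost_succ hs hl h.right_mem h.left_mem hwv h.not_pred
    exact h'.not_pred (hs.chord_unique hc hx ▸ hxv)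

theorem chord_unique_relink (hs : IsStrandSystem G Y s) (hl : IsLinkage G s g k) {v w₁ w₂ : V}
    (h₁ : IsChord G (relink s g k) v w₁) (h₂ : IsChord G (relink s g k) v w₂) : w₁ = w₂ := by
  have cases_of {w : V} (h : IsChord G (relink s g k) v w) :=
    succ_or_succ_or_isChord (strandSet_relink_subset h.left_mem)
      (strandSet_relink_subset h.right_mem) h.adj
  have head {w : V} (h : IsChord G (relink s g k) v w) (hvw : StrandSucc s v w) :
      ∃ i, (s i)[0]? = some v :=
    (exists_chords_of_lost_succ hs hl h.left_mem h.right_mem hvw h.not_succ).1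
  rcases cases_of h₁ with e₁ | e₁ | e₁ <;> rcases cases_of h₂ with e₂ | e₂ | e₂
  · obtain ⟨i, hi⟩ := head h₁ e₁
    exact Option.some.inj ((hs.getElem?_succ hi e₁).symm.trans (hs.getElem?_succ hi e₂))
  · obtain ⟨i, hi⟩ := head h₁ e₁
    exact (hs.not_succ_head hi e₂).elim
  · exact (not_isChord_relink_of_isChord hs hl h₁ (.inl e₁) e₂ h₂).elim
  · obtain ⟨i, hi⟩ := head h₂ e₂
    exact (hs.not_succ_head hi e₁).elim
  · obtain ⟨i, n, hi⟩ := mem_strandSet_iff.1 (strandSet_relink_subset h₁.left_mem)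
    obtain ⟨m, rfl, hm⟩ := hs.exists_pred hi e₁
    obtain ⟨m', hmm', hm'⟩ := hs.exists_pred hi e₂
    obtain rfl : m = m' := by omega
    exact Option.some.inj (hm.symm.trans hm')
  · exact (not_isChord_relink_of_isChord hs hl h₁ (.inr e₁) e₂ h₂).elim
  · exact (not_isChord_relink_of_isChord hs hl h₂ (.inl e₂) e₁ h₁).elim
  · exact (not_isChord_relink_of_isChord hs hl h₂ (.inr e₂) e₁ h₁).elim
  · exact hs.chord_unique e₁ e₂

theorem adj_relink (hs : IsStrandSystem G Y s) (hl : IsLinkage G s g k) {v w : V}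
    (h : StrandSucc (relink s g k) v w) : G.Adj v w := by
  obtain ⟨c, n, hv, hw⟩ := h
  rw [hl.getElem?_relink_succ] at hw
  cases n with
  | zero =>
    rw [hl.getElem?_relink_zero] at hv
    rcases hl.fixed_or_chord c with ⟨hg, hk⟩ | ⟨x, p, hx, hp, hc⟩
    · rw [hg, hk] at hw
      exact hs.adj ⟨c, 0, hv, hw⟩
    · obtain rfl : v = x := by simpa [hv] using hx
      obtain rfl : w = p := Option.some.inj (hw.symm.trans hp)
      exact hc.adj
  | succ n =>
    rw [hl.getElem?_relink_succ] at hv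
    exact hs.adj ⟨g c, k c + n, hv, hw⟩

theorem inj_relink (hs : IsStrandSystem G Y s) (hl : IsLinkage G s g k) {i j : ι} {m n : ℕ} {v : V}
    (hi : (relink s g k i)[m]? = some v) (hj : (relink s g k j)[n]? = some v) :
    i = j ∧ m = n := by
  have hik := hl.pos i
  have hjk := hl.pos j
  cases m <;> cases n <;>
    simp only [hl.getElem?_relink_zero, hl.getElem?_relink_succ] at hi hj <;>
    obtain ⟨hij, hmn⟩ := hs.inj hi hj
  · exact ⟨hij, rfl⟩
  · omega
  · omega
  · obtain rfl := g.injective hij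
    exact ⟨rfl, by omega⟩

theorem last_mem_relink (hs : IsStrandSystem G Y s) (hl : IsLinkage G s g k) {c : ι} {n : ℕ} {v : V}
    (hv : (relink s g k c)[n]? = some v) (hnone : (relink s g k c)[n + 1]? = none) : v ∈ Y := by
  rw [hl.getElem?_relink_succ] at hnone
  cases n with
  | zero =>
    rw [hl.getElem?_relink_zero] at hv
    rcases hl.fixed_or_chord c with ⟨hg, hk⟩ | ⟨x, p, -, hp, -⟩
    · rw [hg, hk] at hnone
      exact hs.last_mem hv hnone
    · simp [hp] at hnone
  | succ n =>
    rw [hl.getElem?_relink_succ] at hv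
    exact hs.last_mem hv hnone

theorem isStrandSystem_relink (hs : IsStrandSystem G Y s) (hl : IsLinkage G s g k) :
    IsStrandSystem G Y (relink s g k) :=
  ⟨hl.adj_relink hs, hl.inj_relink hs, hl.last_mem_relink hs, hl.chord_unique_relink hs⟩

theorem sum_length_relink_lt [Fintype ι] (hl : IsLinkage G s g k) {c₀ : ι} (hc₀ : 1 < k c₀) :
    ∑ c, (relink s g k c).length < ∑ c, (s c).length := by
  rw [← Equiv.sum_comp g fun c => (s c).length]
  have chord_length {c : ι} (h : HeadChord G s c (g c) (k c)) :
      (relink s g k c).length + k c = (s (g c)).length + 1 := by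
    obtain ⟨x, p, hx, hp, -⟩ := h
    have := (List.getElem?_eq_some_iff.1 hp).1
    have := (List.getElem?_eq_some_iff.1 hx).1
    simp only [relink, List.length_append, List.length_take, List.length_drop]
    omega
  have hpos := hl.pos
  refine Finset.sum_lt_sum (fun c _ => ?_) ⟨c₀, Finset.mem_univ _, ?_⟩
  · rcases hl.fixed_or_chord c with ⟨hg, hk⟩ | h
    · simp only [relink, hg, hk, List.take_append_drop, le_refl]
    · have := chord_length h
      have := hpos c
      omega
  · rcases hl.fixed_or_chord c₀ with ⟨-, hk⟩ | h
    · omega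
    · have := chord_length h
      omega

end IsLinkage

end Relinking

section Realization

/-- Some walk of `G` inside `A` leads from `x` to `Y`. -/
def Reaches (G : SimpleGraph V) (Y A : Set V) (x : V) : Prop :=
  ∃ y ∈ Y, ∃ p : G.Walk x y, ∀ v ∈ p.support, v ∈ A

namespace Reaches

variable {A B : Set V} {x z : V}

theorem start_mem (h : Reaches G Y A x) : x ∈ A :=
  let ⟨_, _, p, hp⟩ := h
  hp x p.start_mem_support

theorem of_mem (hA : x ∈ A) (hY : x ∈ Y) : Reaches G Y A x :=
  ⟨x, hY, .nil, by simpa using hA⟩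

theorem mono (h : Reaches G Y A x) (hAB : A ⊆ B) : Reaches G Y B x :=
  let ⟨y, hy, p, hp⟩ := h
  ⟨y, hy, p, fun v hv => hAB (hp v hv)⟩

theorem cons (h : Reaches G Y A z) (hx : x ∈ A) (hxz : G.Adj x z) : Reaches G Y A x := by
  obtain ⟨y, hy, p, hp⟩ := h
  refine ⟨y, hy, p.cons hxz, ?_⟩
  simpa using ⟨hx, hp⟩

end Reaches

/-- `A` and `B` are disjoint and no edge of `G` joins them. -/
def Anticomplete (G : SimpleGraph V) (A B : Set V) : Prop :=
  ∀ a ∈ A, ∀ b ∈ B, a ≠ b ∧ ¬ G.Adj a b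

theorem Anticomplete.symm {A B : Set V} (h : Anticomplete G A B) : Anticomplete G B A :=
  fun b hb a ha => ⟨(h a ha b hb).1.symm, fun hba => (h a ha b hb).2 hba.symm⟩

theorem Anticomplete.of_eq_empty {A B : Set V} (h : A = ∅ ∨ B = ∅) : Anticomplete G A B := by
  rcases h with rfl | rfl <;> simp [Anticomplete]

/-- `A` contains a walk to `Y` from the head of strand `a`, and the other route `B` avoids the
heads of the strands in `marks`. -/
structure IsRoute (G : SimpleGraph V) (Y : Set V) (s : ι → List V) (a : ι) (marks : List ι)
    (A B : Set V) : Prop where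
  subset : A ⊆ strandSet s
  reaches : ∀ x, (s a)[0]? = some x → Reaches G Y A x
  avoids : ∀ c ∈ marks, ∀ x, (s c)[0]? = some x → x ∉ B

/-- The task of finding two non-adjacent routes to `Y`, from the heads of the strands `fst` and
`snd`, when the second route may not use the heads of the strands in `fstMarks` (because they are
adjacent to an initial part of the first route) and vice versa for `sndMarks`. -/
structure Position (ι : Type*) where
  fst : ι
  snd : ι
  fstMarks : List ι
  sndMarks : List ι

namespace Position

/-- The same task with the two routes exchanged. -/
def swap (t : Position ι) : Position ι := ⟨t.snd, t.fst, t.sndMarks, t.fstMarks⟩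

/-- The task obtained by renaming the strands. -/
def map {κ : Type*} (f : ι → κ) (t : Position ι) : Position κ :=
  ⟨f t.fst, f t.snd, t.fstMarks.map f, t.sndMarks.map f⟩

/-- The routes start on different strands, and neither start is forbidden. -/
structure Proper (t : Position ι) : Prop where
  ne : t.fst ≠ t.snd
  fst_notMem : t.fst ∉ t.sndMarks
  snd_notMem : t.snd ∉ t.fstMarks

end Position

/-- The strand system `s` has two non-adjacent routes as required by `t`. -/
def Realizes (G : SimpleGraph V) (Y : Set V) (s : ι → List V) (t : Position ι) : Prop :=
  ∃ A B, Anticomplete G A B ∧ IsRoute G Y s t.fst t.fstMarks A B ∧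
    IsRoute G Y s t.snd t.sndMarks B A

namespace Realizes

variable {t : Position ι}

theorem of_swap (h : Realizes G Y s t.swap) : Realizes G Y s t :=
  let ⟨A, B, hAB, hA, hB⟩ := h
  ⟨B, A, hAB.symm, hB, hA⟩

theorem map {κ : Type*} {s : κ → List V} {f : ι → κ} (h : Realizes G Y (s ∘ f) t) :
    Realizes G Y s (t.map f) := by
  obtain ⟨A, B, hAB, hA, hB⟩ := h
  have route {a : ι} {marks : List ι} {A B : Set V} (h : IsRoute G Y (s ∘ f) a marks A B) :
      IsRoute G Y s (f a) (marks.map f) A B :=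
    ⟨fun v hv => (h.subset hv).imp' f fun _ hc => hc, h.reaches, by simpa using h.avoids⟩
  exact ⟨A, B, hAB, route hA, route hB⟩

theorem mono {s' : ι → List V} (h : Realizes G Y s' t) (hsub : strandSet s' ⊆ strandSet s)
    (hhead : ∀ c, (s' c)[0]? = (s c)[0]?) : Realizes G Y s t := by
  obtain ⟨A, B, hAB, hA, hB⟩ := h
  have route {a : ι} {marks : List ι} {A B : Set V} (h : IsRoute G Y s' a marks A B) :
      IsRoute G Y s a marks A B :=
    ⟨h.subset.trans hsub, by simpa only [hhead] using h.reaches,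
      by simpa only [hhead] using h.avoids⟩
  exact ⟨A, B, hAB, route hA, route hB⟩

theorem of_forall_eq_nil (hnil : ∀ i, s i = []) : Realizes G Y s t :=
  have route (a : ι) (marks : List ι) : IsRoute G Y s a marks ∅ ∅ :=
    ⟨Set.empty_subset _, by simp [hnil], by simp⟩
  ⟨∅, ∅, Anticomplete.of_eq_empty (.inl rfl), route _ _, route _ _⟩

end Realizes

/-- While the first `n c` vertices of each strand `c` are peeled off, a route can be extended
along the peeled vertices `P` so that it starts at the head of strand `a` instead of the head of
`a'`. It avoids the heads of the strands in `blocked`, and among the remaining vertices its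
neighbours are heads of strands in `marks` or the head of `a'`. -/
structure IsMove (G : SimpleGraph V) (Y : Set V) (s : ι → List V) (n : ι → ℕ) (a a' : ι)
    (blocked marks : List ι) (P : Set V) : Prop where
  subset : P ⊆ strandSet s \ strandSet (peel s n)
  reaches : ∀ A, (∀ x, (peel s n a')[0]? = some x → Reaches G Y A x) →
    ∀ x, (s a)[0]? = some x → Reaches G Y (P ∪ A) x
  adj : ∀ v ∈ P, ∀ w ∈ strandSet (peel s n), G.Adj v w →
    ∃ c, (c = a' ∨ c ∈ marks) ∧ (peel s n c)[0]? = some w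
  avoids : ∀ c ∈ blocked, ∀ x, (s c)[0]? = some x → x ∉ P

section Move

variable {n : ι → ℕ} {a a' : ι} {blocked marks marks' : List ι} {A B P Q : Set V}

theorem IsMove.idle (ha : n a = 0) : IsMove G Y s n a a blocked marks ∅ where
  subset := Set.empty_subset _
  reaches A hA x hx := by simpa using hA x (by rwa [getElem?_peel, ha])
  adj _ hv := hv.elim
  avoids _ _ _ _ hx := hx

theorem IsMove.anticomplete (hP : IsMove G Y s n a a' blocked marks P)
    (hA : IsRoute G Y (peel s n) a' marks A B) (hB : B ⊆ strandSet (peel s n))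
    (hAB : Anticomplete G A B) : Anticomplete G P B := by
  refine fun v hv w hw => ⟨?_, fun hvw => ?_⟩
  · rintro rfl
    exact (hP.subset hv).2 (hB hw)
  · obtain ⟨c, rfl | hc, hcw⟩ := hP.adj v hv w (hB hw) hvw
    · exact (hAB w (hA.reaches w hcw).start_mem w hw).1 rfl
    · exact hA.avoids c hc w hcw hw

theorem IsMove.isRoute (hs : IsStrandSystem G Y s) (hP : IsMove G Y s n a a' blocked marks' P)
    (hA : IsRoute G Y (peel s n) a' marks' A B) (hB : B ⊆ strandSet (peel s n))
    (hQ : ∀ c ∈ marks, ∀ x, (s c)[0]? = some x → x ∉ Q)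
    (hmarks : ∀ c ∈ marks, n c = 0 → c ∈ marks') :
    IsRoute G Y s a marks (P ∪ A) (Q ∪ B) where
  subset := Set.union_subset (hP.subset.trans Set.sdiff_subset)
    (hA.subset.trans strandSet_peel_subset)
  reaches := hP.reaches A hA.reaches
  avoids c hc x hx := by
    rintro (hxQ | hxB)
    · exact hQ c hc x hx hxQ
    by_cases hn : n c = 0
    · exact hA.avoids c (hmarks c hc hn) x (by rwa [getElem?_peel, hn]) hxB
    · exact hs.notMem_strandSet_peel hx (Nat.pos_of_ne_zero hn) (hB hxB)

theorem Realizes.of_peel (hs : IsStrandSystem G Y s) {t u : Position ι}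
    (hu : Realizes G Y (peel s n) u)
    (hP : IsMove G Y s n t.fst u.fst t.sndMarks u.fstMarks P)
    (hQ : IsMove G Y s n t.snd u.snd t.fstMarks u.sndMarks Q)
    (hPQ : Anticomplete G P Q)
    (hfst : ∀ c ∈ t.fstMarks, n c = 0 → c ∈ u.fstMarks)
    (hsnd : ∀ c ∈ t.sndMarks, n c = 0 → c ∈ u.sndMarks) : Realizes G Y s t := by
  obtain ⟨A, B, hAB, hA, hB⟩ := hu
  have hPB := hP.anticomplete hA hB.subset hAB
  have hQA := hQ.anticomplete hB hA.subset hAB.symm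
  refine ⟨P ∪ A, Q ∪ B, ?_, hP.isRoute hs hA hB.subset hQ.avoids hfst,
    hQ.isRoute hs hB hA.subset hP.avoids hsnd⟩
  rintro a (ha | ha) b (hb | hb)
  exacts [hPQ a ha b hb, hPB a ha b hb, hQA.symm a ha b hb, hAB a ha b hb]

end Move

theorem IsStrandSystem.reaches_last_peeled (hs : IsStrandSystem G Y s) {n : ι → ℕ} {c : ι} {m : ℕ}
    {v : V} (hv : (s c)[m]? = some v) (hn : n c = m + 1) {A : Set V}
    (hA : ∀ x, (peel s n c)[0]? = some x → Reaches G Y A x) : Reaches G Y (insert v A) v := by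
  rw [getElem?_peel, hn, add_zero] at hA
  rcases hw : (s c)[m + 1]? with _ | w
  · exact .of_mem (Set.mem_insert v A) (hs.last_mem hv hw)
  · exact ((hA w hw).mono (Set.subset_insert v A)).cons (Set.mem_insert v A)
      (hs.adj ⟨c, m, hv, hw⟩)

end Realization

section Steps

namespace IsStrandSystem

section FreeHead

variable {n : ι → ℕ} {i : ι} {x : V} {t : Position ι}

theorem isMove_head (hs : IsStrandSystem G Y s) (hn : n i = 1) (hx : (s i)[0]? = some x)
    (hfree : ∀ w ∈ strandSet (peel s n), ¬ IsChord G s x w) {blocked : List ι}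
    (hi : i ∉ blocked) (marks : List ι) : IsMove G Y s n i i blocked marks {x} where
  subset := by
    rintro _ rfl
    exact ⟨mem_strandSet hx, hs.notMem_strandSet_peel hx (by omega)⟩
  reaches A hA y hy := by
    obtain rfl : x = y := Option.some.inj (hx.symm.trans hy)
    exact hs.reaches_last_peeled hx hn hA
  adj := by
    rintro _ rfl w hw hxw
    refine ⟨i, .inl rfl, ?_⟩
    rw [getElem?_peel, hn]
    exact (hs.head_adj hx (strandSet_peel_subset hw) hxw).resolve_right (hfree w hw)
  avoids := by
    rintro c hc y hy rfl
    exact hi ((hs.inj hx hy).1 ▸ hc)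

theorem realizes_of_free_head [DecidableEq ι] (hs : IsStrandSystem G Y s) (ht : t.Proper)
    (hx : (s i)[0]? = some x) (hfree : ∀ w, ¬ IsChord G s x w)
    (h : Realizes G Y (peel s (Pi.single i 1)) t) : Realizes G Y s t := by
  have move (a : ι) (blocked marks : List ι) (ha : a ∉ blocked) :
      ∃ P, (a ≠ i → P = ∅) ∧ IsMove G Y s (Pi.single i 1) a a blocked marks P := by
    by_cases hai : a = i
    · subst hai
      exact ⟨{x}, fun h => (h rfl).elim,
        hs.isMove_head (Pi.single_eq_same a 1) hx (fun w _ => hfree w) ha marks⟩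
    · exact ⟨∅, fun _ => rfl, .idle (Pi.single_eq_of_ne hai 1)⟩
  obtain ⟨P, hP, hPmove⟩ := move t.fst t.sndMarks t.fstMarks ht.fst_notMem
  obtain ⟨Q, hQ, hQmove⟩ := move t.snd t.fstMarks t.sndMarks ht.snd_notMem
  have hPQ : P = ∅ ∨ Q = ∅ := by
    by_cases hfst : t.fst = i
    · exact .inr (hQ fun hsnd => ht.ne (hfst.trans hsnd.symm))
    · exact .inl (hP hfst)
  exact h.of_peel hs hPmove hQmove (.of_eq_empty hPQ) (fun _ hc _ => hc) fun _ hc _ => hc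

end FreeHead

end IsStrandSystem

section Heads

variable {f : Equiv.Perm ι}

/-- The heads of `c` and `f c` are adjacent for every strand `c` moved by `f`. -/
def HeadsCross (G : SimpleGraph V) (s : ι → List V) (f : Equiv.Perm ι) : Prop :=
  ∀ c, f c ≠ c → ∃ x y, (s c)[0]? = some x ∧ (s (f c))[0]? = some y ∧ G.Adj x y

/-- The head of `c` is adjacent to the second vertex of `f c` for every strand `c` moved by
`f`. -/
def HeadsCycle (G : SimpleGraph V) (s : ι → List V) (f : Equiv.Perm ι) : Prop :=
  ∀ c, f c ≠ c → ∃ x z, (s c)[0]? = some x ∧ (s (f c))[1]? = some z ∧ G.Adj x z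

/-- The vertices used by a route that leaves the head of strand `a` for the second vertex of
strand `a'`. -/
def cycleTrace (s : ι → List V) (a a' : ι) : Set V :=
  {v | (s a)[0]? = some v ∨ (s a')[1]? = some v}

theorem apply_ne_of_eq_or_eq_apply {c d : ι} (hc : f c ≠ c) (hd : d = c ∨ d = f c) : f d ≠ d := by
  rcases hd with rfl | rfl
  exacts [hc, f.injective.ne hc]

namespace IsStrandSystem

theorem isChord_of_adj_heads (hs : IsStrandSystem G Y s) {c d : ι} {x y : V}
    (hx : (s c)[0]? = some x) (hy : (s d)[0]? = some y) (hxy : G.Adj x y) : IsChord G s x y :=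
  ⟨mem_strandSet hx, mem_strandSet hy, hxy, hs.not_succ_head hy, hs.not_succ_head hx⟩

theorem headChord_of_headsCycle (hs : IsStrandSystem G Y s) (hf : HeadsCycle G s f) {c : ι}
    (hc : f c ≠ c) : HeadChord G s c (f c) 1 := by
  obtain ⟨x, z, hx, hz, hxz⟩ := hf c hc
  refine ⟨x, z, hx, hz, mem_strandSet hx, mem_strandSet hz, hxz, fun h => ?_,
    hs.not_succ_head hx⟩
  exact hc (hs.inj hz (hs.getElem?_succ hx h)).1

theorem adj_head_of_headsCycle (hs : IsStrandSystem G Y s) (hf : HeadsCycle G s f) {c : ι}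
    (hc : f c ≠ c) {x w : V} (hx : (s c)[0]? = some x) (hw : w ∈ strandSet s) (hxw : G.Adj x w) :
    ∃ d, (d = c ∨ d = f c) ∧ (s d)[1]? = some w := by
  obtain ⟨x', z, hx', hz, hchord⟩ := hs.headChord_of_headsCycle hf hc
  obtain rfl : x = x' := Option.some.inj (hx.symm.trans hx')
  rcases hs.head_adj hx hw hxw with h | h
  · exact ⟨c, .inl rfl, h⟩
  · exact ⟨f c, .inr rfl, hs.chord_unique h hchord ▸ hz⟩

theorem adj_second_of_headsCycle (hs : IsStrandSystem G Y s) (hf : HeadsCycle G s f) {c : ι}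
    (hc : f c ≠ c) {z w : V} (hz : (s c)[1]? = some z) (hw : w ∈ strandSet s) (hzw : G.Adj z w) :
    (s c)[2]? = some w ∨ ∃ d, f d ≠ d ∧ (s d)[0]? = some w := by
  obtain ⟨b, rfl⟩ := f.surjective c
  have hb : f b ≠ b := fun h => hc (congrArg f h)
  rcases succ_or_succ_or_isChord (mem_strandSet hz) hw hzw with h | h | h
  · exact .inl (hs.getElem?_succ hz h)
  · obtain ⟨m, hm, hmw⟩ := hs.exists_pred hz h
    obtain rfl : m = 0 := by omega
    exact .inr ⟨f b, hc, hmw⟩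
  · obtain ⟨x, z', hx, hz', hchord⟩ := hs.headChord_of_headsCycle hf hb
    obtain rfl : z = z' := Option.some.inj (hz.symm.trans hz')
    exact .inr ⟨b, hb, hs.chord_unique h hchord.symm ▸ hx⟩

theorem exists_adj_second (hs : IsStrandSystem G Y s) (hf : HeadsCycle G s f) {c d : ι}
    (hc : f c ≠ c) (hd : d = c ∨ d = f c) {x : V} (hx : (s c)[0]? = some x) :
    ∃ z, (s d)[1]? = some z ∧ G.Adj x z := by
  rcases hd with rfl | rfl
  · obtain ⟨b, rfl⟩ := f.surjective d
    obtain ⟨_, z, -, hz, -⟩ := hf b fun h => hc (congrArg f h)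
    exact ⟨z, hz, hs.adj ⟨f b, 0, hx, hz⟩⟩
  · obtain ⟨x', z, hx', hz, hxz⟩ := hf c hc
    obtain rfl : x = x' := Option.some.inj (hx.symm.trans hx')
    exact ⟨z, hz, hxz⟩

theorem head_not_adj_second (hs : IsStrandSystem G Y s) (hf : HeadsCycle G s f) {c d : ι}
    (hc : f c ≠ c) (hd : d ≠ c ∧ d ≠ f c) {x w : V} (hx : (s c)[0]? = some x)
    (hw : (s d)[1]? = some w) : x ≠ w ∧ ¬ G.Adj x w := by
  refine ⟨?_, fun hxw => ?_⟩
  · rintro rfl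
    exact absurd (hs.inj hx hw).2 (by omega)
  · obtain ⟨e, he, hew⟩ := hs.adj_head_of_headsCycle hf hc hx (mem_strandSet hw) hxw
    obtain rfl := (hs.inj hw hew).1
    exact he.elim hd.1 hd.2

theorem anticomplete_cycleTrace (hs : IsStrandSystem G Y s) (hf : HeadsCycle G s f)
    {a a' b b' : ι} (ha : f a ≠ a) (hb : f b ≠ b) (ha' : a' = a ∨ a' = f a) (hab : a ≠ b)
    (hba' : b' ≠ a ∧ b' ≠ f a) (hab' : a' ≠ b ∧ a' ≠ f b) :
    Anticomplete G (cycleTrace s a a') (cycleTrace s b b') := by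
  rintro v (hv | hv) w (hw | hw)
  · refine ⟨?_, fun hvw => ?_⟩
    · rintro rfl
      exact hab (hs.inj hv hw).1
    · obtain ⟨d, -, hd⟩ := hs.adj_head_of_headsCycle hf ha hv (mem_strandSet hw) hvw
      exact absurd (hs.inj hw hd).2 (by omega)
  · exact hs.head_not_adj_second hf ha hba' hv hw
  · exact (hs.head_not_adj_second hf hb hab' hw hv).imp Ne.symm (mt Adj.symm)
  · refine ⟨?_, fun hvw => ?_⟩
    · rintro rfl
      obtain rfl := (hs.inj hv hw).1
      exact ha'.elim hba'.1 hba'.2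
    · rcases hs.adj_second_of_headsCycle hf (apply_ne_of_eq_or_eq_apply ha ha') hv
        (mem_strandSet hw) hvw with hd | ⟨d, -, hd⟩
      · exact absurd (hs.inj hw hd).2 (by omega)
      · exact absurd (hs.inj hw hd).2 (by omega)

end IsStrandSystem

end Heads

namespace Position

variable (f : ι → ι) (t u : Position ι)

/-- Every mark on a strand fixed by `f` is kept. -/
def Keeps (marks marks' : List ι) : Prop := ∀ c ∈ marks, f c = c → c ∈ marks'

/-- A route may continue on its strand or, unless this is blocked, cross over to the strand `f a`,
thereby marking its old strand. -/
def CrossMove (a a' : ι) (blocked marks : List ι) : Prop :=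
  a' = a ∨ a' = f a ∧ a' ∉ blocked ∧ a ∈ marks

/-- `u` is a task to which `t` can be reduced by peeling off the heads of the strands moved by
`f` when, for each of these strands `c`, there is a chord between the heads of `c` and `f c`. -/
structure CrossStep : Prop where
  fst_move : CrossMove f t.fst u.fst t.sndMarks u.fstMarks
  snd_move : CrossMove f t.snd u.snd t.fstMarks u.sndMarks
  idle : f t.fst = t.fst ∨ f t.snd = t.snd
  fst_keeps : Keeps f t.fstMarks u.fstMarks
  snd_keeps : Keeps f t.sndMarks u.sndMarks

/-- `u` is a task to which `t` can be reduced by peeling off the first two vertices of the strands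
moved by `f` when, for each of these strands `c`, there is a chord from the head of `c` to the
second vertex of `f c`. -/
structure CycleStep : Prop where
  fst_move : u.fst = t.fst ∨ u.fst = f t.fst
  snd_move : u.snd = t.snd ∨ u.snd = f t.snd
  apart : f t.fst = t.fst ∨ f t.snd = t.snd ∨
    u.snd ≠ t.fst ∧ u.snd ≠ f t.fst ∧ u.fst ≠ t.snd ∧ u.fst ≠ f t.snd
  fst_keeps : Keeps f t.fstMarks u.fstMarks
  snd_keeps : Keeps f t.sndMarks u.sndMarks

end Position

section Soundness

open Position

variable [DecidableEq ι]

/-- The number of vertices peeled off each strand when `r` vertices are peeled off the strands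
moved by `f`. -/
def movedDepth (f : Equiv.Perm ι) (r : ℕ) (c : ι) : ℕ := if f c = c then 0 else r

variable {f : Equiv.Perm ι} {r : ℕ} {a a' c : ι} {t u : Position ι} {blocked marks : List ι}

theorem movedDepth_of_eq (h : f c = c) : movedDepth f r c = 0 := if_pos h

theorem movedDepth_of_ne (h : f c ≠ c) : movedDepth f r c = r := if_neg h

theorem apply_eq_of_movedDepth_eq_zero (hr : r ≠ 0) (h : movedDepth f r c = 0) : f c = c := by
  by_contra hc
  exact hr ((movedDepth_of_ne hc).symm.trans h)

namespace IsStrandSystem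

theorem isMove_cross (hs : IsStrandSystem G Y s) (hf : HeadsCross G s f) (ha : f a ≠ a)
    (hblocked : a ∉ blocked) (hmove : CrossMove f a a' blocked marks) :
    ∃ P, IsMove G Y s (movedDepth f 1) a a' blocked marks P := by
  obtain ⟨x, y, hx, hy, hxy⟩ := hf a ha
  have hfa : f (f a) ≠ f a := f.injective.ne ha
  have na : movedDepth f 1 a = 1 := movedDepth_of_ne ha
  have nfa : movedDepth f 1 (f a) = 1 := movedDepth_of_ne hfa
  have hchord := hs.isChord_of_adj_heads hx hy hxy
  have hx_peel := hs.notMem_strandSet_peel (n := movedDepth f 1) hx (by omega)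
  have hy_peel := hs.notMem_strandSet_peel (n := movedDepth f 1) hy (by omega)
  have hx_free : ∀ w ∈ strandSet (peel s (movedDepth f 1)), ¬ IsChord G s x w :=
    fun w hw h => hy_peel (hs.chord_unique h hchord ▸ hw)
  have hy_free : ∀ w ∈ strandSet (peel s (movedDepth f 1)), ¬ IsChord G s y w :=
    fun w hw h => hx_peel (hs.chord_unique h hchord.symm ▸ hw)
  rcases hmove with rfl | ⟨rfl, hfa_blocked, ha_marks⟩
  · exact ⟨{x}, hs.isMove_head na hx hx_free hblocked marks⟩
  have hstay := hs.isMove_head na hx hx_free hblocked marks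
  have hover := hs.isMove_head nfa hy hy_free hfa_blocked marks
  refine ⟨{x} ∪ {y}, Set.union_subset hstay.subset hover.subset, fun A hA z hz => ?_, ?_, ?_⟩
  · obtain rfl : x = z := Option.some.inj (hx.symm.trans hz)
    rw [Set.union_assoc]
    exact ((hover.reaches A hA y hy).mono Set.subset_union_right).cons (.inl rfl) hxy
  · rintro v (hv | hv) w hw hvw
    · obtain ⟨c, hc, hcw⟩ := hstay.adj v hv w hw hvw
      exact ⟨c, .inr (hc.elim (· ▸ ha_marks) id), hcw⟩
    · exact hover.adj v hv w hw hvw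
  · rintro c hc z hz (h | h)
    · exact hstay.avoids c hc z hz h
    · exact hover.avoids c hc z hz h

theorem exists_isMove_cross (hs : IsStrandSystem G Y s) (hf : HeadsCross G s f)
    (hblocked : a ∉ blocked) (hmove : CrossMove f a a' blocked marks) :
    ∃ P, (f a = a → P = ∅) ∧ IsMove G Y s (movedDepth f 1) a a' blocked marks P := by
  by_cases ha : f a = a
  · obtain rfl : a' = a := hmove.elim id fun h => h.1.trans ha
    exact ⟨∅, fun _ => rfl, .idle (movedDepth_of_eq ha)⟩
  · obtain ⟨P, hP⟩ := hs.isMove_cross hf ha hblocked hmove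
    exact ⟨P, fun h => (ha h).elim, hP⟩

theorem realizes_of_crossStep (hs : IsStrandSystem G Y s) (hf : HeadsCross G s f) (ht : t.Proper)
    (htu : CrossStep f t u) (h : Realizes G Y (peel s (movedDepth f 1)) u) :
    Realizes G Y s t := by
  obtain ⟨P, hP, hPmove⟩ := hs.exists_isMove_cross hf ht.fst_notMem htu.fst_move
  obtain ⟨Q, hQ, hQmove⟩ := hs.exists_isMove_cross hf ht.snd_notMem htu.snd_move
  exact h.of_peel hs hPmove hQmove (.of_eq_empty (htu.idle.imp hP hQ))
    (fun c hc hn => htu.fst_keeps c hc (apply_eq_of_movedDepth_eq_zero one_ne_zero hn))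
    fun c hc hn => htu.snd_keeps c hc (apply_eq_of_movedDepth_eq_zero one_ne_zero hn)

theorem isMove_cycle (hs : IsStrandSystem G Y s) (hf : HeadsCycle G s f) (ha : f a ≠ a)
    (hblocked : a ∉ blocked) (ha' : a' = a ∨ a' = f a) :
    IsMove G Y s (movedDepth f 2) a a' blocked marks (cycleTrace s a a') := by
  have hfa' : f a' ≠ a' := apply_ne_of_eq_or_eq_apply ha ha'
  have na : movedDepth f 2 a = 2 := movedDepth_of_ne ha
  have na' : movedDepth f 2 a' = 2 := movedDepth_of_ne hfa'
  have subset : cycleTrace s a a' ⊆ strandSet s \ strandSet (peel s (movedDepth f 2)) := by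
    rintro v (hv | hv)
    · exact ⟨mem_strandSet hv, hs.notMem_strandSet_peel hv (by omega)⟩
    · exact ⟨mem_strandSet hv, hs.notMem_strandSet_peel hv (by omega)⟩
  refine ⟨subset, fun A hA x hx => ?_, ?_, ?_⟩
  · obtain ⟨z, hz, hxz⟩ := hs.exists_adj_second hf ha ha' hx
    have hz_mem : z ∈ cycleTrace s a a' := .inr hz
    have hz_reaches := (hs.reaches_last_peeled hz na' hA).mono
      (Set.insert_subset (.inl hz_mem) Set.subset_union_right)
    exact hz_reaches.cons (.inl (.inl hx)) hxz
  · rintro v (hv | hv) w hw hvw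
    · obtain ⟨d, hd, hdw⟩ := hs.adj_head_of_headsCycle hf ha hv (strandSet_peel_subset hw) hvw
      have nd := movedDepth_of_ne (r := 2) (apply_ne_of_eq_or_eq_apply ha hd)
      exact (hs.notMem_strandSet_peel hdw (by omega) hw).elim
    · refine ⟨a', .inl rfl, ?_⟩
      rcases hs.adj_second_of_headsCycle hf hfa' hv (strandSet_peel_subset hw) hvw with
        h | ⟨d, hd, hdw⟩
      · rwa [getElem?_peel, na']
      · have nd := movedDepth_of_ne (r := 2) hd
        exact (hs.notMem_strandSet_peel hdw (by omega) hw).elim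
  · rintro c hc x hx (h | h)
    · exact hblocked ((hs.inj hx h).1 ▸ hc)
    · exact absurd (hs.inj hx h).2 (by omega)

theorem exists_isMove_cycle (hs : IsStrandSystem G Y s) (hf : HeadsCycle G s f)
    (hblocked : a ∉ blocked) (ha' : a' = a ∨ a' = f a) :
    ∃ P, (f a = a → P = ∅) ∧ (f a ≠ a → P = cycleTrace s a a') ∧
      IsMove G Y s (movedDepth f 2) a a' blocked marks P := by
  by_cases ha : f a = a
  · obtain rfl : a' = a := ha'.elim id fun h => h.trans ha
    exact ⟨∅, fun _ => rfl, fun h => (h ha).elim, .idle (movedDepth_of_eq ha)⟩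
  · exact ⟨_, fun h => (ha h).elim, fun _ => rfl, hs.isMove_cycle hf ha hblocked ha'⟩

theorem realizes_of_cycleStep (hs : IsStrandSystem G Y s) (hf : HeadsCycle G s f) (ht : t.Proper)
    (htu : CycleStep f t u) (h : Realizes G Y (peel s (movedDepth f 2)) u) :
    Realizes G Y s t := by
  obtain ⟨P, hP, hP', hPmove⟩ := hs.exists_isMove_cycle hf ht.fst_notMem htu.fst_move
  obtain ⟨Q, hQ, hQ', hQmove⟩ := hs.exists_isMove_cycle hf ht.snd_notMem htu.snd_move
  have hPQ : Anticomplete G P Q := by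
    by_cases hfst : f t.fst = t.fst
    · exact .of_eq_empty (.inl (hP hfst))
    by_cases hsnd : f t.snd = t.snd
    · exact .of_eq_empty (.inr (hQ hsnd))
    obtain ⟨hqp, hqp', hpq, hpq'⟩ := (htu.apart.resolve_left hfst).resolve_left hsnd
    rw [hP' hfst, hQ' hsnd]
    exact hs.anticomplete_cycleTrace hf hfst hsnd htu.fst_move ht.ne ⟨hqp, hqp'⟩ ⟨hpq, hpq'⟩
  exact h.of_peel hs hPmove hQmove hPQ
    (fun c hc hn => htu.fst_keeps c hc (apply_eq_of_movedDepth_eq_zero two_ne_zero hn))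
    fun c hc hn => htu.snd_keeps c hc (apply_eq_of_movedDepth_eq_zero two_ne_zero hn)

end IsStrandSystem

end Soundness

end Steps

section Reduction

theorem exists_perm_eqOn_of_mapsTo [Finite ι] {S : Set ι} (hS : S.Nonempty) {f : ι → ι}
    (hf : Set.MapsTo f S S) :
    ∃ C ⊆ S, C.Nonempty ∧ ∃ g : Equiv.Perm ι, (∀ c ∈ C, g c = f c) ∧ ∀ c ∉ C, g c = c := by
  classical
  obtain ⟨C, ⟨hCS, hC, hCf⟩, hmin⟩ := exists_minimal_of_wellFoundedLT
    (fun C : Set ι => C ⊆ S ∧ C.Nonempty ∧ Set.MapsTo f C C) ⟨S, subset_rfl, hS, hf⟩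
  have hsurj : Set.SurjOn f C C :=
    hmin ⟨hCf.image_subset.trans hCS, hC.image f, fun _ h => ⟨_, hCf.image_subset h, rfl⟩⟩
      hCf.image_subset
  have hbij := (C.toFinite.surjOn_iff_bijOn_of_mapsTo hCf).1 hsurj
  exact ⟨C, hCS, hC, Equiv.Perm.ofSubtype (p := (· ∈ C)) hbij.equiv,
    fun _ hc => Equiv.Perm.ofSubtype_apply_of_mem _ hc,
    fun _ hc => Equiv.Perm.ofSubtype_apply_of_not_mem _ hc⟩

theorem exists_isLinkage [Finite ι]
    (hchord : ∀ c x, (s c)[0]? = some x → ∃ d k, 0 < k ∧ HeadChord G s c d k)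
    (hne : ∃ c, s c ≠ []) :
    ∃ g k, IsLinkage G s g k ∧ ∃ c, HeadChord G s c (g c) (k c) := by
  classical
  let S : Set ι := {c | ∃ x, (s c)[0]? = some x}
  have hS : S.Nonempty :=
    hne.imp fun c hc => ⟨_, List.getElem?_eq_getElem (List.length_pos_iff.2 hc)⟩
  have hchord' (c : ι) : ∃ d k, c ∈ S → 0 < k ∧ HeadChord G s c d k := by
    by_cases hc : c ∈ S
    · obtain ⟨x, hx⟩ := hc
      exact (hchord c x hx).imp fun d h => h.imp fun k hk _ => hk
    · exact ⟨c, 0, fun h => (hc h).elim⟩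
  choose f k hfk using hchord'
  have hfS : Set.MapsTo f S S := by
    intro c hc
    obtain ⟨-, _, p, -, hp, -⟩ := hfk c hc
    have : 0 < (s (f c)).length := (Nat.zero_le _).trans_lt (List.getElem?_eq_some_iff.1 hp).1
    exact ⟨_, List.getElem?_eq_getElem this⟩
  obtain ⟨C, hCS, ⟨c₀, hc₀⟩, g, hgC, hg⟩ := exists_perm_eqOn_of_mapsTo hS hfS
  have hC : ∀ c ∈ C, HeadChord G s c (g c) (k c) := fun c hc => hgC c hc ▸ (hfk c (hCS hc)).2
  refine ⟨g, fun c => if c ∈ C then k c else 1, ⟨fun c => ?_, fun c => ?_⟩, c₀, ?_⟩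
  · split_ifs with hc
    exacts [(hfk c (hCS hc)).1, one_pos]
  · split_ifs with hc
    exacts [.inr (hC c hc), .inl ⟨hg c hc, rfl⟩]
  · simpa only [if_pos hc₀] using hC c₀ hc₀

theorem IsLinkage.headsCycle {g : Equiv.Perm ι} {k : ι → ℕ} (hl : IsLinkage G s g k)
    (hk : ∀ c, k c = 1) : HeadsCycle G s g := by
  intro c hc
  obtain ⟨x, z, hx, hz, hchord⟩ := (hl.fixed_or_chord c).resolve_left fun h => hc h.1
  exact ⟨x, z, hx, hk c ▸ hz, hchord.adj⟩

theorem HeadChord.ne {c d : ι} (h : HeadChord G s c d 1) : d ≠ c := by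
  rintro rfl
  obtain ⟨x, z, hx, hz, hchord⟩ := h
  exact hchord.not_succ ⟨_, 0, hx, hz⟩

theorem headsCross_swap [DecidableEq ι] {i j : ι} {x y : V} (hx : (s i)[0]? = some x)
    (hy : (s j)[0]? = some y) (hxy : G.Adj x y) : HeadsCross G s (Equiv.swap i j) := by
  intro c hc
  rcases (Equiv.swap_apply_ne_self_iff.1 hc).2 with rfl | rfl
  · exact ⟨x, y, hx, by rwa [Equiv.swap_apply_left], hxy⟩
  · exact ⟨y, x, hy, by rwa [Equiv.swap_apply_right], hxy.symm⟩

theorem sum_length_peel_lt [Fintype ι] {n : ι → ℕ} {c : ι} {x : V} (hx : (s c)[0]? = some x)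
    (hn : 0 < n c) :
    ∑ c, (peel s n c).length < ∑ c, (s c).length := by
  have hlen := (List.getElem?_eq_some_iff.1 hx).1
  simp only [peel, List.length_drop]
  exact Finset.sum_lt_sum (fun c _ => Nat.sub_le _ _) ⟨c, Finset.mem_univ c, by omega⟩

theorem exists_reduction [Finite ι] [DecidableEq ι] (G : SimpleGraph V) (s : ι → List V) :
    (∀ c, s c = []) ∨
    (∃ c x, (s c)[0]? = some x ∧ ∀ w, ¬ IsChord G s x w) ∨
    (∃ i j, i ≠ j ∧ (∃ x, (s i)[0]? = some x) ∧ HeadsCross G s (Equiv.swap i j)) ∨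
    (∃ g k, IsLinkage G s g k ∧ ∃ c, 1 < k c) ∨
    ∃ f : Equiv.Perm ι, HeadsCycle G s f ∧ ∃ c, f c ≠ c := by
  by_cases hnil : ∀ c, s c = []
  · exact .inl hnil
  by_cases hfree : ∃ c x, (s c)[0]? = some x ∧ ∀ w, ¬ IsChord G s x w
  · exact .inr (.inl hfree)
  by_cases hcross : ∃ i j x y, (s i)[0]? = some x ∧ (s j)[0]? = some y ∧ G.Adj x y
  · obtain ⟨i, j, x, y, hx, hy, hxy⟩ := hcross
    refine .inr (.inr (.inl ⟨i, j, ?_, ⟨x, hx⟩, headsCross_swap hx hy hxy⟩))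
    rintro rfl
    exact hxy.ne (Option.some.inj (hx.symm.trans hy))
  push Not at hnil hfree hcross
  have hchord (c : ι) (x : V) (hx : (s c)[0]? = some x) : ∃ d k, 0 < k ∧ HeadChord G s c d k := by
    obtain ⟨w, hw⟩ := hfree c x hx
    obtain ⟨d, k, hk⟩ := mem_strandSet_iff.1 hw.right_mem
    refine ⟨d, k, Nat.pos_of_ne_zero ?_, x, w, hx, hk, hw⟩
    rintro rfl
    exact hcross c d x w hx hk hw.adj
  obtain ⟨g, k, hl, c, hc⟩ := exists_isLinkage hchord hnil
  by_cases hk : ∃ c, 1 < k c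
  · exact .inr (.inr (.inr (.inl ⟨g, k, hl, hk⟩)))
  · have hk' (c : ι) : k c = 1 := le_antisymm (not_lt.1 fun h => hk ⟨c, h⟩) (hl.pos c)
    exact .inr (.inr (.inr (.inr ⟨g, hl.headsCycle hk', c, (hk' c ▸ hc).ne⟩)))

end Reduction

section ClosedFamily

open Position

/-- Whatever task of a suitable class `U` of the family `F` is realized after a `step`, with the
strands renamed by a permutation `g`, some task of `T` can be reduced to it. -/
def Covers (F : List (List (Position ι))) (step : Position ι → Position ι → Prop)
    (T : List (Position ι)) : Prop :=
  ∃ U ∈ F, ∃ g : Equiv.Perm ι, ∀ u ∈ U, ∃ t ∈ T, step t (u.map g) ∨ step t (u.map g).swap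

/-- A family of classes of tasks that is closed under the reduction steps: if every strand system
smaller than `s` realizes some task of each class, then so does `s`. -/
structure IsClosedFamily [DecidableEq ι] (F : List (List (Position ι))) : Prop where
  nonempty : ∀ T ∈ F, T ≠ []
  proper : ∀ T ∈ F, ∀ t ∈ T, t.Proper
  cross : ∀ T ∈ F, ∀ i j, i ≠ j → Covers F (CrossStep (Equiv.swap i j)) T
  cycle : ∀ T ∈ F, ∀ f : Equiv.Perm ι, Covers F (CycleStep f) T

/-- `s` realizes some task of each class of `F`. -/
def RealizesEach (G : SimpleGraph V) (Y : Set V) (s : ι → List V) (F : List (List (Position ι))) :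
    Prop :=
  ∀ T ∈ F, ∃ t ∈ T, Realizes G Y s t

variable {F : List (List (Position ι))} {T : List (Position ι)}

theorem Covers.exists_realizes {s' : ι → List V} {step : Position ι → Position ι → Prop}
    (hT : Covers F step T)
    (hstep : ∀ t ∈ T, ∀ u, step t u → Realizes G Y s' u → Realizes G Y s t)
    (hs' : ∀ g : Equiv.Perm ι, RealizesEach G Y (s' ∘ g) F) : ∃ t ∈ T, Realizes G Y s t := by
  obtain ⟨U, hU, g, hg⟩ := hT
  obtain ⟨u, hu, hreal⟩ := hs' g U hU
  obtain ⟨t, ht, h | h⟩ := hg u hu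
  · exact ⟨t, ht, hstep t ht _ h hreal.map⟩
  · exact ⟨t, ht, hstep t ht _ h (Realizes.of_swap hreal.map)⟩

theorem IsClosedFamily.realizesEach [Finite ι] [DecidableEq ι] (hF : IsClosedFamily F)
    (hs : IsStrandSystem G Y s) : RealizesEach G Y s F := by
  have := Fintype.ofFinite ι
  induction hm : ∑ c, (s c).length using Nat.strong_induction_on generalizing s with
  | _ m ih =>
  subst hm
  have ih_peel {n : ι → ℕ} {c : ι} {x : V} (hx : (s c)[0]? = some x) (hn : 0 < n c)
      (g : Equiv.Perm ι) : RealizesEach G Y (peel s n ∘ g) F :=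
    ih _ ((Equiv.sum_comp g fun c => (peel s n c).length).trans_lt (sum_length_peel_lt hx hn))
      ((hs.peel n).comp_perm g) rfl
  intro T hT
  have hproper := hF.proper T hT
  rcases exists_reduction G s with hnil | ⟨c, x, hx, hfree⟩ | ⟨i, j, hij, ⟨x, hx⟩, hcross⟩ |
    ⟨g, k, hl, c, hc⟩ | ⟨f, hcycle, c, hc⟩
  · obtain ⟨t, ht⟩ := List.exists_mem_of_ne_nil T (hF.nonempty T hT)
    exact ⟨t, ht, .of_forall_eq_nil hnil⟩
  · obtain ⟨t, ht, h⟩ := ih_peel (n := Pi.single c 1) hx (by simp) 1 T hT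
    exact ⟨t, ht, hs.realizes_of_free_head (hproper t ht) hx hfree h⟩
  · refine (hF.cross T hT i j hij).exists_realizes
      (fun t ht u htu => hs.realizes_of_crossStep hcross (hproper t ht) htu) (ih_peel hx ?_)
    rw [movedDepth_of_ne (by rwa [Equiv.swap_apply_left, ne_comm])]
    exact one_pos
  · obtain ⟨t, ht, h⟩ := ih _ (hl.sum_length_relink_lt hc) (hl.isStrandSystem_relink hs) rfl T hT
    exact ⟨t, ht, h.mono IsLinkage.strandSet_relink_subset hl.getElem?_relink_zero⟩
  · obtain ⟨x, -, hx, -⟩ := hcycle c hc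
    refine (hF.cycle T hT f).exists_realizes
      (fun t ht u htu => hs.realizes_of_cycleStep hcycle (hproper t ht) htu) (ih_peel hx ?_)
    rw [movedDepth_of_ne hc]
    exact two_pos

end ClosedFamily

section Certificate

open Position

/-- Boolean equality test on `Fin 5`; the kernel evaluates `Nat.beq` on numerals natively, which
makes the checks below much faster than with the generic decision procedure. -/
def finBEq (a b : Fin 5) : Bool := Nat.beq a b

/-- Boolean membership test for lists over `Fin 5`. -/
def finElem (a : Fin 5) (l : List (Fin 5)) : Bool := l.any (finBEq a)

/-- Boolean test for `Position.Keeps`. -/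
def keepsTest (f : Fin 5 → Fin 5) (marks marks' : List (Fin 5)) : Bool :=
  marks.all fun c => !finBEq (f c) c || finElem c marks'

/-- Boolean test for `Position.CrossMove`. -/
def crossMoveTest (f : Fin 5 → Fin 5) (a a' : Fin 5) (blocked marks : List (Fin 5)) : Bool :=
  finBEq a' a || finBEq a' (f a) && !finElem a' blocked && finElem a marks

/-- Boolean test for `Position.CrossStep`. -/
def crossStepTest (f : Fin 5 → Fin 5) (t u : Position (Fin 5)) : Bool :=
  crossMoveTest f t.fst u.fst t.sndMarks u.fstMarks &&
    (crossMoveTest f t.snd u.snd t.fstMarks u.sndMarks &&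
      ((finBEq (f t.fst) t.fst || finBEq (f t.snd) t.snd) &&
        (keepsTest f t.fstMarks u.fstMarks && keepsTest f t.sndMarks u.sndMarks)))

/-- Boolean test for `Position.CycleStep`. -/
def cycleStepTest (f : Fin 5 → Fin 5) (t u : Position (Fin 5)) : Bool :=
  (finBEq u.fst t.fst || finBEq u.fst (f t.fst)) &&
    ((finBEq u.snd t.snd || finBEq u.snd (f t.snd)) &&
      ((finBEq (f t.fst) t.fst || (finBEq (f t.snd) t.snd ||
          !finBEq u.snd t.fst && (!finBEq u.snd (f t.fst) &&
            (!finBEq u.fst t.snd && !finBEq u.fst (f t.snd))))) &&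
        (keepsTest f t.fstMarks u.fstMarks && keepsTest f t.sndMarks u.sndMarks)))

section Tests

variable {f : Fin 5 → Fin 5} {a a' : Fin 5} {blocked marks marks' l : List (Fin 5)}
  {t u : Position (Fin 5)}

theorem finBEq_iff : finBEq a a' = true ↔ a = a' := by simp [finBEq, Fin.ext_iff]

theorem finElem_iff : finElem a l = true ↔ a ∈ l := by simp [finElem, finBEq_iff]

theorem keepsTest_iff : keepsTest f marks marks' = true ↔ Keeps f marks marks' := by
  simp [keepsTest, Keeps, finBEq_iff, finElem_iff, ← Bool.not_eq_true, imp_iff_not_or]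

theorem crossMoveTest_iff :
    crossMoveTest f a a' blocked marks = true ↔ CrossMove f a a' blocked marks := by
  simp [crossMoveTest, CrossMove, finBEq_iff, finElem_iff, ← Bool.not_eq_true, and_assoc]

theorem crossStep_of_test (h : crossStepTest f t u = true) : CrossStep f t u := by
  simp only [crossStepTest, Bool.and_eq_true, Bool.or_eq_true, crossMoveTest_iff, keepsTest_iff,
    finBEq_iff] at h
  obtain ⟨hfst, hsnd, hidle, hkeeps, hkeeps'⟩ := h
  exact ⟨hfst, hsnd, hidle, hkeeps, hkeeps'⟩

theorem cycleStep_of_test (h : cycleStepTest f t u = true) : CycleStep f t u := by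
  simp only [cycleStepTest, Bool.and_eq_true, Bool.or_eq_true, Bool.not_eq_true',
    ← Bool.not_eq_true, keepsTest_iff, finBEq_iff] at h
  obtain ⟨hfst, hsnd, hapart, hkeeps, hkeeps'⟩ := h
  exact ⟨hfst, hsnd, hapart, hkeeps, hkeeps'⟩

end Tests

/-- The self-map of `Fin 5` with the given list of images. -/
def ofImages (l : List (Fin 5)) (i : Fin 5) : Fin 5 := l.getD i 0

theorem exists_mem_permutations_ofImages_eq (f : Equiv.Perm (Fin 5)) :
    ∃ l ∈ (List.finRange 5).permutations', ofImages l = f := by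
  refine ⟨(List.finRange 5).map f, List.mem_permutations'.2 (f.map_finRange_perm), ?_⟩
  funext i
  simp [ofImages]

/-- A closed family of classes of tasks for five strands, found by computer search. -/
def closedFamily : List (List (Position (Fin 5))) := [
  [⟨0, 1, [], [3]⟩, ⟨0, 3, [], []⟩, ⟨0, 4, [], []⟩, ⟨2, 3, [], []⟩],
  [⟨0, 3, [], []⟩, ⟨1, 3, [], []⟩, ⟨2, 3, [1], []⟩, ⟨3, 4, [], [0]⟩],
  [⟨0, 1, [3], []⟩, ⟨0, 2, [3], [1]⟩, ⟨1, 3, [], []⟩, ⟨2, 3, [1], []⟩, ⟨3, 4, [], []⟩],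
  [⟨0, 3, [], []⟩, ⟨0, 4, [], []⟩, ⟨1, 2, [], []⟩, ⟨1, 3, [], []⟩],
  [⟨0, 3, [], []⟩, ⟨0, 4, [], []⟩, ⟨1, 3, [], []⟩, ⟨2, 3, [1], []⟩],
  [⟨0, 1, [3], []⟩, ⟨0, 2, [3], [1]⟩, ⟨0, 4, [], []⟩, ⟨1, 3, [], []⟩, ⟨2, 3, [1], []⟩,
   ⟨3, 4, [0], []⟩],
  [⟨0, 1, [3], []⟩, ⟨0, 4, [], []⟩, ⟨1, 2, [], []⟩, ⟨1, 3, [], []⟩, ⟨3, 4, [0], []⟩],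
  [⟨0, 2, [3], []⟩, ⟨1, 2, [0, 3], []⟩, ⟨1, 2, [3, 4], []⟩, ⟨1, 3, [4], []⟩, ⟨2, 3, [], []⟩,
   ⟨2, 4, [], [3]⟩, ⟨3, 4, [], []⟩],
  [⟨0, 1, [], []⟩, ⟨0, 2, [], []⟩, ⟨1, 4, [], [0]⟩, ⟨2, 4, [], [0]⟩, ⟨2, 4, [3], []⟩,
   ⟨3, 4, [], []⟩],
  [⟨0, 1, [], []⟩, ⟨0, 2, [3], []⟩, ⟨0, 4, [3], [2]⟩, ⟨1, 2, [], [0, 4]⟩, ⟨1, 4, [], [0]⟩,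
   ⟨2, 3, [], []⟩, ⟨3, 4, [], []⟩],
  [⟨0, 1, [3], []⟩, ⟨0, 3, [1, 2], []⟩, ⟨1, 2, [], [0, 3]⟩, ⟨1, 3, [], []⟩, ⟨2, 3, [1], []⟩,
   ⟨3, 4, [], []⟩],
  [⟨0, 1, [], []⟩, ⟨0, 2, [3], []⟩, ⟨0, 4, [], []⟩, ⟨2, 3, [], []⟩, ⟨3, 4, [0], []⟩],
  [⟨0, 1, [], []⟩, ⟨0, 2, [], []⟩, ⟨0, 4, [], []⟩, ⟨2, 4, [0, 3], []⟩, ⟨3, 4, [0], []⟩],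
  [⟨0, 1, [], []⟩, ⟨0, 2, [], [1]⟩, ⟨0, 4, [], []⟩, ⟨1, 4, [0, 3], []⟩, ⟨2, 3, [], []⟩,
   ⟨3, 4, [0], []⟩],
  [⟨0, 1, [], []⟩, ⟨0, 2, [], []⟩, ⟨1, 3, [], [0, 4]⟩, ⟨1, 4, [], [0]⟩, ⟨2, 3, [], [0, 4]⟩,
   ⟨2, 4, [], []⟩],
  [⟨0, 1, [], []⟩, ⟨0, 4, [], []⟩, ⟨1, 2, [], []⟩, ⟨1, 4, [0, 3], []⟩, ⟨2, 3, [], [1]⟩,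
   ⟨3, 4, [0], []⟩],
  [⟨0, 1, [], []⟩, ⟨0, 2, [3], []⟩, ⟨1, 4, [], [0]⟩, ⟨2, 3, [], []⟩, ⟨2, 4, [], [0, 3]⟩,
   ⟨3, 4, [], []⟩],
  [⟨0, 2, [3], []⟩, ⟨1, 2, [0, 3], []⟩, ⟨1, 4, [], []⟩, ⟨2, 3, [], []⟩, ⟨2, 4, [], [3]⟩,
   ⟨3, 4, [], []⟩],
  [⟨0, 1, [], []⟩, ⟨0, 2, [], [1]⟩, ⟨0, 3, [], [1, 2]⟩, ⟨0, 4, [], []⟩, ⟨1, 4, [0], []⟩,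
   ⟨2, 4, [0, 3], []⟩, ⟨3, 4, [0], []⟩],
  [⟨0, 1, [], []⟩, ⟨0, 2, [], [1]⟩, ⟨1, 4, [], [0]⟩, ⟨1, 4, [3], []⟩, ⟨2, 3, [], []⟩,
   ⟨2, 4, [1], [0]⟩, ⟨3, 4, [], []⟩],
  [⟨0, 1, [], []⟩, ⟨0, 2, [], []⟩, ⟨0, 4, [], [2]⟩, ⟨1, 2, [], [0, 4]⟩, ⟨1, 3, [], [0]⟩,
   ⟨1, 4, [], [0]⟩, ⟨2, 3, [], [0]⟩],
  [⟨0, 1, [], []⟩, ⟨0, 2, [], [1]⟩, ⟨1, 3, [], [0, 4]⟩, ⟨1, 4, [], []⟩, ⟨2, 3, [], []⟩,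
   ⟨2, 4, [1], [0]⟩, ⟨2, 4, [], [3]⟩],
  [⟨0, 1, [], []⟩, ⟨0, 2, [], [1]⟩, ⟨0, 3, [], [1, 2]⟩, ⟨1, 3, [], [0, 4]⟩, ⟨1, 4, [], []⟩,
   ⟨2, 4, [], []⟩],
  [⟨0, 2, [], []⟩, ⟨0, 3, [], [2]⟩, ⟨0, 4, [1], []⟩, ⟨1, 3, [], [4]⟩, ⟨1, 4, [], []⟩,
   ⟨2, 4, [], []⟩]]

/-- The classes of `closedFamily`, given by their indices, and the renamings (as lists of images)
that cover all steps. This list, too, was found by computer search. -/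
def relabelings : List (ℕ × List (Fin 5)) := [
  (3, [0, 3, 1, 2, 4]), (3, [2, 3, 0, 4, 1]), (3, [1, 3, 2, 0, 4]), (1, [1, 2, 4, 0, 3]),
  (1, [0, 1, 2, 3, 4]), (0, [1, 3, 2, 4, 0]), (3, [2, 4, 3, 1, 0]), (0, [1, 3, 4, 0, 2]),
  (3, [0, 4, 1, 2, 3]), (4, [0, 1, 2, 3, 4]), (2, [0, 1, 2, 3, 4]), (0, [0, 1, 2, 3, 4]),
  (3, [0, 1, 2, 3, 4]), (2, [3, 4, 2, 0, 1]), (0, [4, 0, 2, 3, 1]), (1, [0, 4, 2, 1, 3]),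
  (0, [2, 4, 1, 0, 3]), (0, [4, 2, 1, 0, 3]), (0, [2, 3, 1, 4, 0]), (8, [0, 1, 2, 3, 4]),
  (2, [1, 0, 4, 3, 2]), (4, [4, 0, 1, 2, 3]), (10, [0, 1, 2, 3, 4]), (2, [2, 3, 4, 1, 0]),
  (0, [1, 0, 4, 3, 2]), (3, [0, 3, 1, 4, 2]), (12, [3, 4, 1, 0, 2]), (12, [0, 1, 2, 3, 4]),
  (5, [0, 1, 2, 3, 4]), (4, [4, 2, 3, 0, 1]), (0, [0, 3, 4, 2, 1]), (3, [3, 4, 1, 2, 0]),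
  (2, [3, 1, 2, 0, 4]), (3, [1, 3, 2, 4, 0]), (4, [1, 3, 2, 4, 0]), (1, [1, 4, 3, 0, 2]),
  (2, [1, 0, 2, 3, 4]), (3, [2, 4, 0, 3, 1]), (11, [0, 1, 2, 3, 4]), (14, [0, 1, 2, 3, 4]),
  (0, [1, 2, 3, 0, 4]), (9, [0, 1, 2, 3, 4]), (0, [1, 3, 0, 4, 2]), (18, [0, 1, 2, 3, 4]),
  (0, [2, 4, 3, 0, 1]), (1, [1, 2, 4, 3, 0]), (6, [0, 1, 2, 3, 4]), (2, [0, 2, 1, 3, 4]),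
  (20, [0, 1, 2, 3, 4]), (17, [0, 1, 2, 3, 4]), (2, [4, 3, 2, 1, 0]), (7, [0, 1, 2, 3, 4]),
  (0, [3, 0, 4, 1, 2]), (22, [0, 1, 2, 3, 4]), (3, [0, 3, 4, 2, 1]), (15, [0, 1, 2, 3, 4]),
  (0, [0, 2, 3, 1, 4]), (0, [3, 0, 4, 2, 1]), (0, [4, 2, 3, 1, 0]), (21, [0, 1, 2, 3, 4]),
  (23, [0, 1, 2, 3, 4]), (4, [1, 4, 3, 0, 2]), (0, [1, 0, 3, 2, 4]), (0, [4, 1, 2, 0, 3]),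
  (2, [4, 1, 3, 0, 2]), (3, [1, 3, 0, 4, 2]), (3, [1, 3, 4, 2, 0]), (5, [4, 3, 0, 2, 1]),
  (9, [1, 0, 4, 3, 2]), (13, [0, 1, 2, 3, 4]), (6, [2, 1, 3, 4, 0]), (0, [3, 0, 2, 1, 4]),
  (1, [0, 4, 1, 2, 3]), (12, [0, 4, 2, 3, 1]), (1, [0, 4, 3, 1, 2]), (6, [1, 3, 2, 4, 0]),
  (3, [0, 3, 4, 1, 2]), (16, [0, 1, 2, 3, 4]), (19, [0, 1, 2, 3, 4]), (0, [3, 1, 4, 0, 2]),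
  (1, [1, 3, 2, 0, 4]), (0, [0, 1, 2, 4, 3]), (3, [0, 2, 3, 4, 1]), (0, [0, 2, 1, 3, 4]),
  (0, [0, 4, 3, 2, 1]), (0, [1, 0, 2, 4, 3]), (2, [3, 1, 0, 4, 2]), (2, [4, 1, 2, 3, 0]),
  (3, [0, 1, 3, 4, 2]), (3, [0, 4, 2, 1, 3]), (4, [4, 0, 3, 2, 1]), (0, [0, 3, 1, 2, 4]),
  (3, [0, 1, 4, 2, 3]), (3, [0, 2, 3, 1, 4]), (3, [0, 3, 2, 4, 1]), (3, [0, 4, 3, 1, 2]),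
  (3, [1, 3, 0, 2, 4]), (4, [3, 0, 1, 4, 2]), (4, [4, 2, 0, 3, 1]), (6, [0, 3, 4, 2, 1]),
  (6, [1, 0, 4, 3, 2]), (6, [4, 0, 1, 2, 3]), (11, [1, 0, 4, 3, 2]), (13, [2, 4, 1, 3, 0]),
  (0, [3, 1, 2, 0, 4]), (3, [1, 4, 0, 3, 2]), (3, [2, 3, 4, 1, 0]), (4, [1, 0, 4, 3, 2]),
  (1, [2, 4, 1, 3, 0]), (3, [0, 2, 4, 1, 3]), (3, [1, 4, 3, 2, 0]), (17, [3, 2, 4, 0, 1]),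
  (0, [4, 0, 1, 3, 2]), (2, [3, 1, 4, 0, 2]), (6, [4, 0, 2, 1, 3]), (2, [2, 0, 4, 3, 1])]

/-- The classes named by `relabelings`, with their strands renamed. -/
def relabeledClasses : List (List (Position (Fin 5))) :=
  relabelings.map fun p => (closedFamily.getD p.1 []).map (Position.map (ofImages p.2))

/-- Boolean test for `Covers closedFamily step T`, where `step` is given by `stepTest`. -/
def coversTest (stepTest : Position (Fin 5) → Position (Fin 5) → Bool)
    (T : List (Position (Fin 5))) : Bool :=
  relabeledClasses.any fun U => U.all fun u => T.any fun t => stepTest t u || stepTest t u.swap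

theorem relabelings_valid :
    ∀ p ∈ relabelings, p.1 < closedFamily.length ∧ Function.Injective (ofImages p.2) := by
  decide +kernel

theorem covers_of_test {step : Position (Fin 5) → Position (Fin 5) → Prop}
    {stepTest : Position (Fin 5) → Position (Fin 5) → Bool} {T : List (Position (Fin 5))}
    (hstep : ∀ t u, stepTest t u = true → step t u) (h : coversTest stepTest T = true) :
    Covers closedFamily step T := by
  simp only [coversTest, relabeledClasses, List.any_map, List.any_eq_true, List.all_eq_true,
    Function.comp_apply, List.forall_mem_map, Bool.or_eq_true] at h
  obtain ⟨p, hp, hcover⟩ := h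
  obtain ⟨hlt, hinj⟩ := relabelings_valid p hp
  rw [List.getD_eq_getElem _ _ hlt] at hcover
  refine ⟨closedFamily[p.1], List.getElem_mem hlt,
    Equiv.ofBijective _ (Finite.injective_iff_bijective.1 hinj), fun u hu => ?_⟩
  obtain ⟨t, ht, hstep_t⟩ := hcover u hu
  exact ⟨t, ht, hstep_t.imp (hstep _ _) (hstep _ _)⟩

theorem closedFamily_ne_nil_and_proper : ∀ T ∈ closedFamily, T ≠ [] ∧ ∀ t ∈ T,
    t.fst ≠ t.snd ∧ t.fst ∉ t.sndMarks ∧ t.snd ∉ t.fstMarks := by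
  decide +kernel

theorem coversTest_crossStep : ∀ T ∈ closedFamily, ∀ i j : Fin 5, i < j →
    coversTest (crossStepTest (Equiv.swap i j)) T = true := by
  decide +kernel

theorem coversTest_cycleStep : ∀ T ∈ closedFamily, ∀ l ∈ (List.finRange 5).permutations',
    coversTest (cycleStepTest (ofImages l)) T = true := by
  decide +kernel

theorem isClosedFamily_closedFamily : IsClosedFamily closedFamily where
  nonempty T hT := (closedFamily_ne_nil_and_proper T hT).1
  proper T hT t ht :=
    let ⟨hne, hfst, hsnd⟩ := (closedFamily_ne_nil_and_proper T hT).2 t ht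
    ⟨hne, hfst, hsnd⟩
  cross T hT i j hij := by
    have cross_of_lt {i j : Fin 5} (h : i < j) :
        Covers closedFamily (CrossStep (Equiv.swap i j)) T :=
      covers_of_test (fun _ _ => crossStep_of_test) (coversTest_crossStep T hT i j h)
    rcases hij.lt_or_gt with h | h
    · exact cross_of_lt h
    · exact Equiv.swap_comm i j ▸ cross_of_lt h
  cycle T hT f := by
    obtain ⟨l, hl, hlf⟩ := exists_mem_permutations_ofImages_eq f
    exact hlf ▸ covers_of_test (fun _ _ => cycleStep_of_test) (coversTest_cycleStep T hT l hl)

end Certificate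

section Walks

theorem exists_path_of_reaches {A X : Set V} {x : V} (h : Reaches G Y A x) (hx : x ∈ X) :
    ∃ p : PathPkg G, IsXYPath G X Y p ∧ pkgSupport p ⊆ A := by
  classical
  obtain ⟨y, hy, p, hp⟩ := h
  exact ⟨⟨x, y, p.bypass⟩, ⟨p.bypass_isPath, hx, hy⟩,
    fun v hv => hp v (p.support_bypass_subset_support hv)⟩

theorem getElem?_support_eq_some_iff {x y v : V} {p : G.Walk x y} {n : ℕ} :
    p.support[n]? = some v ↔ n ≤ p.length ∧ p.getVert n = v := by
  rw [List.getElem?_eq_some_iff]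
  simp [Walk.support_getElem_eq_getVert]

/-- The family of vertex lists of the walks `P`. -/
def supports (P : ι → PathPkg G) (i : ι) : List V := (P i).2.2.support

variable {P : ι → PathPkg G}

theorem strandSet_supports : strandSet (supports P) = ⋃ i, pkgSupport (P i) := by
  ext v
  simp [strandSet, supports, pkgSupport]

theorem adj_of_strandSucc_supports {v w : V} (h : StrandSucc (supports P) v w) : G.Adj v w := by
  obtain ⟨i, n, hv, hw⟩ := h
  obtain ⟨-, rfl⟩ := getElem?_support_eq_some_iff.1 hv
  obtain ⟨hn, rfl⟩ := getElem?_support_eq_some_iff.1 hw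
  exact (P i).2.2.adj_getVert_succ hn

theorem strandSucc_of_mem_pkgEdges {i : ι} {v w : V} (h : s(v, w) ∈ pkgEdges (P i)) :
    StrandSucc (supports P) v w ∨ StrandSucc (supports P) w v := by
  obtain ⟨n, hn, he⟩ := ((P i).2.2.mk_mem_edges_iff_exists).1 h
  have hsucc : StrandSucc (supports P) ((P i).2.2.getVert n) ((P i).2.2.getVert (n + 1)) :=
    ⟨i, n, getElem?_support_eq_some_iff.2 ⟨hn.le, rfl⟩, getElem?_support_eq_some_iff.2 ⟨hn, rfl⟩⟩
  rcases Sym2.eq_iff.1 he with ⟨rfl, rfl⟩ | ⟨rfl, rfl⟩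
  exacts [.inl hsucc, .inr hsucc]

theorem IsChord.notMem_pkgEdges {v w : V} (h : IsChord G (supports P) v w) :
    s(v, w) ∉ ⋃ i, pkgEdges (P i) := by
  intro he
  obtain ⟨i, hi⟩ := Set.mem_iUnion.1 he
  exact (strandSucc_of_mem_pkgEdges hi).elim h.not_succ h.not_pred

theorem isStrandSystem_supports (hpath : ∀ i, (P i).2.2.IsPath) (hend : ∀ i, (P i).2.1 ∈ Y)
    (hdisj : Pairwise fun i j => PkgDisjoint (P i) (P j))
    (hinc : ∀ v, v ∈ (⋃ i, pkgSupport (P i)) →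
      Set.Subsingleton {e : Sym2 V | e ∈ G.edgeSet ∧ v ∈ e ∧ e ∉ ⋃ i, pkgEdges (P i)}) :
    IsStrandSystem G Y (supports P) where
  adj := adj_of_strandSucc_supports
  inj {i j m n v} hi hj := by
    obtain rfl : i = j := by
      by_contra hij
      exact hdisj hij v (List.mem_of_getElem? hi) (List.mem_of_getElem? hj)
    have hm := (List.getElem?_eq_some_iff.1 hi).1
    exact ⟨rfl, (List.getElem?_inj hm (hpath i).support_nodup).1 (hi.trans hj.symm)⟩
  last_mem {i n v} hv hnone := by
    obtain ⟨hn, rfl⟩ := getElem?_support_eq_some_iff.1 hv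
    have hlen : (P i).2.2.length + 1 ≤ n + 1 := by
      simpa [supports, Walk.length_support] using hnone
    obtain rfl : n = (P i).2.2.length := by omega
    rw [Walk.getVert_length]
    exact hend i
  chord_unique {v w₁ w₂} h₁ h₂ := by
    have mem {w : V} (h : IsChord G (supports P) v w) :
        s(v, w) ∈ {e | e ∈ G.edgeSet ∧ v ∈ e ∧ e ∉ ⋃ i, pkgEdges (P i)} :=
      ⟨h.adj, Sym2.mem_mk_left v w, h.notMem_pkgEdges⟩
    exact Sym2.congr_right.1 (hinc v (strandSet_supports ▸ h₁.left_mem) (mem h₁) (mem h₂))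

theorem exists_nonadjacent_paths_of_realizes {X : Set V} (hstart : ∀ i, (P i).1 ∈ X)
    {t : Position ι} (h : Realizes G Y (supports P) t) :
    ∃ p q : PathPkg G, IsXYPath G X Y p ∧ IsXYPath G X Y q ∧ PkgNonAdj G p q := by
  obtain ⟨A, B, hAB, hA, hB⟩ := h
  have head (i : ι) : (supports P i)[0]? = some (P i).1 :=
    getElem?_support_eq_some_iff.2 ⟨Nat.zero_le _, Walk.getVert_zero _⟩
  obtain ⟨p, hp, hpA⟩ := exists_path_of_reaches (hA.reaches _ (head t.fst)) (hstart t.fst)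
  obtain ⟨q, hq, hqB⟩ := exists_path_of_reaches (hB.reaches _ (head t.snd)) (hstart t.snd)
  exact ⟨p, q, hp, hq, fun a ha b hb => hAB a (hpA ha) b (hqB hb)⟩

end Walks

end

theorem statement_7 (G : SimpleGraph V) (X Y : Set V)
    (P : Fin 5 → PathPkg G)
    (hP : ∀ i, IsXYPath G X Y (P i))
    (hdisj : Pairwise fun i j => PkgDisjoint (P i) (P j))
    (hinc : ∀ v, v ∈ (⋃ i, pkgSupport (P i)) →
      Set.Subsingleton {e : Sym2 V | e ∈ G.edgeSet ∧ v ∈ e ∧ e ∉ ⋃ i, pkgEdges (P i)}) :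
    ∃ p q : PathPkg G, IsXYPath G X Y p ∧ IsXYPath G X Y q ∧ PkgNonAdj G p q := by
  have hs : IsStrandSystem G Y (supports P) :=
    isStrandSystem_supports (fun i => (hP i).1) (fun i => (hP i).2.2) hdisj hinc
  obtain ⟨t, -, ht⟩ :=
    isClosedFamily_closedFamily.realizesEach hs (closedFamily.head (by decide)) (List.head_mem _)
  exact exists_nonadjacent_paths_of_realizes (fun i => (hP i).2.1) ht
end

section
/- There exist a simple graph G, sets X, Y ⊆ V(G), and a collection 𝒫 of four pairwise disjoint X-Y-paths in G such that every vertex of V(𝒫) is incident to at most one edge of E(G) \ E(𝒫), and yet G contains no two pairwise non-adjacent X-Y-paths. -/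
open SimpleGraph

universe u

variable {V : Type u}

/-!
Join four strands by rungs so that each layer carries one of the three perfect matchings of `K₄`,
in the cyclic order 1, 2, 3, 1, 2, 3, … . Two non-adjacent bottom-to-top paths must meet different
rungs of every layer, and comparing consecutive layers forces one of them to run straight along a
single strand `h` while the other one winds through the three remaining strands, changing strand in
every layer. Such a pair of paths does exist if all nine layers are complete. Deleting the rung
`{0, 2}` near the bottom rules it out for `h = 1` and `h = 3`, deleting `{1, 3}` near the top rules
it out for `h = 0` and `h = 2`, and five complete layers in between suffice for the forcing.
-/

section Ladder

variable {S : Type*} {n : ℕ}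

/-- The graph made of the strands `{s} × Fin (n + 1)`, each of them a path, in which layer `t` is a
copy of the graph `R t`, whose edges are called rungs. -/
def ladder (R : Fin (n + 1) → SimpleGraph S) : SimpleGraph (S × Fin (n + 1)) where
  Adj u v := (u.1 = v.1 ∧ (pathGraph (n + 1)).Adj u.2 v.2) ∨ (u.2 = v.2 ∧ (R u.2).Adj u.1 v.1)
  symm := ⟨by
    rintro ⟨a, t⟩ ⟨b, t'⟩ (⟨hs, h⟩ | ⟨ht, h⟩)
    · exact .inl ⟨hs.symm, h.symm⟩
    · obtain rfl : t = t' := ht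
      exact .inr ⟨rfl, h.symm⟩⟩
  loopless := ⟨by rintro v (⟨-, h⟩ | ⟨-, h⟩) <;> exact h.ne rfl⟩

namespace ladder

variable (R : Fin (n + 1) → SimpleGraph S)

theorem adj_strand (s : S) (i : Fin n) : (ladder R).Adj (s, i.castSucc) (s, i.succ) :=
  .inl ⟨rfl, pathGraph_adj.2 (.inl (by simp))⟩

variable {R} in
theorem adj_rung {t : Fin (n + 1)} {a b : S} (h : (R t).Adj a b) : (ladder R).Adj (a, t) (b, t) :=
  .inr ⟨rfl, h⟩

/-- The walk along the strand `s` from the bottom layer up to layer `i`. -/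
def strandWalk (s : S) (i : Fin (n + 1)) : (ladder R).Walk (s, 0) (s, i) :=
  Fin.induction .nil (fun j w => w.concat (adj_strand R s j)) i

theorem strandWalk_succ (s : S) (i : Fin n) :
    strandWalk R s i.succ = (strandWalk R s i.castSucc).concat (adj_strand R s i) :=
  Fin.induction_succ ..

theorem mem_support_strandWalk {s : S} {i : Fin (n + 1)} {v : S × Fin (n + 1)} :
    v ∈ (strandWalk R s i).support ↔ v.1 = s ∧ v.2 ≤ i := by
  induction i using Fin.induction with
  | zero => simp [strandWalk, Prod.ext_iff]
  | succ i ih =>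
    rw [strandWalk_succ, Walk.support_concat, List.mem_append, ih,
      List.mem_singleton, Prod.ext_iff, ← and_or_left, Fin.le_castSucc_iff, ← le_iff_lt_or_eq]

theorem isPath_strandWalk (s : S) (i : Fin (n + 1)) : (strandWalk R s i).IsPath := by
  induction i using Fin.induction with
  | zero => exact .nil
  | succ i ih =>
    rw [strandWalk_succ]
    exact ih.concat (by simp [mem_support_strandWalk]) _

theorem mem_edges_strandWalk {i : Fin (n + 1)} {j : Fin n} (hj : j.castSucc < i) (s : S) :
    s((s, j.castSucc), (s, j.succ)) ∈ (strandWalk R s i).edges := by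
  induction i using Fin.induction with
  | zero => simp at hj
  | succ i ih =>
    rw [strandWalk_succ, Walk.edges_concat, List.concat_eq_append, List.mem_append]
    rcases (Fin.castSucc_lt_succ_iff.1 hj).lt_or_eq with hlt | rfl
    · exact .inl (ih hlt)
    · exact .inr (List.mem_singleton_self _)

/-- The strand `s` as a packaged walk from the bottom layer to the top layer. -/
def strand (s : S) : PathPkg (ladder R) :=
  ⟨(s, 0), (s, Fin.last n), strandWalk R s (Fin.last n)⟩

theorem isXYPath_strand (s : S) :
    IsXYPath (ladder R) {v | v.2 = 0} {v | v.2 = Fin.last n} (strand R s) :=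
  ⟨isPath_strandWalk R s (Fin.last n), rfl, rfl⟩

theorem mem_pkgSupport_strand {s : S} {v : S × Fin (n + 1)} :
    v ∈ pkgSupport (strand R s) ↔ v.1 = s :=
  (mem_support_strandWalk R (i := Fin.last n)).trans (and_iff_left (Fin.le_last _))

theorem pkgDisjoint_strand {s s' : S} (h : s ≠ s') : PkgDisjoint (strand R s) (strand R s') := by
  intro v hv hv'
  rw [mem_pkgSupport_strand] at hv hv'
  exact h (hv.symm.trans hv')

theorem mem_pkgEdges_strand (s : S) (i : Fin n) :
    s((s, i.castSucc), (s, i.succ)) ∈ pkgEdges (strand R s) :=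
  mem_edges_strandWalk R i.castSucc_lt_last s

variable {R}

theorem exists_rung_of_notMem_pkgEdges {v : S × Fin (n + 1)} {e : Sym2 (S × Fin (n + 1))}
    (he : e ∈ (ladder R).edgeSet) (hv : v ∈ e) (hs : ∀ s, e ∉ pkgEdges (strand R s)) :
    ∃ b, (R v.2).Adj v.1 b ∧ e = s(v, (b, v.2)) := by
  obtain ⟨⟨b, t'⟩, rfl⟩ := Sym2.mem_iff_exists.1 hv
  obtain ⟨a, t⟩ := v
  rcases he with ⟨hab, htt'⟩ | ⟨htt', hab⟩
  · obtain rfl : a = b := hab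
    have consecutive : (∃ i : Fin n, t = i.castSucc ∧ t' = i.succ) ∨
        ∃ i : Fin n, t' = i.castSucc ∧ t = i.succ := by
      rcases pathGraph_adj.1 htt' with h | h
      · exact .inl ⟨⟨t, by grind⟩, rfl, Fin.ext h.symm⟩
      · exact .inr ⟨⟨t', by grind⟩, rfl, Fin.ext h.symm⟩
    rcases consecutive with ⟨i, rfl, rfl⟩ | ⟨i, rfl, rfl⟩
    · exact absurd (mem_pkgEdges_strand R a i) (hs a)
    · exact absurd (Sym2.eq_swap ▸ mem_pkgEdges_strand R a i) (hs a)
  · obtain rfl : t = t' := htt'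
    exact ⟨b, hab, rfl⟩

theorem subsingleton_nonstrand_edges
    (hR : ∀ t a b c, (R t).Adj a b → (R t).Adj a c → b = c) (v : S × Fin (n + 1)) :
    Set.Subsingleton
      {e | e ∈ (ladder R).edgeSet ∧ v ∈ e ∧ e ∉ ⋃ s, pkgEdges (strand R s)} := by
  rintro e ⟨he, hv, hs⟩ e' ⟨he', hv', hs'⟩
  simp only [Set.mem_iUnion, not_exists] at hs hs'
  obtain ⟨b, hb, rfl⟩ := exists_rung_of_notMem_pkgEdges he hv hs
  obtain ⟨c, hc, rfl⟩ := exists_rung_of_notMem_pkgEdges he' hv' hs'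
  rw [hR _ _ _ _ hb hc]

variable (R) in
/-- `P` contains the vertices of a walk from the bottom layer to the top layer. -/
def Traverses (P : Set (S × Fin (n + 1))) : Prop :=
  ∃ (a b : S) (p : (ladder R).Walk (a, 0) (b, Fin.last n)), ∀ v ∈ p.support, v ∈ P

theorem traverses_pkgSupport {p : PathPkg (ladder R)}
    (hp : IsXYPath (ladder R) {v | v.2 = 0} {v | v.2 = Fin.last n} p) :
    Traverses R (pkgSupport p) := by
  obtain ⟨⟨a, t⟩, ⟨b, t'⟩, p⟩ := p
  obtain ⟨-, rfl : t = 0, rfl : t' = Fin.last n⟩ := hp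
  exact ⟨a, b, p, fun _ hv => hv⟩

-- The hypothesis `hf` says that no rung connects the two sides of the cut that passes, on each
-- strand `s`, between the layers `f s` and `f s + 1`.
theorem Traverses.exists_crossing {P : Set (S × Fin (n + 1))} (hP : Traverses R P) (f : S → Fin n)
    (hf : ∀ t a b, (R t).Adj a b → t ≤ (f a).castSucc → t ≤ (f b).castSucc) :
    ∃ s, (s, (f s).castSucc) ∈ P ∧ (s, (f s).succ) ∈ P := by
  obtain ⟨a, b, p, hp⟩ := hP
  obtain ⟨⟨⟨u, v⟩, huv⟩, hd, hu, hv⟩ :=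
    p.exists_boundary_dart {v | v.2 ≤ (f v.1).castSucc} (Fin.zero_le _) (by simp)
  have huP := hp u (p.dart_fst_mem_support_of_mem_darts hd)
  have hvP := hp v (p.dart_snd_mem_support_of_mem_darts hd)
  obtain ⟨s, t⟩ := u
  obtain ⟨s', t'⟩ := v
  rcases huv with ⟨hs, htt'⟩ | ⟨ht, hss'⟩
  · obtain rfl : s = s' := hs
    simp only [Set.mem_ofPred_eq, Fin.le_def, Fin.val_castSucc, not_le] at hu hv
    rw [pathGraph_adj] at htt'
    obtain rfl : t = (f s).castSucc := Fin.ext (by grind)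
    obtain rfl : t' = (f s).succ := Fin.ext (by grind)
    exact ⟨s, huP, hvP⟩
  · obtain rfl : t = t' := ht
    exact absurd (hf t s s' hss' hu) hv

end ladder

end Ladder

namespace TwistedLadder

/-- The nonzero element of the Klein four-group `(Fin 4, ^^^)` whose cosets are the rungs of
layer `t`. -/
def rungShift (t : Fin 9) : Fin 4 := Fin.ofNat 4 (t % 3 + 1)

/-- In layer `t`, the perfect matching of the four strands given by `rungShift t`, without the rung
`{0, 2}` in layer `1` and without the rung `{1, 3}` in layer `7`. -/
def rungs (t : Fin 9) : SimpleGraph (Fin 4) where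
  Adj a b := a ^^^ b = rungShift t ∧ (t = 1 → a = 1 ∨ a = 3) ∧ (t = 7 → a = 0 ∨ a = 2)
  symm := ⟨by revert t; decide⟩
  loopless := ⟨by revert t; decide⟩

instance (t : Fin 9) : DecidableRel (rungs t).Adj :=
  fun a b => inferInstanceAs (Decidable (a ^^^ b = rungShift t ∧ _))

theorem rungs_adj_unique : ∀ t a b c, (rungs t).Adj a b → (rungs t).Adj a c → b = c := by
  decide

theorem rungs_adj_reflect :
    ∀ t a b, (rungs t.rev).Adj (a + 1) (b + 1) ↔ (rungs t).Adj a b := by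
  decide

/-- The automorphism of the ladder that turns it upside down and rotates the four strands. -/
def reflection : ladder rungs ≃g ladder rungs where
  toEquiv := (Equiv.addRight (1 : Fin 4)).prodCongr Fin.revPerm
  map_rel_iff' := by
    rintro ⟨a, t⟩ ⟨b, t'⟩
    have path_adj_rev : (pathGraph 9).Adj t.rev t'.rev ↔ (pathGraph 9).Adj t t' := by
      simp only [pathGraph_adj, Fin.val_rev]
      omega
    simp [ladder, path_adj_rev, rungs_adj_reflect]

theorem traverses_preimage_reflection {P : Set (Fin 4 × Fin 9)}
    (hP : ladder.Traverses rungs P) : ladder.Traverses rungs (reflection ⁻¹' P) := by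
  obtain ⟨a, b, p, hp⟩ := hP
  refine ⟨b + -1, a + -1, p.reverse.map reflection.symm.toHom, fun v hv => ?_⟩
  obtain ⟨w, hw, rfl⟩ : ∃ w ∈ p.reverse.support, reflection.symm w = v :=
    List.mem_map.1 (Walk.support_map reflection.symm.toHom p.reverse ▸ hv)
  simpa using hp w (by simpa using hw)

/-- `P` and `Q` both traverse the ladder, are disjoint, and no edge joins them. -/
structure NonadjacentTraversals (P Q : Set (Fin 4 × Fin 9)) : Prop where
  left : ladder.Traverses rungs P
  right : ladder.Traverses rungs Q
  nonadj : ∀ u ∈ P, ∀ v ∈ Q, u ≠ v ∧ ¬ (ladder rungs).Adj u v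

/-- `P` contains the edge of strand `g` between the layers `t` and `t + 1`. The addition wraps
around at the top layer `t = 8`. -/
def Crosses (P : Set (Fin 4 × Fin 9)) (t : Fin 9) (g : Fin 4) : Prop :=
  (g, t) ∈ P ∧ (g, t + 1) ∈ P

theorem exists_crosses {P : Set (Fin 4 × Fin 9)} (hP : ladder.Traverses rungs P) {t : Fin 9}
    (ht : t ≠ Fin.last 8) : ∃ g, Crosses P t g := by
  obtain ⟨i, rfl⟩ := Fin.exists_castSucc_eq.2 ht
  simpa only [Crosses, Fin.coeSucc_eq_succ] using
    hP.exists_crossing (fun _ => i) fun _ _ _ _ h => h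

/-- `P` contains the part of the strand `h` that lies strictly between the two layers with a deleted
rung. -/
def RunsAlong (P : Set (Fin 4 × Fin 9)) (h : Fin 4) : Prop :=
  ∀ t, 2 ≤ t → t ≤ 6 → (h, t) ∈ P

theorem RunsAlong.preimage_reflection {P : Set (Fin 4 × Fin 9)} {h : Fin 4}
    (hP : RunsAlong P (h + 1)) : RunsAlong (reflection ⁻¹' P) h :=
  fun t ht ht' => hP t.rev (by grind) (by grind)

namespace NonadjacentTraversals

variable {P Q : Set (Fin 4 × Fin 9)} {t : Fin 9} {g g' h h' : Fin 4}

theorem symm (H : NonadjacentTraversals P Q) : NonadjacentTraversals Q P where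
  left := H.right
  right := H.left
  nonadj u hu v hv := ⟨(H.nonadj v hv u hu).1.symm, fun huv => (H.nonadj v hv u hu).2 huv.symm⟩

theorem reflect (H : NonadjacentTraversals P Q) :
    NonadjacentTraversals (reflection ⁻¹' P) (reflection ⁻¹' Q) where
  left := traverses_preimage_reflection H.left
  right := traverses_preimage_reflection H.right
  nonadj u hu v hv := by
    simpa [reflection.map_adj_iff] using H.nonadj _ hu _ hv

theorem ne_of_mem_layer (H : NonadjacentTraversals P Q) (hg : (g, t) ∈ P) (hh : (h, t) ∈ Q) :
    g ≠ h := by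
  rintro rfl
  exact (H.nonadj _ hg _ hh).1 rfl

theorem not_rungs_adj (H : NonadjacentTraversals P Q) (hg : (g, t) ∈ P) (hh : (h, t) ∈ Q) :
    ¬ (rungs t).Adj g h :=
  fun hgh => (H.nonadj _ hg _ hh).2 (ladder.adj_rung hgh)

theorem notMem_succ (H : NonadjacentTraversals P Q) (ht : t ≠ Fin.last 8) (hg : (g, t) ∈ P) :
    (g, t + 1) ∉ Q := by
  obtain ⟨i, rfl⟩ := Fin.exists_castSucc_eq.2 ht
  rw [Fin.coeSucc_eq_succ]
  exact fun hh => (H.nonadj _ hg _ hh).2 (ladder.adj_strand rungs g i)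

-- `P` and `Q` use different rungs in the layers `t` and `t + 1`, so `g ^^^ h` is the nonzero
-- element of the Klein four-group other than the two shifts, which is the sum of the shifts.
theorem xor_eq_of_crosses (H : NonadjacentTraversals P Q) (ht : 2 ≤ t ∧ t ≤ 5)
    (hg : Crosses P t g) (hh : Crosses Q t h) :
    g ^^^ h = rungShift t ^^^ rungShift (t + 1) := by
  have hne := H.ne_of_mem_layer hg.1 hh.1
  have hlow := H.not_rungs_adj hg.1 hh.1
  have hhigh := H.not_rungs_adj hg.2 hh.2
  clear hg hh
  revert t g h
  decide

theorem crosses_of_crosses (H : NonadjacentTraversals P Q) (ht : 2 ≤ t ∧ t ≤ 5)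
    (hh : Crosses Q t h) : Crosses P t (rungShift t ^^^ rungShift (t + 1) ^^^ h) := by
  obtain ⟨g, hg⟩ := exists_crosses H.left (t := t) (by grind)
  have xor_xor_cancel : ∀ a b : Fin 4, a ^^^ b ^^^ b = a := by decide
  rwa [← H.xor_eq_of_crosses ht hg hh, xor_xor_cancel]

-- If both changed strand in layer `t + 1`, then `g ^^^ g'` and `h ^^^ h'` would both be
-- `rungShift (t + 1)`, whereas `xor_eq_of_crosses` gives this value to their sum.
theorem eq_or_eq_of_crosses (H : NonadjacentTraversals P Q) (ht : 2 ≤ t ∧ t ≤ 4)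
    (hg : Crosses P t g) (hg' : Crosses P (t + 1) g')
    (hh : Crosses Q t h) (hh' : Crosses Q (t + 1) h') : g = g' ∨ h = h' := by
  have hxor := H.xor_eq_of_crosses (by grind) hg hh
  have hxor' := H.xor_eq_of_crosses (by grind) hg' hh'
  have hne := H.ne_of_mem_layer hg.2 hh'.1
  have hrung := H.not_rungs_adj hg.2 hh'.1
  clear hg hh hg' hh'
  revert t g h g' h'
  decide

theorem crosses_succ_of_crosses (H : NonadjacentTraversals P Q) (ht : 2 ≤ t ∧ t ≤ 3)
    (hh : Crosses Q t h) (hh' : Crosses Q (t + 1) h) : Crosses Q (t + 1 + 1) h := by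
  obtain ⟨h'', hh''⟩ := exists_crosses H.right (t := t + 1 + 1) (by grind)
  obtain ⟨g, hg⟩ := exists_crosses H.left (t := t) (by grind)
  obtain ⟨g', hg'⟩ := exists_crosses H.left (t := t + 1) (by grind)
  obtain ⟨g'', hg''⟩ := exists_crosses H.left (t := t + 1 + 1) (by grind)
  rcases H.eq_or_eq_of_crosses (by grind) hg' hg'' hh' hh'' with rfl | rfl
  · have hxor'' := H.xor_eq_of_crosses (by grind) hg'' hh''
    have hxor' := H.xor_eq_of_crosses (by grind) hg' hh'
    have hxor := H.xor_eq_of_crosses (by grind) hg hh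
    -- `Q` would move, in layer `t + 2`, onto the strand that `P` leaves in layer `t + 1`.
    have g_eq : g = h'' := by
      clear hg hh hg' hh' hg'' hh''
      revert t g h g' h''
      decide
    exact absurd (g_eq ▸ hh''.1) (H.notMem_succ (by grind) hg.2)
  · exact hh''

theorem runsAlong_of_crosses (H : NonadjacentTraversals P Q) (h₂ : Crosses Q 2 h)
    (h₃ : Crosses Q 3 h) : RunsAlong Q h := by
  have h₄ : Crosses Q 4 h := H.crosses_succ_of_crosses (by decide) h₂ h₃
  have h₅ : Crosses Q 5 h := H.crosses_succ_of_crosses (by decide) h₃ h₄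
  intro t ht ht'
  obtain rfl | rfl | rfl | rfl | rfl : t = 2 ∨ t = 3 ∨ t = 4 ∨ t = 5 ∨ t = 6 := by grind
  exacts [h₂.1, h₃.1, h₄.1, h₅.1, h₅.2]

theorem exists_runsAlong (H : NonadjacentTraversals P Q) :
    ∃ h, RunsAlong P h ∨ RunsAlong Q h := by
  obtain ⟨g, hg⟩ := exists_crosses H.left (t := 2) (by decide)
  obtain ⟨g', hg'⟩ := exists_crosses H.left (t := 3) (by decide)
  obtain ⟨h, hh⟩ := exists_crosses H.right (t := 2) (by decide)
  obtain ⟨h', hh'⟩ := exists_crosses H.right (t := 3) (by decide)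
  rcases H.eq_or_eq_of_crosses (t := 2) (by decide) hg hg' hh hh' with rfl | rfl
  · exact ⟨g, .inl (H.symm.runsAlong_of_crosses hg hg')⟩
  · exact ⟨h, .inr (H.runsAlong_of_crosses hh hh')⟩

theorem not_runsAlong_one (H : NonadjacentTraversals P Q) : ¬ RunsAlong Q 1 := by
  intro hQ
  have hQ₂ : Crosses Q 2 1 := ⟨hQ 2 (by decide) (by decide), hQ 3 (by decide) (by decide)⟩
  have hQ₃ : Crosses Q 3 1 := ⟨hQ 3 (by decide) (by decide), hQ 4 (by decide) (by decide)⟩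
  have hP₂ : Crosses P 2 3 := H.crosses_of_crosses (by decide) hQ₂
  have hP₃ : Crosses P 3 2 := H.crosses_of_crosses (by decide) hQ₃
  have eq_one_of_mem : ∀ {x}, (x, 2) ∈ Q → x = 1
    | 0, hx => (H.not_rungs_adj hP₂.1 hx (by decide)).elim
    | 1, _ => rfl
    | 2, hx => (H.symm.notMem_succ (by decide) hx hP₃.1).elim
    | 3, hx => (H.ne_of_mem_layer hP₂.1 hx rfl).elim
  have mem₁ : (1, 1) ∈ Q := by
    obtain ⟨x, hx⟩ := exists_crosses H.right (t := 1) (by decide)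
    exact eq_one_of_mem hx.2 ▸ hx.1
  have mem₀ : (1, 0) ∈ Q :=
    match H.right.exists_crossing ![1, 0, 1, 0] (by decide) with
    | ⟨0, _, hx⟩ | ⟨2, _, hx⟩ => absurd (eq_one_of_mem hx) (by decide)
    | ⟨1, hx, _⟩ => hx
    | ⟨3, _, hx⟩ => (H.symm.notMem_succ (by decide) hx hP₂.1).elim
  match H.left.exists_crossing ![0, 0, 1, 0] (by decide) with
  | ⟨0, hx, _⟩ => exact H.not_rungs_adj hx mem₀ (by decide)
  | ⟨1, hx, _⟩ => exact H.ne_of_mem_layer hx mem₀ rfl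
  | ⟨2, _, hx⟩ => exact H.not_rungs_adj hx hQ₂.1 (by decide)
  | ⟨3, _, hx⟩ => exact H.not_rungs_adj hx mem₁ (by decide)

theorem not_runsAlong (H : NonadjacentTraversals P Q) : ∀ h, ¬ RunsAlong Q h
  | 1 => H.not_runsAlong_one
  | 2 => fun hQ => H.reflect.not_runsAlong_one hQ.preimage_reflection
  | 3 => fun hQ => H.reflect.reflect.not_runsAlong_one hQ.preimage_reflection.preimage_reflection
  | 0 => fun hQ => H.reflect.reflect.reflect.not_runsAlong_one
      hQ.preimage_reflection.preimage_reflection.preimage_reflection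

end NonadjacentTraversals

theorem not_nonadjacentTraversals (P Q : Set (Fin 4 × Fin 9)) : ¬ NonadjacentTraversals P Q := by
  intro H
  obtain ⟨h, hP | hQ⟩ := H.exists_runsAlong
  · exact H.symm.not_runsAlong h hP
  · exact H.not_runsAlong h hQ

end TwistedLadder

theorem statement_8 :
    ∃ (W : Type) (G : SimpleGraph W) (X Y : Set W) (P : Fin 4 → PathPkg G),
      (∀ i, IsXYPath G X Y (P i)) ∧
      (Pairwise fun i j => PkgDisjoint (P i) (P j)) ∧
      (∀ v, v ∈ (⋃ i, pkgSupport (P i)) →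
        Set.Subsingleton
          {e : Sym2 W | e ∈ G.edgeSet ∧ v ∈ e ∧ e ∉ ⋃ i, pkgEdges (P i)}) ∧
      ¬ ∃ p q : PathPkg G, IsXYPath G X Y p ∧ IsXYPath G X Y q ∧ PkgNonAdj G p q := by
  refine ⟨Fin 4 × Fin 9, ladder TwistedLadder.rungs, {v | v.2 = 0}, {v | v.2 = Fin.last 8},
    ladder.strand _, ladder.isXYPath_strand _, fun _ _ => ladder.pkgDisjoint_strand _,
    fun v _ => ladder.subsingleton_nonstrand_edges TwistedLadder.rungs_adj_unique v, ?_⟩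
  rintro ⟨p, q, hp, hq, hpq⟩
  exact TwistedLadder.not_nonadjacentTraversals _ _
    ⟨ladder.traverses_pkgSupport hp, ladder.traverses_pkgSupport hq, hpq⟩
end
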